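/- arXiv:0708.1547 — 3 statements merged into one kernel-verified Lean document; each statement's English description precedes it below -/
import Mathlib

section
/- Let n ≥ 3. There is a constant C depending only on n such that for every τ ∈ ℂ with Im τ < 0 and every Schwartz function ψ on ℝⁿ, the resolvent R⁻(τ)ψ := F^{−1}(ξ ↦ (4π²|ξ|² − τ)^{−1} ψ̂(ξ)) satisfies ‖R⁻(τ)ψ‖_{L^{2n/(n−2)}(ℝⁿ)} ≤ C ‖⟨x⟩ψ‖_{L²(ℝⁿ)}, with C uniform over the entire open lower half-plane {Im τ < 0}. -/
open MeasureTheory Complex FourierTransform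
open scoped ENNReal Real

noncomputable section

open SchwartzMap LineDeriv Laplacian
open scoped ComplexConjugate ContDiff

section Algebra

variable {V : Type*} [NormedAddCommGroup V] [InnerProductSpace ℝ V]

theorem SchwartzMap.lineDerivOp_comm (f : 𝓢(V, ℂ)) (v v' : V) :
    ∂_{v} (∂_{v'} f) = ∂_{v'} (∂_{v} f) := by
  ext x
  have h := second_derivative_symmetric (𝕜 := ℝ) (f := f) (f' := fderivCLM ℝ V ℂ f)
    (f'' := fderiv ℝ (fderivCLM ℝ V ℂ f) x) (x := x) (fun y => f.hasFDerivAt y)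
    ((fderivCLM ℝ V ℂ f).hasFDerivAt x) v v'
  have key : ∀ a b : V, (∂_{a} (∂_{b} f) : 𝓢(V, ℂ)) x = fderiv ℝ (fderivCLM ℝ V ℂ f) x a b := by
    intro a b
    have := ((fderivCLM ℝ V ℂ f).hasFDerivAt x).clm_apply (hasFDerivAt_const b x)
    rw [lineDerivOp_apply_eq_fderiv]
    refine (congrArg (fun L => L a) this.fderiv).trans ?_
    simp
  rw [key, key, h]

/-- The Schwartz function `a * f * conj g`, with `a` a real coefficient of temperate growth. -/
def SchwartzMap.weightedMulConj (a : V → ℝ) (f g : 𝓢(V, ℂ)) : 𝓢(V, ℂ) :=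
  smulLeftCLM ℂ a (pairing (ContinuousLinearMap.mul ℝ ℂ) f
    (g.postcompCLM (conjCLE : ℂ →L[ℝ] ℂ)))

theorem SchwartzMap.weightedMulConj_apply {a : V → ℝ} (ha : a.HasTemperateGrowth)
    (f g : 𝓢(V, ℂ)) (x : V) :
    weightedMulConj a f g x = a x * (f x * conj (g x)) := by
  simp [weightedMulConj, smulLeftCLM_apply_apply ha, pairing_apply_apply]

end Algebra

section IntegrationByParts

variable {V : Type*} [NormedAddCommGroup V] [InnerProductSpace ℝ V] [FiniteDimensional ℝ V]
  [MeasurableSpace V] [BorelSpace V]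

theorem SchwartzMap.integrable_weight_mul_conj {a : V → ℝ} (ha : a.HasTemperateGrowth)
    (f g : 𝓢(V, ℂ)) : Integrable (fun x => (a x : ℂ) * (f x * conj (g x))) := by
  have h := (weightedMulConj a f g).integrable (μ := volume)
  rwa [funext (weightedMulConj_apply ha f g)] at h

theorem SchwartzMap.integral_lineDerivOp (f : 𝓢(V, ℂ)) (v : V) : ∫ x, ∂_{v} f x = 0 := by
  have h := integral_bilinear_hasLineDerivAt_right_eq_neg_left_of_integrable
    (μ := (volume : Measure V)) (f := fun _ => (1 : ℝ)) (f' := fun _ => 0) (g := f)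
    (g' := ⇑(∂_{v} f : 𝓢(V, ℂ))) (v := v) (B := ContinuousLinearMap.lsmul ℝ ℝ)
    (by simp) (by simpa using (∂_{v} f : 𝓢(V, ℂ)).integrable) (by simpa using f.integrable)
    (fun x _ => by simpa using (hasFDerivAt_const (1 : ℝ) x).hasLineDerivAt v)
    (fun x _ => (f.hasFDerivAt x).hasLineDerivAt v)
  simpa using h

/-- Integration by parts of `a * f * conj g`. -/
theorem SchwartzMap.integral_weight_mul_conj_by_parts {a : V → ℝ} (ha : a.HasTemperateGrowth)
    (f g : 𝓢(V, ℂ)) (v : V) :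
    ∫ x, ((fderiv ℝ a x v : ℂ) * (f x * conj (g x)) + a x * (∂_{v} f x * conj (g x))
      + a x * (f x * conj (∂_{v} g x))) = 0 := by
  rw [← integral_lineDerivOp (weightedMulConj a f g) v]
  congr 1
  ext x
  have h1 : HasFDerivAt a (fderiv ℝ a x) x :=
    (ha.1.differentiable (by simp)).differentiableAt.hasFDerivAt
  have h2 := (f.hasFDerivAt x).mul ((conjCLE : ℂ →L[ℝ] ℂ).hasFDerivAt.comp x (g.hasFDerivAt x))
  have h3 := h1.smul h2
  have h4 : ⇑(weightedMulConj a f g) = fun x => a x • (f x * conj (g x)) := by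
    ext x; simp [weightedMulConj_apply ha]
  rw [lineDerivOp_apply_eq_fderiv (f := weightedMulConj a f g), h4]
  refine Eq.trans ?_ (congrArg (fun L => L v) h3.fderiv).symm
  simp [lineDerivOp_apply_eq_fderiv]
  ring

end IntegrationByParts

section RegNorm

variable {V : Type*} [NormedAddCommGroup V]

/-- The smooth regularization `√(η² + ‖x‖²)` of the norm. -/
def regNorm (η : ℝ) (x : V) : ℝ := √(η ^ 2 + ‖x‖ ^ 2)

theorem regNorm_sq (η : ℝ) (x : V) : regNorm η x ^ 2 = η ^ 2 + ‖x‖ ^ 2 :=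
  Real.sq_sqrt (by positivity)

theorem regNorm_pos {η : ℝ} (hη : 0 < η) (x : V) : 0 < regNorm η x :=
  Real.sqrt_pos.2 (by positivity)

theorem le_regNorm {η : ℝ} (x : V) : η ≤ regNorm η x :=
  Real.le_sqrt_of_sq_le (by nlinarith [sq_nonneg ‖x‖])

theorem norm_le_regNorm (η : ℝ) (x : V) : ‖x‖ ≤ regNorm η x :=
  Real.le_sqrt_of_sq_le (by nlinarith [sq_nonneg η])

end RegNorm

section Weights

variable {V : Type*} [NormedAddCommGroup V] [InnerProductSpace ℝ V]

theorem hasFDerivAt_regNorm {η : ℝ} (hη : 0 < η) (x : V) :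
    HasFDerivAt (regNorm η) ((regNorm η x)⁻¹ • innerSL ℝ x) x := by
  have h := ((hasStrictFDerivAt_norm_sq x).hasFDerivAt.const_add (η ^ 2)).sqrt
    (by positivity : η ^ 2 + ‖x‖ ^ 2 ≠ 0)
  refine h.congr_fderiv ?_
  ext v
  simp [regNorm]
  ring

theorem hasTemperateGrowth_regNorm_rpow {η : ℝ} (hη : 0 < η) (r : ℝ) :
    (fun x : V => regNorm η x ^ r).HasTemperateGrowth := by
  have h := (Function.hasTemperateGrowth_one_add_norm_sq_rpow V (r / 2)).comp
    ((η⁻¹ • ContinuousLinearMap.id ℝ V).hasTemperateGrowth)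
  have h2 := (Function.HasTemperateGrowth.const (E := V) (η ^ r)).mul h
  refine (congrArg Function.HasTemperateGrowth ?_).mpr h2
  ext x
  have : regNorm η x = η * (1 + ‖η⁻¹ • x‖ ^ 2) ^ (1 / 2 : ℝ) := by
    rw [← Real.sqrt_eq_rpow, regNorm]
    nth_rewrite 2 [← Real.sqrt_sq hη.le]
    rw [← Real.sqrt_mul (by positivity), norm_smul, norm_inv, Real.norm_of_nonneg hη.le]
    congr 1
    field_simp
  simp only [Pi.mul_apply, Function.comp_apply, _root_.smul_apply, ContinuousLinearMap.id_apply]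
  rw [this, Real.mul_rpow hη.le (by positivity), ← Real.rpow_mul (by positivity)]
  congr 2
  ring

theorem hasTemperateGrowth_regNorm {η : ℝ} (hη : 0 < η) :
    (regNorm η : V → ℝ).HasTemperateGrowth := by
  simpa using hasTemperateGrowth_regNorm_rpow (V := V) hη 1

theorem hasTemperateGrowth_regNorm_inv {η : ℝ} (hη : 0 < η) :
    (fun x : V => (regNorm η x)⁻¹).HasTemperateGrowth := by
  simpa [Real.rpow_neg_one] using hasTemperateGrowth_regNorm_rpow (V := V) hη (-1)

/-- A function of a real variable with bounded iterated derivatives has temperate growth. -/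
theorem hasTemperateGrowth_of_iteratedDeriv_bounded {f : ℝ → ℂ} (hf : ContDiff ℝ ∞ f)
    (h : ∀ m, ∃ C, ∀ t, ‖iteratedDeriv m f t‖ ≤ C) : f.HasTemperateGrowth := by
  refine ⟨hf, fun m => ?_⟩
  obtain ⟨C, hC⟩ := h m
  exact ⟨0, C, fun t => by simpa [norm_iteratedFDeriv_eq_norm_iteratedDeriv] using hC t⟩

theorem hasTemperateGrowth_cexp_I_mul (k : ℝ) :
    (fun t : ℝ => cexp (I * k * t)).HasTemperateGrowth := by
  refine hasTemperateGrowth_of_iteratedDeriv_bounded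
    (contDiff_const.mul Complex.ofRealCLM.contDiff).cexp fun m => ⟨|k| ^ m, fun t => ?_⟩
  have h : iteratedDeriv m (fun t : ℝ => cexp (I * k * t))
      = fun t : ℝ => (I * k) ^ m * cexp (I * k * t) := by
    induction m with
    | zero => simp
    | succ m ih =>
      rw [iteratedDeriv_succ, ih]
      ext t
      have h1 : HasDerivAt (fun t : ℝ => I * k * (t : ℂ)) (I * k) t := by
        simpa using (HasDerivAt.ofReal_comp (hasDerivAt_id t)).const_mul (I * k)
      rw [(h1.cexp.const_mul ((I * k) ^ m)).deriv]
      ring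
  rw [h]
  have : I * k * t = ((k * t : ℝ) : ℂ) * I := by push_cast; ring
  rw [norm_mul, this, Complex.norm_exp_ofReal_mul_I]
  simp

theorem hasTemperateGrowth_inv_sub {τ : ℂ} (hτ : τ.im < 0) (a : ℝ) :
    (fun t : ℝ => ((a * t : ℝ) - τ : ℂ)⁻¹).HasTemperateGrowth := by
  have hle : ∀ t : ℝ, -τ.im ≤ ‖((a * t : ℝ) - τ : ℂ)‖ := fun t => by
    have := Complex.abs_im_le_norm ((a * t : ℝ) - τ : ℂ)
    rw [Complex.sub_im, Complex.ofReal_im, zero_sub] at this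
    exact (le_abs_self _).trans this
  have hne : ∀ t : ℝ, ((a * t : ℝ) - τ : ℂ) ≠ 0 := fun t =>
    norm_pos_iff.1 (lt_of_lt_of_le (by linarith) (hle t))
  have hd : ∀ t : ℝ, HasDerivAt (fun t : ℝ => ((a * t : ℝ) - τ : ℂ)) a t := fun t => by
    simpa using ((HasDerivAt.ofReal_comp ((hasDerivAt_id t).const_mul a))).sub_const τ
  refine hasTemperateGrowth_of_iteratedDeriv_bounded ?_ fun m =>
    ⟨|a| ^ m * m.factorial * ((-τ.im)⁻¹) ^ (m + 1), fun t => ?_⟩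
  · refine ContDiff.inv ?_ hne
    exact (Complex.ofRealCLM.contDiff.comp (contDiff_const.mul contDiff_id)).sub contDiff_const
  have h : iteratedDeriv m (fun t : ℝ => ((a * t : ℝ) - τ : ℂ)⁻¹)
      = fun t : ℝ => (-a : ℂ) ^ m * m.factorial * (((a * t : ℝ) - τ : ℂ)⁻¹) ^ (m + 1) := by
    induction m with
    | zero => simp
    | succ m ih =>
      rw [iteratedDeriv_succ, ih]
      ext t
      refine (((((hd t).inv (hne t)).pow (m + 1)).const_mul
        ((-a : ℂ) ^ m * m.factorial)).deriv).trans ?_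
      rw [Nat.factorial_succ]
      simp only [Pi.inv_apply, div_eq_mul_inv, ← inv_pow]
      generalize ((a * t : ℝ) - τ : ℂ)⁻¹ = z
      push_cast
      ring
  rw [h]
  simp only [norm_mul, norm_pow, norm_neg, norm_inv, Complex.norm_real, Complex.norm_natCast,
    Real.norm_eq_abs]
  have : (0 : ℝ) < -τ.im := by linarith
  gcongr
  exact hle t

end Weights

section Resolvent

variable {V : Type*} [NormedAddCommGroup V] [InnerProductSpace ℝ V]

theorem hasTemperateGrowth_resolvent_symbol {τ : ℂ} (hτ : τ.im < 0) :
    (fun ξ : V => (4 * (π : ℂ) ^ 2 * (‖ξ‖ : ℂ) ^ 2 - τ)⁻¹).HasTemperateGrowth := by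
  have h := (hasTemperateGrowth_inv_sub hτ (4 * π ^ 2)).comp
    (Function.hasTemperateGrowth_norm_sq (H := V))
  refine (congrArg Function.HasTemperateGrowth ?_).mpr h
  ext ξ
  simp

variable [FiniteDimensional ℝ V] [MeasurableSpace V] [BorelSpace V]

/-- For `Im τ < 0` the resolvent maps Schwartz functions to Schwartz functions, and it solves the
Helmholtz equation. -/
theorem exists_schwartz_resolvent {τ : ℂ} (hτ : τ.im < 0) (ψ : 𝓢(V, ℂ)) :
    ∃ u : 𝓢(V, ℂ), ⇑u = 𝓕⁻ (fun ξ : V =>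
        (4 * (π : ℂ) ^ 2 * (‖ξ‖ : ℂ) ^ 2 - τ)⁻¹ * 𝓕 (⇑ψ) ξ) ∧
      ∀ x, -(Δ u : 𝓢(V, ℂ)) x - τ * u x = ψ x := by
  have hm := hasTemperateGrowth_resolvent_symbol (V := V) hτ
  have hne : ∀ ξ : V, (4 * (π : ℂ) ^ 2 * (‖ξ‖ : ℂ) ^ 2 - τ) ≠ 0 := fun ξ h => by
    have h2 : (4 * (π : ℂ) ^ 2 * (‖ξ‖ : ℂ) ^ 2 - τ)
      = ((4 * π ^ 2 * ‖ξ‖ ^ 2 : ℝ) : ℂ) - τ := by push_cast; ring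
    have := congrArg Complex.im h
    rw [h2, Complex.sub_im, Complex.ofReal_im, Complex.zero_im] at this
    linarith
  refine ⟨fourierMultiplierCLM ℂ (fun ξ : V => (4 * (π : ℂ) ^ 2 * (‖ξ‖ : ℂ) ^ 2 - τ)⁻¹) ψ, ?_, ?_⟩
  · rw [fourierMultiplierCLM_apply, fourierInv_coe, smulLeftCLM_apply hm, fourier_coe]
    rfl
  · set u := fourierMultiplierCLM ℂ (fun ξ : V => (4 * (π : ℂ) ^ 2 * (‖ξ‖ : ℂ) ^ 2 - τ)⁻¹) ψ
      with hu
    have key : -(Δ u : 𝓢(V, ℂ)) - τ • u = ψ := by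
      have hF : 𝓕 u = smulLeftCLM ℂ
          (fun ξ : V => (4 * (π : ℂ) ^ 2 * (‖ξ‖ : ℂ) ^ 2 - τ)⁻¹) (𝓕 ψ) := by
        rw [hu, fourierMultiplierCLM_apply, FourierTransform.fourier_fourierInv_eq]
      have h : 𝓕 (-(Δ u : 𝓢(V, ℂ)) - τ • u) = 𝓕 ψ := by
        rw [laplacian_eq_fourierMultiplierCLM, fourierMultiplierCLM_apply, neg_smul, neg_neg,
          sub_eq_add_neg, ← neg_smul, FourierTransform.fourier_add,
          FourierTransform.fourier_smul, FourierTransform.fourier_smul,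
          FourierTransform.fourier_fourierInv_eq, hF]
        ext ξ
        have h1 : (fun ξ : V => ‖ξ‖ ^ 2).HasTemperateGrowth := by fun_prop
        rw [_root_.add_apply, _root_.smul_apply, _root_.smul_apply,
          show (‖·‖ ^ 2 : V → ℝ) = fun ξ : V => ‖ξ‖ ^ 2 from rfl,
          smulLeftCLM_apply_apply h1, smulLeftCLM_apply_apply hm]
        simp only [smul_eq_mul, real_smul]
        push_cast
        linear_combination (𝓕 ψ : 𝓢(V, ℂ)) ξ * mul_inv_cancel₀ (hne ξ)
      rw [← FourierTransform.fourierInv_fourier_eq (F := 𝓢(V, ℂ)) (-(Δ u : 𝓢(V, ℂ)) - τ • u), h,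
        FourierTransform.fourierInv_fourier_eq]
    intro x
    have := congrArg (fun f : 𝓢(V, ℂ) => f x) key
    simpa using this

end Resolvent

section RadialPhase

variable {V : Type*} [NormedAddCommGroup V]

/-- The oscillating factor `exp (i k √(η² + ‖x‖²))`. -/
def radialPhase (k η : ℝ) (x : V) : ℂ := cexp (I * k * regNorm η x)

theorem norm_radialPhase (k η : ℝ) (x : V) : ‖radialPhase k η x‖ = 1 := by
  have : I * k * regNorm η x = ((k * regNorm η x : ℝ) : ℂ) * I := by push_cast; ring
  rw [radialPhase, this, Complex.norm_exp_ofReal_mul_I]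

end RadialPhase

section Conjugation

variable {V : Type*} [NormedAddCommGroup V] [InnerProductSpace ℝ V]

theorem SchwartzMap.lineDerivOp_smulLeftCLM_apply {a : V → ℂ} (ha : a.HasTemperateGrowth)
    (f : 𝓢(V, ℂ)) (v x : V) :
    (∂_{v} (smulLeftCLM ℂ a f) : 𝓢(V, ℂ)) x = fderiv ℝ a x v * f x + a x * ∂_{v} f x := by
  have h1 : HasFDerivAt a (fderiv ℝ a x) x :=
    (ha.1.differentiable (by simp)).differentiableAt.hasFDerivAt
  rw [lineDerivOp_apply_eq_fderiv (f := smulLeftCLM ℂ a f), smulLeftCLM_apply ha]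
  refine (congrArg (fun L => L v) (h1.mul (f.hasFDerivAt x)).fderiv).trans ?_
  simp [lineDerivOp_apply_eq_fderiv]
  ring

theorem hasTemperateGrowth_radialPhase (k : ℝ) {η : ℝ} (hη : 0 < η) :
    (radialPhase k η : V → ℂ).HasTemperateGrowth :=
  (hasTemperateGrowth_cexp_I_mul k).comp (hasTemperateGrowth_regNorm hη)

theorem hasFDerivAt_radialPhase (k : ℝ) {η : ℝ} (hη : 0 < η) (x : V) :
    HasFDerivAt (radialPhase k η)
      ((I * k * (regNorm η x : ℂ)⁻¹ * radialPhase k η x) •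
        (Complex.ofRealCLM.comp (innerSL ℝ x))) x := by
  have h := ((Complex.ofRealCLM.hasFDerivAt.comp x (hasFDerivAt_regNorm hη x)).const_mul
    (I * k)).cexp
  refine h.congr_fderiv ?_
  ext v
  simp [radialPhase]
  ring

theorem lineDerivOp_radialPhase_smul (k : ℝ) {η : ℝ} (hη : 0 < η) (u : 𝓢(V, ℂ)) (v x : V) :
    (∂_{v} (smulLeftCLM ℂ (radialPhase k η) u) : 𝓢(V, ℂ)) x = radialPhase k η x *
      (∂_{v} u x + I * k * (inner ℝ x v : ℝ) * (regNorm η x : ℂ)⁻¹ * u x) := by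
  rw [lineDerivOp_smulLeftCLM_apply (hasTemperateGrowth_radialPhase k hη),
    (hasFDerivAt_radialPhase k hη x).fderiv]
  simp
  ring

theorem lineDerivOp_lineDerivOp_radialPhase_smul (k : ℝ) {η : ℝ} (hη : 0 < η) (u : 𝓢(V, ℂ))
    (v x : V) :
    (∂_{v} (∂_{v} (smulLeftCLM ℂ (radialPhase k η) u)) : 𝓢(V, ℂ)) x = radialPhase k η x *
      ((∂_{v} (∂_{v} u) : 𝓢(V, ℂ)) x
        + 2 * I * k * (regNorm η x : ℂ)⁻¹ * ((inner ℝ x v : ℝ) * ∂_{v} u x)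
        + I * k * ((inner ℝ v v : ℝ) * (regNorm η x : ℂ)⁻¹
          - (inner ℝ x v : ℝ) ^ 2 * (regNorm η x : ℂ)⁻¹ ^ 3) * u x
        - k ^ 2 * (inner ℝ x v : ℝ) ^ 2 * (regNorm η x : ℂ)⁻¹ ^ 2 * u x) := by
  have hd1 := u.hasFDerivAt x
  have hd2 : HasFDerivAt (fun y => ∂_{v} u y) (fderiv ℝ (∂_{v} u : 𝓢(V, ℂ)) x) x :=
    (∂_{v} u : 𝓢(V, ℂ)).hasFDerivAt x
  have hinner : HasFDerivAt (fun y : V => ((inner ℝ y v : ℝ) : ℂ))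
      (Complex.ofRealCLM.comp ((innerSL ℝ).flip v)) x :=
    Complex.ofRealCLM.hasFDerivAt.comp x ((innerSL ℝ).flip v).hasFDerivAt
  have hinv : HasFDerivAt (fun y : V => (regNorm η y : ℂ)⁻¹)
      (Complex.ofRealCLM.comp ((-(regNorm η x)⁻¹ ^ 3) • innerSL ℝ x)) x := by
    have h := Complex.ofRealCLM.hasFDerivAt.comp x
      ((hasDerivAt_inv (regNorm_pos hη x).ne').comp_hasFDerivAt x (hasFDerivAt_regNorm hη x))
    refine (h.congr_fderiv ?_).congr_of_eventuallyEq (Filter.Eventually.of_forall ?_)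
    · ext v
      simp
      ring
    · intro y
      simp
  have h := (hasFDerivAt_radialPhase k hη x).mul
    (hd2.add ((((hinner.const_mul (I * k)).mul hinv)).mul hd1))
  have hfun : ⇑(∂_{v} (smulLeftCLM ℂ (radialPhase k η) u) : 𝓢(V, ℂ)) = fun x =>
      radialPhase k η x *
      (∂_{v} u x + I * k * (inner ℝ x v : ℝ) * (regNorm η x : ℂ)⁻¹ * u x) :=
    funext fun x => lineDerivOp_radialPhase_smul k hη u v x
  rw [lineDerivOp_apply_eq_fderiv (f := ∂_{v} (smulLeftCLM ℂ (radialPhase k η) u)), hfun]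
  refine (congrArg (fun L => L v) h.fderiv).trans ?_
  simp only [lineDerivOp_apply_eq_fderiv]
  have hvv : (innerSL ℝ v) v = ‖v‖ ^ 2 := by
    rw [innerSL_apply_apply, real_inner_self_eq_norm_sq]
  simp [hvv]
  linear_combination (radialPhase k η x * k ^ 2 * (inner ℝ x v : ℝ) ^ 2 *
    (regNorm η x : ℂ)⁻¹ ^ 2 * u x) * Complex.I_sq

theorem SchwartzMap.sum_inner_mul_lineDerivOp {ι : Type*} [Fintype ι]
    (b : OrthonormalBasis ι ℝ V) (f : 𝓢(V, ℂ)) (x : V) :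
    ∑ i, ((inner ℝ x (b i) : ℝ) : ℂ) * ∂_{b i} f x = fderiv ℝ f x x := by
  have h := congrArg (fderiv ℝ f x) (b.sum_repr x)
  rw [map_sum] at h
  rw [← h]
  refine Finset.sum_congr rfl fun i _ => ?_
  simp [b.repr_apply_apply, lineDerivOp_apply_eq_fderiv, real_inner_comm]

variable [FiniteDimensional ℝ V]

/-- Conjugating the Helmholtz operator `-Δ - k²` by `radialPhase k η`. -/
theorem helmholtz_radialPhase_smul (k : ℝ) {η : ℝ} (hη : 0 < η) (u : 𝓢(V, ℂ)) (x : V) :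
    -(Δ (smulLeftCLM ℂ (radialPhase k η) u) : 𝓢(V, ℂ)) x
      + 2 * I * k * (regNorm η x : ℂ)⁻¹ * fderiv ℝ (smulLeftCLM ℂ (radialPhase k η) u) x x
      + I * k * ((Module.finrank ℝ V - 1) * (regNorm η x : ℂ)⁻¹
        + η ^ 2 * (regNorm η x : ℂ)⁻¹ ^ 3) * smulLeftCLM ℂ (radialPhase k η) u x
      - k ^ 2 * η ^ 2 * (regNorm η x : ℂ)⁻¹ ^ 2 * smulLeftCLM ℂ (radialPhase k η) u x
      = radialPhase k η x * (-(Δ u : 𝓢(V, ℂ)) x - k ^ 2 * u x) := by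
  set b := stdOrthonormalBasis ℝ V
  have hρ : (regNorm η x : ℂ) ≠ 0 := by exact_mod_cast (regNorm_pos hη x).ne'
  have hr : ((‖x‖ : ℂ)) ^ 2 = regNorm η x ^ 2 - η ^ 2 := by
    have := regNorm_sq η x
    rw [eq_sub_iff_add_eq, add_comm]
    exact_mod_cast this.symm
  have hsq : ∑ i, ((inner ℝ x (b i) : ℝ) : ℂ) ^ 2 = (‖x‖ : ℂ) ^ 2 := by
    exact_mod_cast b.sum_sq_inner_left x
  have hone : ∑ i, ((inner ℝ (b i) (b i) : ℝ) : ℂ) = Module.finrank ℝ V := by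
    simp
  have hX : fderiv ℝ (smulLeftCLM ℂ (radialPhase k η) u) x x = radialPhase k η x *
      (fderiv ℝ u x x + I * k * ‖x‖ ^ 2 * (regNorm η x : ℂ)⁻¹ * u x) := by
    have h := lineDerivOp_radialPhase_smul k hη u x x
    rw [lineDerivOp_apply_eq_fderiv (f := smulLeftCLM ℂ (radialPhase k η) u),
      lineDerivOp_apply_eq_fderiv, real_inner_self_eq_norm_sq] at h
    rw [h]
    push_cast
    ring
  have hL : (Δ (smulLeftCLM ℂ (radialPhase k η) u) : 𝓢(V, ℂ)) x = radialPhase k η x *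
      ((Δ u : 𝓢(V, ℂ)) x + 2 * I * k * (regNorm η x : ℂ)⁻¹ * fderiv ℝ u x x
        + I * k * (Module.finrank ℝ V * (regNorm η x : ℂ)⁻¹
          - ‖x‖ ^ 2 * (regNorm η x : ℂ)⁻¹ ^ 3) * u x
        - k ^ 2 * ‖x‖ ^ 2 * (regNorm η x : ℂ)⁻¹ ^ 2 * u x) := by
    rw [laplacian_eq_sum b, laplacian_eq_sum b, _root_.sum_apply, _root_.sum_apply,
      ← sum_inner_mul_lineDerivOp b, ← hsq, ← hone]
    simp only [lineDerivOp_lineDerivOp_radialPhase_smul k hη]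
    rw [← Finset.mul_sum]
    congr 1
    rw [Finset.sum_sub_distrib, Finset.sum_add_distrib, Finset.sum_add_distrib]
    simp only [← Finset.sum_mul, ← Finset.mul_sum, Finset.sum_sub_distrib]
  rw [hX, hL, smulLeftCLM_apply_apply (hasTemperateGrowth_radialPhase k hη), hr, smul_eq_mul]
  have hs : (regNorm η x : ℂ) * (regNorm η x : ℂ)⁻¹ = 1 := mul_inv_cancel₀ hρ
  linear_combination (2 * (k : ℂ) ^ 2 * u x * (regNorm η x ^ 2 - η ^ 2) *
      (regNorm η x : ℂ)⁻¹ ^ 2 * radialPhase k η x) * I_sq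
    + (radialPhase k η x * u x * (I * k * (regNorm η x : ℂ)⁻¹ - k ^ 2) *
      (regNorm η x * (regNorm η x : ℂ)⁻¹ + 1)) * hs

end Conjugation

section RadialDeriv

variable {V : Type*} [NormedAddCommGroup V] [InnerProductSpace ℝ V] [FiniteDimensional ℝ V]

/-- The Schwartz function `x ↦ x · ∇f(x)`. -/
def SchwartzMap.radialDeriv (f : 𝓢(V, ℂ)) : 𝓢(V, ℂ) :=
  ∑ i, smulLeftCLM ℂ (Complex.ofRealCLM.comp (innerSL ℝ (stdOrthonormalBasis ℝ V i)))
    (∂_{stdOrthonormalBasis ℝ V i} f)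

theorem SchwartzMap.radialDeriv_eq_sum (f : 𝓢(V, ℂ)) (x : V) :
    radialDeriv f x = ∑ i, ((inner ℝ x (stdOrthonormalBasis ℝ V i) : ℝ) : ℂ) *
      ∂_{stdOrthonormalBasis ℝ V i} f x := by
  simp [radialDeriv, _root_.sum_apply,
    smulLeftCLM_apply_apply (ContinuousLinearMap.hasTemperateGrowth _), real_inner_comm]

theorem SchwartzMap.radialDeriv_apply (f : 𝓢(V, ℂ)) (x : V) :
    radialDeriv f x = fderiv ℝ f x x := by
  rw [radialDeriv_eq_sum, sum_inner_mul_lineDerivOp]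

theorem SchwartzMap.lineDerivOp_radialDeriv (f : 𝓢(V, ℂ)) (v x : V) :
    ∂_{v} (radialDeriv f) x = ∂_{v} f x + radialDeriv (∂_{v} f) x := by
  have hv : ∂_{v} f x = ∑ i, ((inner ℝ v (stdOrthonormalBasis ℝ V i) : ℝ) : ℂ) *
      ∂_{stdOrthonormalBasis ℝ V i} f x := by
    have h := congrArg (fderiv ℝ f x) ((stdOrthonormalBasis ℝ V).sum_repr v)
    rw [map_sum] at h
    rw [lineDerivOp_apply_eq_fderiv, ← h]
    refine Finset.sum_congr rfl fun i _ => ?_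
    simp [OrthonormalBasis.repr_apply_apply, lineDerivOp_apply_eq_fderiv, real_inner_comm]
  rw [radialDeriv_eq_sum, hv, radialDeriv, lineDerivOp_sum, _root_.sum_apply,
    ← Finset.sum_add_distrib]
  refine Finset.sum_congr rfl fun i _ => ?_
  rw [lineDerivOp_smulLeftCLM_apply (ContinuousLinearMap.hasTemperateGrowth _),
    ContinuousLinearMap.fderiv, lineDerivOp_comm f v]
  simp [real_inner_comm]

/-- The squared length of the gradient of `f`. -/
def SchwartzMap.gradSq (f : 𝓢(V, ℂ)) (x : V) : ℝ :=
  ∑ i, ‖∂_{stdOrthonormalBasis ℝ V i} f x‖ ^ 2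

theorem SchwartzMap.gradSq_nonneg (f : 𝓢(V, ℂ)) (x : V) : 0 ≤ gradSq f x :=
  Finset.sum_nonneg fun _ _ => sq_nonneg _

theorem SchwartzMap.norm_fderiv_apply_le (f : 𝓢(V, ℂ)) (x v : V) :
    ‖fderiv ℝ f x v‖ ≤ √(gradSq f x) * ‖v‖ := by
  set b := stdOrthonormalBasis ℝ V
  have h := congrArg (fderiv ℝ f x) (b.sum_repr v)
  rw [map_sum] at h
  rw [← h]
  calc ‖∑ i, fderiv ℝ f x (b.repr v i • b i)‖
      ≤ ∑ i, ‖∂_{b i} f x‖ * ‖inner ℝ (b i) v‖ := by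
        refine (norm_sum_le _ _).trans (Finset.sum_le_sum fun i _ => ?_)
        rw [map_smul, norm_smul, mul_comm, b.repr_apply_apply, lineDerivOp_apply_eq_fderiv]
    _ ≤ √(∑ i, ‖∂_{b i} f x‖ ^ 2) * √(∑ i, ‖inner ℝ (b i) v‖ ^ 2) :=
        Real.sum_mul_le_sqrt_mul_sqrt _ _ _
    _ = √(gradSq f x) * ‖v‖ := by
        rw [b.sum_sq_norm_inner_right, Real.sqrt_sq (norm_nonneg _)]
        rfl

theorem SchwartzMap.norm_fderiv_le (f : 𝓢(V, ℂ)) (x : V) :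
    ‖fderiv ℝ f x‖ ≤ √(gradSq f x) :=
  ContinuousLinearMap.opNorm_le_bound _ (Real.sqrt_nonneg _) (norm_fderiv_apply_le f x)

theorem SchwartzMap.norm_radialDeriv_le (f : 𝓢(V, ℂ)) (x : V) :
    ‖radialDeriv f x‖ ≤ √(gradSq f x) * ‖x‖ := by
  rw [radialDeriv_apply]
  exact norm_fderiv_apply_le f x x

end RadialDeriv

section TemperateGrowth

variable {V : Type*} [NormedAddCommGroup V] [NormedSpace ℝ V]

theorem Function.HasTemperateGrowth.fderiv_apply {a : V → ℝ} (ha : a.HasTemperateGrowth)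
    (v : V) : (fun x => fderiv ℝ a x v).HasTemperateGrowth := by
  have h : (fderiv ℝ a).HasTemperateGrowth := by
    refine ⟨ha.1.fderiv_right (by simp), fun m => ?_⟩
    obtain ⟨k, C, hC⟩ := ha.2 (m + 1)
    exact ⟨k, C, fun x => by rw [norm_iteratedFDeriv_fderiv]; exact hC x⟩
  exact (ContinuousLinearMap.apply ℝ ℝ v).hasTemperateGrowth.comp h

end TemperateGrowth

section Green

variable {V : Type*} [NormedAddCommGroup V] [InnerProductSpace ℝ V] [FiniteDimensional ℝ V]
  [MeasurableSpace V] [BorelSpace V]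

theorem SchwartzMap.integrable_weight_inner {a : V → ℝ} (ha : a.HasTemperateGrowth)
    (f g : 𝓢(V, ℂ)) : Integrable (fun x => a x * inner ℝ (f x) (g x)) := by
  refine (integrable_weight_mul_conj ha g f).re.congr (Filter.Eventually.of_forall fun x => ?_)
  simp [Complex.inner]

theorem SchwartzMap.integrable_inner (f g : 𝓢(V, ℂ)) :
    Integrable (fun x => inner ℝ (f x) (g x)) := by
  simpa using integrable_weight_inner (Function.HasTemperateGrowth.const (1 : ℝ)) f g

theorem SchwartzMap.integrable_weight_norm_sq {a : V → ℝ} (ha : a.HasTemperateGrowth)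
    (f : 𝓢(V, ℂ)) : Integrable (fun x => a x * ‖f x‖ ^ 2) := by
  simpa using integrable_weight_inner ha f f

theorem SchwartzMap.integrable_norm_sq (f : 𝓢(V, ℂ)) : Integrable (fun x => ‖f x‖ ^ 2) := by
  simpa using integrable_inner f f

theorem SchwartzMap.integrable_weight_gradSq {a : V → ℝ} (ha : a.HasTemperateGrowth)
    (f : 𝓢(V, ℂ)) : Integrable (fun x => a x * gradSq f x) := by
  simp only [gradSq, Finset.mul_sum]
  exact integrable_finsetSum _ fun i _ => integrable_weight_norm_sq ha _

theorem SchwartzMap.integrable_gradSq (f : 𝓢(V, ℂ)) : Integrable (gradSq f) := by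
  simpa using integrable_weight_gradSq (Function.HasTemperateGrowth.const (1 : ℝ)) f

theorem SchwartzMap.integrable_weight_inner_by_parts {a : V → ℝ} (ha : a.HasTemperateGrowth)
    (f g : 𝓢(V, ℂ)) (v : V) :
    Integrable (fun x => fderiv ℝ a x v * inner ℝ (f x) (g x)
      + a x * (inner ℝ (∂_{v} f x) (g x) + inner ℝ (f x) (∂_{v} g x))) := by
  simp only [mul_add]
  exact (integrable_weight_inner (ha.fderiv_apply v) f g).add
    ((integrable_weight_inner ha _ _).add (integrable_weight_inner ha _ _))

theorem SchwartzMap.integral_weight_inner_by_parts {a : V → ℝ} (ha : a.HasTemperateGrowth)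
    (f g : 𝓢(V, ℂ)) (v : V) :
    ∫ x, (fderiv ℝ a x v * inner ℝ (f x) (g x)
      + a x * (inner ℝ (∂_{v} f x) (g x) + inner ℝ (f x) (∂_{v} g x))) = 0 := by
  have h := congrArg Complex.re (integral_weight_mul_conj_by_parts ha f g v)
  have hIneq : Integrable fun x => ((fderiv ℝ a x v : ℂ) * (f x * conj (g x))
      + a x * (∂_{v} f x * conj (g x)) + a x * (f x * conj (∂_{v} g x))) :=
    ((integrable_weight_mul_conj (ha.fderiv_apply v) _ _).add
      (integrable_weight_mul_conj ha _ _)).add (integrable_weight_mul_conj ha _ _)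
  rw [← Complex.reCLM_apply, ← ContinuousLinearMap.integral_comp_comm _ hIneq] at h
  rw [← Complex.zero_re, ← h]
  congr 1
  ext x
  simp [Complex.inner]
  ring

/-- Green's first identity for Schwartz functions, with a weight. -/
theorem SchwartzMap.integral_weight_laplacian_inner {a : V → ℝ} (ha : a.HasTemperateGrowth)
    (f g : 𝓢(V, ℂ)) :
    ∫ x, (∑ i, fderiv ℝ a x (stdOrthonormalBasis ℝ V i) *
          inner ℝ (∂_{stdOrthonormalBasis ℝ V i} f x) (g x)
      + a x * (inner ℝ ((Δ f : 𝓢(V, ℂ)) x) (g x)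
        + ∑ i, inner ℝ (∂_{stdOrthonormalBasis ℝ V i} f x)
          (∂_{stdOrthonormalBasis ℝ V i} g x))) = 0 := by
  have h := integral_finsetSum Finset.univ fun i _ =>
    integrable_weight_inner_by_parts ha (∂_{stdOrthonormalBasis ℝ V i} f) g
      (stdOrthonormalBasis ℝ V i)
  simp only [integral_weight_inner_by_parts ha, Finset.sum_const_zero] at h
  rw [← h]
  congr 1
  ext x
  rw [laplacian_eq_sum (stdOrthonormalBasis ℝ V), _root_.sum_apply, sum_inner,
    ← Finset.sum_add_distrib, Finset.mul_sum, ← Finset.sum_add_distrib]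

/-- Integration by parts of `a ‖f‖²` against the radial field `x`. -/
theorem SchwartzMap.integral_weight_radialDeriv_inner {a : V → ℝ} (ha : a.HasTemperateGrowth)
    (f : 𝓢(V, ℂ)) :
    ∫ x, ((fderiv ℝ a x x + Module.finrank ℝ V * a x) * ‖f x‖ ^ 2
      + 2 * (a x * inner ℝ (radialDeriv f x) (f x))) = 0 := by
  set b := stdOrthonormalBasis ℝ V
  have hb : ∀ i, (fun x => a x * inner ℝ (b i) x).HasTemperateGrowth := fun i =>
    ha.mul (innerSL ℝ (b i)).hasTemperateGrowth
  have h := integral_finsetSum Finset.univ fun i _ =>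
    integrable_weight_inner_by_parts (hb i) f f (b i)
  simp only [integral_weight_inner_by_parts (hb _), Finset.sum_const_zero] at h
  rw [← h]
  congr 1
  ext x
  have hd : ∀ i, fderiv ℝ (fun x => a x * inner ℝ (b i) x) x (b i)
      = fderiv ℝ a x (inner ℝ (b i) x • b i) + a x := fun i => by
    have h1 : HasFDerivAt a (fderiv ℝ a x) x :=
      (ha.1.differentiable (by simp)).differentiableAt.hasFDerivAt
    refine (congrArg (fun L => L (b i)) (h1.mul (innerSL ℝ (b i)).hasFDerivAt).fderiv).trans ?_
    simp
    ring
  have hx : fderiv ℝ a x x = ∑ i, fderiv ℝ a x (inner ℝ (b i) x • b i) := by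
    rw [← map_sum, b.sum_repr' x]
  simp only [hd, radialDeriv_eq_sum, sum_inner, hx, add_mul, Finset.sum_add_distrib,
    real_inner_self_eq_norm_sq, ← Finset.sum_mul]
  have hX : ∀ i, inner ℝ (((inner ℝ x (b i) : ℝ) : ℂ) * ∂_{b i} f x) (f x)
      = inner ℝ (b i) x * inner ℝ (∂_{b i} f x) (f x) := fun i => by
    rw [← Complex.real_smul, real_inner_smul_left, real_inner_comm (b i) x]
  simp only [b] at hX
  simp only [hX, b, real_inner_comm (∂_{stdOrthonormalBasis ℝ V _} f x) (f x), Finset.mul_sum,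
    Finset.sum_const, Finset.card_univ, Fintype.card_fin, nsmul_eq_mul]
  congr 1
  exact Finset.sum_congr rfl fun i _ => by ring

theorem SchwartzMap.integral_inner_laplacian_self (f : 𝓢(V, ℂ)) :
    ∫ x, inner ℝ ((Δ f : 𝓢(V, ℂ)) x) (f x) = -∫ x, gradSq f x := by
  have h := integral_weight_laplacian_inner (Function.HasTemperateGrowth.const (1 : ℝ)) f f
  simp only [fderiv_fun_const, real_inner_self_eq_norm_sq] at h
  rw [eq_neg_iff_add_eq_zero, ← integral_add (integrable_inner _ _) (integrable_gradSq f), ← h]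
  simp [gradSq]

theorem SchwartzMap.integral_inner_laplacian_I_mul (f : 𝓢(V, ℂ)) :
    ∫ x, inner ℝ ((Δ f : 𝓢(V, ℂ)) x) (I * f x) = 0 := by
  have h := integral_weight_laplacian_inner (Function.HasTemperateGrowth.const (1 : ℝ)) f
    (I • f)
  rw [← h]
  congr 1
  ext x
  have hz : ∀ z : ℂ, inner ℝ z (I * z) = 0 := fun z => by
    simp [Complex.inner]; ring
  simp [lineDerivOp_smul, hz]

theorem SchwartzMap.integral_regNorm_inner_laplacian_self {η : ℝ} (hη : 0 < η) (f : 𝓢(V, ℂ)) :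
    ∫ x, regNorm η x * inner ℝ ((Δ f : 𝓢(V, ℂ)) x) (f x) = -(∫ x, regNorm η x * gradSq f x)
      - ∫ x, (regNorm η x)⁻¹ * inner ℝ (radialDeriv f x) (f x) := by
  have h := integral_weight_laplacian_inner (hasTemperateGrowth_regNorm hη) f f
  have h1 := integrable_weight_inner (hasTemperateGrowth_regNorm hη) (Δ f) f
  have h2 := integrable_weight_gradSq (hasTemperateGrowth_regNorm hη) f
  have h3 := integrable_weight_inner (hasTemperateGrowth_regNorm_inv hη) (radialDeriv f) f
  have key : ∫ x, ((regNorm η x)⁻¹ * inner ℝ (radialDeriv f x) (f x)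
      + (regNorm η x * inner ℝ ((Δ f : 𝓢(V, ℂ)) x) (f x) + regNorm η x * gradSq f x)) = 0 := by
    rw [← h]
    congr 1
    ext x
    rw [(hasFDerivAt_regNorm hη x).fderiv, radialDeriv_eq_sum, sum_inner, Finset.mul_sum,
      mul_add]
    simp only [real_inner_self_eq_norm_sq, gradSq]
    congr 1
    refine Finset.sum_congr rfl fun i _ => ?_
    rw [← Complex.real_smul, real_inner_smul_left]
    simp
    ring
  rw [integral_add h3 (h1.fun_add h2), integral_add h1 h2] at key
  linarith

/-- The Pohozaev identity for Schwartz functions. -/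
theorem SchwartzMap.integral_inner_laplacian_radialDeriv (f : 𝓢(V, ℂ)) :
    ∫ x, inner ℝ ((Δ f : 𝓢(V, ℂ)) x) (radialDeriv f x)
      = (Module.finrank ℝ V / 2 - 1) * ∫ x, gradSq f x := by
  have h := integral_weight_laplacian_inner (Function.HasTemperateGrowth.const (1 : ℝ)) f
    (radialDeriv f)
  set b := stdOrthonormalBasis ℝ V
  have hX : ∀ i, ∫ x, inner ℝ (∂_{b i} f x) (radialDeriv (∂_{b i} f) x)
      = -(Module.finrank ℝ V / 2) * ∫ x, ‖∂_{b i} f x‖ ^ 2 := fun i => by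
    have h := integral_weight_radialDeriv_inner (Function.HasTemperateGrowth.const (1 : ℝ))
      (∂_{b i} f)
    simp only [fderiv_fun_const, Pi.zero_apply, _root_.zero_apply, zero_add, mul_one,
      one_mul] at h
    rw [integral_add ((integrable_norm_sq _).const_mul _) ((integrable_inner _ _).const_mul _),
      integral_const_mul, integral_const_mul] at h
    simp only [real_inner_comm (radialDeriv (∂_{b i} f) _)]
    linarith
  simp only [fderiv_fun_const, Pi.zero_apply, _root_.zero_apply, zero_mul,
    Finset.sum_const_zero, zero_add, one_mul, lineDerivOp_radialDeriv, inner_add_right,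
    real_inner_self_eq_norm_sq] at h
  have hi : ∀ i ∈ Finset.univ, Integrable fun x => ‖∂_{b i} f x‖ ^ 2
      + inner ℝ (∂_{b i} f x) (radialDeriv (∂_{b i} f) x) :=
    fun i _ => (integrable_norm_sq _).add (integrable_inner _ _)
  rw [integral_add (integrable_inner _ _) (integrable_finsetSum _ hi),
    integral_finsetSum _ hi] at h
  simp only [integral_add (integrable_norm_sq (∂_{b _} f)) (integrable_inner (∂_{b _} f) _),
    hX] at h
  have hg : ∫ x, gradSq f x = ∑ i, ∫ x, ‖∂_{b i} f x‖ ^ 2 := by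
    simp only [gradSq]
    exact integral_finsetSum _ fun i _ => integrable_norm_sq _
  rw [Finset.sum_add_distrib, ← Finset.mul_sum, ← hg] at h
  linarith

end Green

section CauchySchwarz

variable {α : Type*} [MeasurableSpace α] {μ : Measure α}

theorem integrable_mul_of_sq {p q : α → ℝ} (hp : AEStronglyMeasurable p μ)
    (hq : AEStronglyMeasurable q μ) (hp2 : Integrable (fun x => p x ^ 2) μ)
    (hq2 : Integrable (fun x => q x ^ 2) μ) : Integrable (fun x => p x * q x) μ :=
  ((memLp_two_iff_integrable_sq hp).2 hp2).integrable_mul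
    ((memLp_two_iff_integrable_sq hq).2 hq2)

theorem integral_mul_le_sqrt_mul_sqrt {p q : α → ℝ} (hp : AEStronglyMeasurable p μ)
    (hq : AEStronglyMeasurable q μ) (hp0 : ∀ x, 0 ≤ p x) (hq0 : ∀ x, 0 ≤ q x)
    (hp2 : Integrable (fun x => p x ^ 2) μ) (hq2 : Integrable (fun x => q x ^ 2) μ) :
    ∫ x, p x * q x ∂μ ≤ √(∫ x, p x ^ 2 ∂μ) * √(∫ x, q x ^ 2 ∂μ) := by
  have h := integral_mul_le_Lp_mul_Lq_of_nonneg (μ := μ) (f := p) (g := q)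
    Real.HolderConjugate.two_two
    (Filter.Eventually.of_forall hp0) (Filter.Eventually.of_forall hq0)
    (by simpa using (memLp_two_iff_integrable_sq hp).2 hp2)
    (by simpa using (memLp_two_iff_integrable_sq hq).2 hq2)
  simpa [Real.sqrt_eq_rpow] using h

end CauchySchwarz

section Continuity

variable {V : Type*} [NormedAddCommGroup V]

theorem continuous_regNorm (η : ℝ) : Continuous (regNorm η : V → ℝ) := by
  unfold regNorm
  fun_prop

end Continuity

section Energy

variable {V : Type*} [NormedAddCommGroup V] [InnerProductSpace ℝ V] [FiniteDimensional ℝ V]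

theorem SchwartzMap.continuous_gradSq (f : 𝓢(V, ℂ)) : Continuous (gradSq f) :=
  continuous_finsetSum _ fun i _ =>
    ((∂_{stdOrthonormalBasis ℝ V i} f : 𝓢(V, ℂ)).continuous.norm.pow 2)

variable [MeasurableSpace V] [BorelSpace V]

/-- The homogeneous Sobolev norm `‖∇f‖_{L²}`. -/
def SchwartzMap.gradNorm (f : 𝓢(V, ℂ)) : ℝ := √(∫ x, gradSq f x)

/-- The weighted norm `‖ρ⁻¹ f‖_{L²}`, with `ρ = regNorm η`. -/
def SchwartzMap.hardyNorm (η : ℝ) (f : 𝓢(V, ℂ)) : ℝ := √(∫ x, ((regNorm η x)⁻¹ * ‖f x‖) ^ 2)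

/-- The weighted norm `‖ρ f‖_{L²}`, with `ρ = regNorm η`. -/
def SchwartzMap.weightedNorm (η : ℝ) (f : 𝓢(V, ℂ)) : ℝ := √(∫ x, (regNorm η x * ‖f x‖) ^ 2)

theorem SchwartzMap.gradNorm_sq (f : 𝓢(V, ℂ)) : gradNorm f ^ 2 = ∫ x, gradSq f x :=
  Real.sq_sqrt (integral_nonneg (gradSq_nonneg f))

theorem SchwartzMap.hardyNorm_sq (η : ℝ) (f : 𝓢(V, ℂ)) :
    hardyNorm η f ^ 2 = ∫ x, ((regNorm η x)⁻¹ * ‖f x‖) ^ 2 :=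
  Real.sq_sqrt (integral_nonneg fun _ => sq_nonneg _)

theorem SchwartzMap.gradNorm_nonneg (f : 𝓢(V, ℂ)) : 0 ≤ gradNorm f := Real.sqrt_nonneg _

theorem SchwartzMap.hardyNorm_nonneg (η : ℝ) (f : 𝓢(V, ℂ)) : 0 ≤ hardyNorm η f :=
  Real.sqrt_nonneg _

theorem SchwartzMap.weightedNorm_nonneg (η : ℝ) (f : 𝓢(V, ℂ)) : 0 ≤ weightedNorm η f :=
  Real.sqrt_nonneg _

theorem SchwartzMap.integrable_regNorm_inv_mul_norm_sq {η : ℝ} (hη : 0 < η) (f : 𝓢(V, ℂ)) :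
    Integrable (fun x => ((regNorm η x)⁻¹ * ‖f x‖) ^ 2) := by
  have h := integrable_weight_norm_sq ((hasTemperateGrowth_regNorm_inv (V := V) hη).mul
    (hasTemperateGrowth_regNorm_inv hη)) f
  refine h.congr (Filter.Eventually.of_forall fun x => ?_)
  simp only [Pi.mul_apply]
  ring

theorem SchwartzMap.integrable_regNorm_mul_norm_sq {η : ℝ} (hη : 0 < η) (f : 𝓢(V, ℂ)) :
    Integrable (fun x => (regNorm η x * ‖f x‖) ^ 2) := by
  have h := integrable_weight_norm_sq ((hasTemperateGrowth_regNorm (V := V) hη).mul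
    (hasTemperateGrowth_regNorm hη)) f
  refine h.congr (Filter.Eventually.of_forall fun x => ?_)
  simp only [Pi.mul_apply]
  ring

theorem SchwartzMap.integrable_sqrt_gradSq_sq (f : 𝓢(V, ℂ)) :
    Integrable (fun x => √(gradSq f x) ^ 2) := by
  simpa only [Real.sq_sqrt (gradSq_nonneg f _)] using integrable_gradSq f

theorem SchwartzMap.sqrt_integral_sqrt_gradSq_sq (f : 𝓢(V, ℂ)) :
    √(∫ x, √(gradSq f x) ^ 2) = gradNorm f := by
  simp only [Real.sq_sqrt (gradSq_nonneg f _), gradNorm]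

/-- Hardy's inequality with the regularized weight. -/
theorem SchwartzMap.hardy {η : ℝ} (hη : 0 < η) (f : 𝓢(V, ℂ)) :
    ((Module.finrank ℝ V : ℝ) - 2) * hardyNorm η f ≤ 2 * gradNorm f := by
  have ha := (hasTemperateGrowth_regNorm_inv (V := V) hη).mul
    (hasTemperateGrowth_regNorm_inv hη)
  have hc : Continuous fun x : V => (regNorm η x)⁻¹ :=
    (continuous_regNorm η).inv₀ fun x => (regNorm_pos hη x).ne'
  have hfd : ∀ x : V, fderiv ℝ ((fun x : V => (regNorm η x)⁻¹) * fun x => (regNorm η x)⁻¹) x x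
      = -2 * ‖x‖ ^ 2 * (regNorm η x)⁻¹ ^ 4 := fun x => by
    have h := (hasDerivAt_inv (regNorm_pos hη x).ne').comp_hasFDerivAt x (hasFDerivAt_regNorm hη x)
    refine (congrArg (fun L => L x) (h.mul h).fderiv).trans ?_
    simp
    ring
  have h := integral_weight_radialDeriv_inner ha f
  simp only [hfd, Pi.mul_apply] at h
  have hq := integrable_regNorm_inv_mul_norm_sq hη f
  have hpq : Integrable fun x => √(gradSq f x) * ((regNorm η x)⁻¹ * ‖f x‖) :=
    integrable_mul_of_sq (continuous_gradSq f).sqrt.aestronglyMeasurable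
      (hc.mul f.continuous.norm).aestronglyMeasurable (integrable_sqrt_gradSq_sq f) hq
  have hcs := integral_mul_le_sqrt_mul_sqrt (μ := (volume : Measure V))
      (q := fun x => (regNorm η x)⁻¹ * ‖f x‖)
      (continuous_gradSq f).sqrt.aestronglyMeasurable
      (hc.mul f.continuous.norm).aestronglyMeasurable (fun x => Real.sqrt_nonneg _)
      (fun x => mul_nonneg (inv_nonneg.2 (regNorm_pos hη x).le) (norm_nonneg _))
      (integrable_sqrt_gradSq_sq f) hq
  rw [sqrt_integral_sqrt_gradSq_sq] at hcs
  have hmain : ((Module.finrank ℝ V : ℝ) - 2) * hardyNorm η f ^ 2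
      ≤ 2 * (gradNorm f * hardyNorm η f) := by
    have hIneq : ∫ x, (((Module.finrank ℝ V : ℝ) - 2) * ((regNorm η x)⁻¹ * ‖f x‖) ^ 2
        - 2 * (√(gradSq f x) * ((regNorm η x)⁻¹ * ‖f x‖))) ≤ 0 := by
      rw [← h]
      have hw := ((((Function.HasTemperateGrowth.const (-2 : ℝ)).mul
        (Function.hasTemperateGrowth_norm_sq (H := V))).mul (ha.mul ha)).add
        ((Function.HasTemperateGrowth.const (Module.finrank ℝ V : ℝ)).mul ha))
      have hi := (integrable_weight_norm_sq hw f).add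
        ((integrable_weight_inner ha (radialDeriv f) f).const_mul 2)
      refine integral_mono ((hq.const_mul _).sub (hpq.const_mul 2))
        (hi.congr (Filter.Eventually.of_forall fun x => ?_)) fun x => ?_
      · simp only [Pi.add_apply, Pi.mul_apply]
        ring
      · have hs : 0 < (regNorm η x)⁻¹ := inv_pos.2 (regNorm_pos hη x)
        have hxs : ‖x‖ * (regNorm η x)⁻¹ ≤ 1 :=
          mul_inv_le_one_of_le₀ (norm_le_regNorm η x) (regNorm_pos hη x).le
        set s := (regNorm η x)⁻¹
        have h1 : -(√(gradSq f x) * ‖x‖ * ‖f x‖) ≤ inner ℝ (radialDeriv f x) (f x) :=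
          (neg_le_neg (mul_le_mul_of_nonneg_right (norm_radialDeriv_le f x)
            (norm_nonneg _))).trans (neg_le_of_abs_le (abs_real_inner_le_norm _ _))
        have h2 : (‖x‖ * s) ^ 2 ≤ 1 := pow_le_one₀ (by positivity) hxs
        have h3 : 0 ≤ (1 - (‖x‖ * s) ^ 2) * (s * ‖f x‖) ^ 2 :=
          mul_nonneg (sub_nonneg.2 h2) (sq_nonneg _)
        have h4 : 0 ≤ (1 - ‖x‖ * s) * (√(gradSq f x) * (s * ‖f x‖)) :=
          mul_nonneg (sub_nonneg.2 hxs) (by positivity)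
        have h5 := mul_le_mul_of_nonneg_left h1 (mul_pos hs hs).le
        linear_combination 2 * h3 + 2 * h4 + 2 * h5
    rw [integral_sub (hq.const_mul _) (hpq.const_mul 2), integral_const_mul, integral_const_mul,
      ← hardyNorm_sq] at hIneq
    change _ ≤ gradNorm f * hardyNorm η f at hcs
    linarith
  rcases (hardyNorm_nonneg η f).eq_or_lt with h0 | h0
  · rw [← h0, mul_zero]
    have := gradNorm_nonneg f
    positivity
  · refine le_of_mul_le_mul_right ?_ h0
    linarith

end Energy

section Multiplier

/-- Multiplying the conjugated Helmholtz equation by `X + N w + c ρ w`, where `c = δ / (2k)`. -/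
theorem helmholtz_multiplier_identity {D X w g : ℂ} {k δ η s ρ N c : ℝ} (hs : ρ * s = 1)
    (hc : 2 * c * k = δ)
    (hg : -D + 2 * I * k * s * X + I * k * (2 * N * s + η ^ 2 * s ^ 3) * w
      - k ^ 2 * η ^ 2 * s ^ 2 * w + I * δ * w = g) :
    -inner ℝ D X - N * inner ℝ D w - c * (ρ * inner ℝ D w)
      = inner ℝ g (X + N * w) + c * ρ * inner ℝ g w - k * η ^ 2 * s ^ 3 * inner ℝ X (I * w)
        + k ^ 2 * η ^ 2 * s ^ 2 * inner ℝ w (X + N * w) + c * k ^ 2 * η ^ 2 * s * ‖w‖ ^ 2 := by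
  subst hg hc
  rw [Complex.sq_norm, Complex.normSq_apply]
  have hre : ∀ (r : ℝ) (m : ℕ), ((r : ℂ) ^ m).re = r ^ m := fun r m => by
    rw [← ofReal_pow, ofReal_re]
  have him : ∀ (r : ℝ) (m : ℕ), ((r : ℂ) ^ m).im = 0 := fun r m => by
    rw [← ofReal_pow, ofReal_im]
  simp [Complex.inner, hre, him]
  linear_combination (c * k ^ 2 * η ^ 2 * s * (w.re ^ 2 + w.im ^ 2)
    + 2 * c * k * (X.im * w.re - X.re * w.im)) * hs

theorem helmholtz_multiplier_bound {D X w g : ℂ} {k δ η s ρ N c p : ℝ} (hs : ρ * s = 1)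
    (hρ : 0 < ρ) (hη : 0 ≤ η) (hηρ : η ≤ ρ) (hk : 0 ≤ k) (hN : 0 ≤ N) (hc0 : 0 ≤ c)
    (hc : 2 * c * k = δ) (hp : 0 ≤ p) (hX : ‖X‖ ≤ p * ρ)
    (hg : -D + 2 * I * k * s * X + I * k * (2 * N * s + η ^ 2 * s ^ 3) * w
      - k ^ 2 * η ^ 2 * s ^ 2 * w + I * δ * w = g) :
    -inner ℝ D X - N * inner ℝ D w - c * (ρ * inner ℝ D w) - c * (s * inner ℝ X w)
      ≤ p * (ρ * ‖g‖) + N * ((ρ * ‖g‖) * (s * ‖w‖)) + (k * η + (k * η) ^ 2) * (p * (s * ‖w‖))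
        + (k * η) ^ 2 * N * (s * ‖w‖) ^ 2
        + c * (p * ‖w‖ + (k * η) ^ 2 * ((s * ‖w‖) * ‖w‖) + (ρ * ‖g‖) * ‖w‖) := by
  rw [helmholtz_multiplier_identity hs hc hg]
  have hs0 : 0 < s := by
    by_contra! h
    nlinarith
  have hηs : η * s ≤ 1 := by rw [← hs]; gcongr
  have hM : ‖X + N * w‖ ≤ p * ρ + N * ‖w‖ := by
    refine (norm_add_le _ _).trans (add_le_add hX ?_)
    rw [norm_mul, Complex.norm_real, Real.norm_of_nonneg hN]
  have e1 : inner ℝ g (X + N * w) ≤ ‖g‖ * (p * ρ + N * ‖w‖) :=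
    (real_inner_le_norm _ _).trans (mul_le_mul_of_nonneg_left hM (norm_nonneg _))
  have e2 : c * ρ * inner ℝ g w ≤ c * ρ * (‖g‖ * ‖w‖) :=
    mul_le_mul_of_nonneg_left (real_inner_le_norm _ _) (by positivity)
  have e3 : -inner ℝ X (I * w) ≤ p * ρ * ‖w‖ := by
    refine (neg_le_of_neg_le (neg_le_of_abs_le (abs_real_inner_le_norm _ _))).trans ?_
    rw [norm_mul, norm_I, one_mul]
    gcongr
  have e4 : inner ℝ w (X + N * w) ≤ ‖w‖ * (p * ρ + N * ‖w‖) :=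
    (real_inner_le_norm _ _).trans (mul_le_mul_of_nonneg_left hM (norm_nonneg _))
  have e5 : -(s * inner ℝ X w) ≤ p * ‖w‖ := by
    have : -inner ℝ X w ≤ p * ρ * ‖w‖ :=
      (neg_le_of_neg_le (neg_le_of_abs_le (abs_real_inner_le_norm _ _))).trans (by gcongr)
    calc -(s * inner ℝ X w) = s * (-inner ℝ X w) := by ring
      _ ≤ s * (p * ρ * ‖w‖) := by gcongr
      _ = p * ‖w‖ := by linear_combination p * ‖w‖ * hs
  have e3' := mul_le_mul_of_nonneg_left e3 (by positivity : 0 ≤ k * η ^ 2 * s ^ 3)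
  have e3'' : k * η ^ 2 * s ^ 3 * (p * ρ * ‖w‖) ≤ k * η * (p * (s * ‖w‖)) := by
    calc k * η ^ 2 * s ^ 3 * (p * ρ * ‖w‖) = (k * η * (p * (s * ‖w‖))) * (η * s) := by
          linear_combination (k * η ^ 2 * s ^ 2 * p * ‖w‖) * hs
      _ ≤ k * η * (p * (s * ‖w‖)) := mul_le_of_le_one_right (by positivity) hηs
  have e4' := mul_le_mul_of_nonneg_left e4 (by positivity : 0 ≤ k ^ 2 * η ^ 2 * s ^ 2)
  have e5' := mul_le_mul_of_nonneg_left e5 hc0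
  linear_combination e1 + e2 + e3' + e3'' + e4' + e5' +
    (-(N * ‖g‖ * ‖w‖) + k ^ 2 * η ^ 2 * s * p * ‖w‖) * hs

theorem le_of_multiplier_bound {A B F W N k η δ c : ℝ} (hA : 0 ≤ A) (hB : 0 ≤ B) (hF : 0 ≤ F)
    (hW : 0 ≤ W) (hk : 0 < k) (hη : 0 ≤ η) (hδ : 0 ≤ δ) (hc : 2 * c * k = δ)
    (hkη : k * η ≤ 1 / 16) (hδk : δ ≤ k ^ 2) (hBA : B ≤ 2 * A) (hNB : N * B ≤ 2 * A)
    (hWB : δ * W ^ 2 ≤ F * B)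
    (h : A ^ 2 / 2 ≤ A * F + N * (F * B) + (k * η + (k * η) ^ 2) * (A * B)
      + (k * η) ^ 2 * N * B ^ 2 + c * (A * W + (k * η) ^ 2 * (B * W) + F * W)) :
    A ≤ 100 * F := by
  by_contra! hlt
  have hA0 : 0 < A := by linarith
  set θ := k * η
  have hθ : 0 ≤ θ := by positivity
  have hθ2 : θ ^ 2 ≤ 1 / 256 := by nlinarith
  have hc0 : 0 ≤ c := by
    by_contra! h
    nlinarith
  have hY : 0 ≤ c * W := by positivity
  have hY2 : (c * W) ^ 2 ≤ F * A / 2 := by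
    have h1 : c ^ 2 ≤ δ / 4 := by
      have : (2 * c * k) ^ 2 ≤ δ * k ^ 2 := by rw [hc, sq]; gcongr
      have h2 : 4 * c ^ 2 * k ^ 2 ≤ δ * k ^ 2 := by linarith
      linarith [le_of_mul_le_mul_right h2 (by positivity)]
    calc (c * W) ^ 2 = c ^ 2 * W ^ 2 := by ring
      _ ≤ δ / 4 * W ^ 2 := by gcongr
      _ ≤ F * B / 4 := by linarith
      _ ≤ F * (2 * A) / 4 := by gcongr
      _ = F * A / 2 := by ring
  have hY3 : c * W ≤ A / 14 := by
    refine le_of_sq_le_sq ?_ (by positivity)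
    nlinarith
  have t1 : N * (F * B) ≤ 2 * (A * F) := by nlinarith
  have t2 : (θ + θ ^ 2) * (A * B) ≤ (1 / 16 + 1 / 256) * (A * (2 * A)) := by gcongr
  have t3 : θ ^ 2 * N * B ^ 2 ≤ 1 / 256 * (4 * A ^ 2) := by
    have : N * B * B ≤ 2 * A * (2 * A) := by gcongr
    calc θ ^ 2 * N * B ^ 2 = θ ^ 2 * (N * B * B) := by ring
      _ ≤ θ ^ 2 * (2 * A * (2 * A)) := by gcongr
      _ ≤ 1 / 256 * (2 * A * (2 * A)) := by gcongr
      _ = _ := by ring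
  have t4 : c * (A * W + θ ^ 2 * (B * W) + F * W) ≤ A / 14 * (A + 1 / 256 * (2 * A) + A / 100) := by
    calc c * (A * W + θ ^ 2 * (B * W) + F * W) = c * W * (A + θ ^ 2 * B + F) := by ring
      _ ≤ _ := by
        gcongr
        linarith
  have t5 : A * F ≤ A * (A / 100) := by gcongr; linarith
  nlinarith

end Multiplier

section Estimates

variable {V : Type*} [NormedAddCommGroup V] [InnerProductSpace ℝ V] [FiniteDimensional ℝ V]
  [MeasurableSpace V] [BorelSpace V]

theorem SchwartzMap.hardyNorm_le {η : ℝ} (hη : 0 < η) (hV : 3 ≤ Module.finrank ℝ V)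
    (f : 𝓢(V, ℂ)) : hardyNorm η f ≤ 2 * gradNorm f := by
  have h3 : (3 : ℝ) ≤ Module.finrank ℝ V := by exact_mod_cast hV
  nlinarith [hardy hη f, hardyNorm_nonneg η f]

theorem SchwartzMap.integrable_norm_mul_norm (f g : 𝓢(V, ℂ)) :
    Integrable fun x => ‖f x‖ * ‖g x‖ :=
  integrable_mul_of_sq f.continuous.norm.aestronglyMeasurable
    g.continuous.norm.aestronglyMeasurable (integrable_norm_sq f) (integrable_norm_sq g)

theorem SchwartzMap.integral_norm_mul_norm_le {η : ℝ} (hη : 0 < η) (f g : 𝓢(V, ℂ)) :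
    ∫ x, ‖f x‖ * ‖g x‖ ≤ weightedNorm η f * hardyNorm η g := by
  have hc : Continuous fun x : V => (regNorm η x)⁻¹ :=
    (continuous_regNorm η).inv₀ fun x => (regNorm_pos hη x).ne'
  have h := integral_mul_le_sqrt_mul_sqrt (μ := (volume : Measure V))
    (p := fun x => regNorm η x * ‖f x‖) (q := fun x => (regNorm η x)⁻¹ * ‖g x‖)
    ((continuous_regNorm η).mul f.continuous.norm).aestronglyMeasurable
    (hc.mul g.continuous.norm).aestronglyMeasurable
    (fun x => mul_nonneg (regNorm_pos hη x).le (norm_nonneg _))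
    (fun x => mul_nonneg (inv_nonneg.2 (regNorm_pos hη x).le) (norm_nonneg _))
    (integrable_regNorm_mul_norm_sq hη f) (integrable_regNorm_inv_mul_norm_sq hη g)
  refine le_of_eq_of_le ?_ h
  congr 1
  ext x
  have := (regNorm_pos hη x).ne'
  field_simp

theorem SchwartzMap.mass_le {η : ℝ} (hη : 0 < η) {τ : ℂ} {u ψ : 𝓢(V, ℂ)}
    (h : ∀ x, -(Δ u : 𝓢(V, ℂ)) x - τ * u x = ψ x) :
    -τ.im * ∫ x, ‖u x‖ ^ 2 ≤ weightedNorm η ψ * hardyNorm η u := by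
  refine le_trans ?_ (integral_norm_mul_norm_le hη ψ u)
  have h0 := integral_inner_laplacian_I_mul u
  have hI : Integrable fun x => inner ℝ ((Δ u : 𝓢(V, ℂ)) x) (I * u x) := by
    simpa using integrable_inner (Δ u) (I • u)
  rw [← integral_const_mul, ← sub_zero (∫ x, -τ.im * _), ← h0,
    ← integral_sub ((integrable_norm_sq u).const_mul _) hI]
  refine integral_mono (((integrable_norm_sq u).const_mul _).sub hI)
    (integrable_norm_mul_norm ψ u) fun x => ?_
  have hle : inner ℝ (ψ x) (I * u x) ≤ ‖ψ x‖ * ‖u x‖ := by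
    simpa using real_inner_le_norm (ψ x) (I * u x)
  refine le_of_eq_of_le ?_ hle
  simp only
  rw [← h x, Complex.sq_norm, Complex.normSq_apply]
  simp [Complex.inner]
  ring

theorem SchwartzMap.energy_le {η : ℝ} (hη : 0 < η) {τ : ℂ} {u ψ : 𝓢(V, ℂ)}
    (h : ∀ x, -(Δ u : 𝓢(V, ℂ)) x - τ * u x = ψ x) :
    gradNorm u ^ 2 ≤ τ.re * (∫ x, ‖u x‖ ^ 2) + weightedNorm η ψ * hardyNorm η u := by
  have hcs := integral_norm_mul_norm_le hη ψ u
  have h0 := integral_inner_laplacian_self u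
  rw [gradNorm_sq, ← sub_le_iff_le_add']
  refine le_trans ?_ hcs
  rw [← neg_eq_iff_eq_neg.2 h0, ← integral_neg, ← integral_const_mul,
    ← integral_sub (integrable_inner _ _).fun_neg ((integrable_norm_sq u).const_mul _)]
  refine integral_mono ((integrable_inner _ _).fun_neg.sub ((integrable_norm_sq u).const_mul _))
    (integrable_norm_mul_norm ψ u) fun x => ?_
  refine le_of_eq_of_le ?_ (real_inner_le_norm (ψ x) (u x))
  simp only
  rw [← h x, Complex.sq_norm, Complex.normSq_apply]
  simp [Complex.inner]
  ring

theorem SchwartzMap.gradNorm_le_of_re_le_neg_im {η : ℝ} (hη : 0 < η)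
    (hV : 3 ≤ Module.finrank ℝ V) {τ : ℂ} {u ψ : 𝓢(V, ℂ)}
    (h : ∀ x, -(Δ u : 𝓢(V, ℂ)) x - τ * u x = ψ x) (hτ : τ.re ≤ -τ.im) :
    gradNorm u ≤ 4 * weightedNorm η ψ := by
  have h1 := mass_le hη h
  have h2 := energy_le hη h
  have h3 := hardyNorm_le hη hV u
  have hM : 0 ≤ ∫ x, ‖u x‖ ^ 2 := integral_nonneg fun _ => sq_nonneg _
  have h4 := mul_le_mul_of_nonneg_right hτ hM
  have h5 := mul_le_mul_of_nonneg_left h3 (weightedNorm_nonneg η ψ)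
  have hA := gradNorm_nonneg u
  rcases hA.eq_or_lt with h0 | h0
  · rw [← h0]
    have := weightedNorm_nonneg η ψ
    positivity
  · refine le_of_mul_le_mul_right ?_ h0
    linarith

theorem SchwartzMap.gradNorm_le_of_conjugated {η k δ : ℝ} (hη : 0 < η) (hk : 0 < k) (hδ : 0 ≤ δ)
    (hV : 3 ≤ Module.finrank ℝ V) (hkη : k * η ≤ 1 / 16) (hδk : δ ≤ k ^ 2) {w g : 𝓢(V, ℂ)}
    (hw : ∀ x, -(Δ w : 𝓢(V, ℂ)) x + 2 * I * k * (regNorm η x : ℂ)⁻¹ * fderiv ℝ w x x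
      + I * k * ((Module.finrank ℝ V - 1) * (regNorm η x : ℂ)⁻¹
        + η ^ 2 * (regNorm η x : ℂ)⁻¹ ^ 3) * w x
      - k ^ 2 * η ^ 2 * (regNorm η x : ℂ)⁻¹ ^ 2 * w x + I * δ * w x = g x)
    (hmass : δ * ∫ x, ‖w x‖ ^ 2 ≤ weightedNorm η g * hardyNorm η w) :
    gradNorm w ≤ 100 * weightedNorm η g := by
  have h3 : (3 : ℝ) ≤ Module.finrank ℝ V := by exact_mod_cast hV
  set N : ℝ := (Module.finrank ℝ V - 1) / 2 with hN
  set c : ℝ := δ / (2 * k) with hc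
  have hN0 : 0 ≤ N := by linarith
  have hc0 : 0 ≤ c := by positivity
  have hck : 2 * c * k = δ := by rw [hc]; field_simp
  have hNB : N * hardyNorm η w ≤ 2 * gradNorm w := by
    nlinarith [hardy hη w, hardyNorm_nonneg η w]
  have hW2 : √(∫ x, ‖w x‖ ^ 2) ^ 2 = ∫ x, ‖w x‖ ^ 2 :=
    Real.sq_sqrt (integral_nonneg fun _ => sq_nonneg _)
  refine le_of_multiplier_bound (W := √(∫ x, ‖w x‖ ^ 2)) (gradNorm_nonneg w)
    (hardyNorm_nonneg η w) (weightedNorm_nonneg η g) (Real.sqrt_nonneg _) hk hη.le hδ hck hkη hδk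
    (hardyNorm_le hη hV w) hNB (by rwa [hW2]) ?_
  have hpc := (continuous_gradSq w).sqrt.aestronglyMeasurable (μ := volume)
  have hqc : AEStronglyMeasurable (fun x : V => (regNorm η x)⁻¹ * ‖w x‖) volume :=
    (((continuous_regNorm η).inv₀ fun x => (regNorm_pos hη x).ne').mul
      w.continuous.norm).aestronglyMeasurable
  have hhc : AEStronglyMeasurable (fun x : V => regNorm η x * ‖g x‖) volume :=
    ((continuous_regNorm η).mul g.continuous.norm).aestronglyMeasurable
  have hmc : AEStronglyMeasurable (fun x : V => ‖w x‖) volume :=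
    w.continuous.norm.aestronglyMeasurable
  have hp0 : ∀ x, 0 ≤ √(gradSq w x) := fun x => Real.sqrt_nonneg _
  have hq0 : ∀ x : V, 0 ≤ (regNorm η x)⁻¹ * ‖w x‖ := fun x =>
    mul_nonneg (inv_nonneg.2 (regNorm_pos hη x).le) (norm_nonneg _)
  have hh0 : ∀ x : V, 0 ≤ regNorm η x * ‖g x‖ := fun x =>
    mul_nonneg (regNorm_pos hη x).le (norm_nonneg _)
  have hp2 := integrable_sqrt_gradSq_sq w
  have hq2 := integrable_regNorm_inv_mul_norm_sq hη w
  have hh2 := integrable_regNorm_mul_norm_sq hη g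
  have hm2 := integrable_norm_sq w
  have iph := integrable_mul_of_sq hpc hhc hp2 hh2
  have ihq := integrable_mul_of_sq hhc hqc hh2 hq2
  have ipq := integrable_mul_of_sq hpc hqc hp2 hq2
  have ipm := integrable_mul_of_sq hpc hmc hp2 hm2
  have iqm := integrable_mul_of_sq hqc hmc hq2 hm2
  have ihm := integrable_mul_of_sq hhc hmc hh2 hm2
  have cph := integral_mul_le_sqrt_mul_sqrt hpc hhc hp0 hh0 hp2 hh2
  have chq := integral_mul_le_sqrt_mul_sqrt hhc hqc hh0 hq0 hh2 hq2
  have cpq := integral_mul_le_sqrt_mul_sqrt hpc hqc hp0 hq0 hp2 hq2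
  have cpm := integral_mul_le_sqrt_mul_sqrt hpc hmc hp0 (fun x => norm_nonneg _) hp2 hm2
  have cqm := integral_mul_le_sqrt_mul_sqrt hqc hmc hq0 (fun x => norm_nonneg _) hq2 hm2
  have chm := integral_mul_le_sqrt_mul_sqrt hhc hmc hh0 (fun x => norm_nonneg _) hh2 hm2
  rw [sqrt_integral_sqrt_gradSq_sq] at cph cpq cpm
  rw [← weightedNorm] at cph chq chm
  rw [← hardyNorm] at chq cpq cqm
  have i1 := integrable_inner (Δ w) (radialDeriv w)
  have i2 := integrable_inner (Δ w) w
  have i3 := integrable_weight_inner (hasTemperateGrowth_regNorm hη) (Δ w) w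
  have i4 := integrable_weight_inner (hasTemperateGrowth_regNorm_inv hη) (radialDeriv w) w
  have hL := integral_mono
    (((i1.neg.sub (i2.const_mul N)).sub (i3.const_mul c)).sub (i4.const_mul c))
    ((((iph.add (ihq.const_mul N)).add (ipq.const_mul (k * η + (k * η) ^ 2))).add
      (hq2.const_mul ((k * η) ^ 2 * N))).add
      (((ipm.add (iqm.const_mul ((k * η) ^ 2))).add ihm).const_mul c)) fun x =>
    helmholtz_multiplier_bound (s := (regNorm η x)⁻¹) (ρ := regNorm η x)
      (X := radialDeriv w x) (mul_inv_cancel₀ (regNorm_pos hη x).ne') (regNorm_pos hη x) hη.le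
      (le_regNorm x) hk.le hN0 hc0 hck (hp0 x)
      ((norm_radialDeriv_le w x).trans
        (mul_le_mul_of_nonneg_left (norm_le_regNorm η x) (hp0 x)))
      (by rw [← hw x, radialDeriv_apply, hN]; push_cast; ring)
  rw [integral_sub' ((i1.neg.sub (i2.const_mul N)).sub (i3.const_mul c)) (i4.const_mul c),
    integral_sub' (i1.neg.sub (i2.const_mul N)) (i3.const_mul c),
    integral_sub' i1.neg (i2.const_mul N), integral_neg',
    integral_add' (((iph.add (ihq.const_mul N)).add (ipq.const_mul _)).add (hq2.const_mul _))
      (((ipm.add (iqm.const_mul _)).add ihm).const_mul c),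
    integral_add' ((iph.add (ihq.const_mul N)).add (ipq.const_mul _)) (hq2.const_mul _),
    integral_add' (iph.add (ihq.const_mul N)) (ipq.const_mul _),
    integral_add' iph (ihq.const_mul N)] at hL
  simp only [integral_const_mul] at hL
  rw [integral_add' (ipm.add (iqm.const_mul _)) ihm, integral_add' ipm (iqm.const_mul _),
    integral_const_mul, integral_inner_laplacian_radialDeriv, integral_inner_laplacian_self,
    integral_regNorm_inner_laplacian_self hη, ← hardyNorm_sq, ← gradNorm_sq] at hL
  have hρ : 0 ≤ c * ∫ x, regNorm η x * gradSq w x := mul_nonneg hc0 <|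
    integral_nonneg fun x => mul_nonneg (regNorm_pos hη x).le (gradSq_nonneg w x)
  have b1 := mul_le_mul_of_nonneg_left chq hN0
  have b2 := mul_le_mul_of_nonneg_left cpq (by positivity : 0 ≤ k * η + (k * η) ^ 2)
  have b3 := mul_le_mul_of_nonneg_left
    (add_le_add (add_le_add cpm (mul_le_mul_of_nonneg_left cqm (sq_nonneg (k * η)))) chm) hc0
  linear_combination hL + hρ + cph + b1 + b2 + b3

end Estimates

section Uniform

variable {V : Type*} [NormedAddCommGroup V] [InnerProductSpace ℝ V] [FiniteDimensional ℝ V]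
  [MeasurableSpace V] [BorelSpace V]

theorem SchwartzMap.weightedNorm_le {η : ℝ} (hη : 0 < η) (hη1 : η ≤ 1) (f : 𝓢(V, ℂ)) :
    weightedNorm η f ≤ √(∫ x, (1 + ‖x‖ ^ 2) * ‖f x‖ ^ 2) := by
  refine Real.sqrt_le_sqrt (integral_mono (integrable_regNorm_mul_norm_sq hη f)
    (integrable_weight_norm_sq ((Function.HasTemperateGrowth.const (1 : ℝ)).add
      (Function.hasTemperateGrowth_norm_sq (H := V))) f) fun x => ?_)
  simp only
  rw [mul_pow, regNorm_sq]
  gcongr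
  exact pow_le_one₀ hη.le hη1

/-- Up to a unimodular factor, the solution of the resolvent equation has gradient bounded by the
weighted norm of the source, uniformly in the spectral parameter. -/
theorem SchwartzMap.exists_norm_eq_gradNorm_le (hV : 3 ≤ Module.finrank ℝ V) {τ : ℂ}
    (hτ : τ.im < 0) {u ψ : 𝓢(V, ℂ)} (h : ∀ x, -(Δ u : 𝓢(V, ℂ)) x - τ * u x = ψ x) :
    ∃ w : 𝓢(V, ℂ), (∀ x, ‖w x‖ = ‖u x‖) ∧
      gradNorm w ≤ 100 * √(∫ x, (1 + ‖x‖ ^ 2) * ‖ψ x‖ ^ 2) := by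
  rcases le_or_gt τ.re (-τ.im) with hle | hlt
  · refine ⟨u, fun _ => rfl, (gradNorm_le_of_re_le_neg_im one_pos hV h hle).trans ?_⟩
    have := weightedNorm_le one_pos le_rfl ψ
    have h0 := weightedNorm_nonneg 1 ψ
    linarith
  · have hre : 0 < τ.re := by linarith
    set k := √τ.re with hk
    have hk0 : 0 < k := Real.sqrt_pos.2 hre
    have hk2 : k ^ 2 = τ.re := Real.sq_sqrt hre.le
    set η := min 1 (1 / (16 * k)) with hη
    have hη0 : 0 < η := lt_min one_pos (by positivity)
    have hkη : k * η ≤ 1 / 16 := by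
      calc k * η ≤ k * (1 / (16 * k)) := by gcongr; exact min_le_right _ _
        _ = 1 / 16 := by field_simp
    have hph := hasTemperateGrowth_radialPhase (V := V) k hη0
    have hnorm : ∀ (f : 𝓢(V, ℂ)) (x : V), ‖smulLeftCLM ℂ (radialPhase k η) f x‖ = ‖f x‖ :=
      fun f x => by
        rw [smulLeftCLM_apply_apply hph, norm_smul, norm_radialPhase, one_mul]
    have hF : weightedNorm η (smulLeftCLM ℂ (radialPhase k η) ψ) = weightedNorm η ψ := by
      simp only [weightedNorm, hnorm]
    have hB : hardyNorm η (smulLeftCLM ℂ (radialPhase k η) u) = hardyNorm η u := by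
      simp only [hardyNorm, hnorm]
    refine ⟨smulLeftCLM ℂ (radialPhase k η) u, hnorm u, ?_⟩
    have key := gradNorm_le_of_conjugated (δ := -τ.im) hη0 hk0 (by linarith) hV hkη
      (by rw [hk2]; exact hlt.le) (w := smulLeftCLM ℂ (radialPhase k η) u)
      (g := smulLeftCLM ℂ (radialPhase k η) ψ) (fun x => ?_) ?_
    · rw [hF] at key
      have := weightedNorm_le hη0 (min_le_left _ _) ψ
      linarith
    · rw [helmholtz_radialPhase_smul k hη0 u x, smulLeftCLM_apply_apply hph,
        smulLeftCLM_apply_apply hph, ← h x, smul_eq_mul,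
        smul_eq_mul]
      have hτ' : τ = (k : ℂ) ^ 2 + τ.im * I := by
        rw [← ofReal_pow, hk2, Complex.re_add_im]
      push_cast
      linear_combination (radialPhase k η x * u x) * hτ'
    · simp only [hnorm, hF, hB]
      exact mass_le hη0 h

end Uniform

section Sobolev

open Filter Topology
open scoped NNReal

variable {V : Type*} [NormedAddCommGroup V] [InnerProductSpace ℝ V] [FiniteDimensional ℝ V]
  [MeasurableSpace V] [BorelSpace V]

/-- The Gagliardo–Nirenberg–Sobolev inequality for `C¹` functions in `Lᵖ`, without a condition on
the support. -/
theorem eLpNorm_le_eLpNorm_fderiv_of_memLp {w : V → ℂ} (hw : ContDiff ℝ 1 w) {p p' : ℝ≥0}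
    (hp : 1 ≤ p) (hwp : MemLp w p) (hV : 0 < Module.finrank ℝ V)
    (hp' : (p' : ℝ)⁻¹ = p⁻¹ - (Module.finrank ℝ V : ℝ)⁻¹) :
    eLpNorm w p' volume
      ≤ eLpNormLESNormFDerivOfEqInnerConst (volume : Measure V) p *
        eLpNorm (fderiv ℝ w) p volume := by
  let χ : ContDiffBump (0 : V) := ⟨1, 2, one_pos, one_lt_two⟩
  have hχ1 : ContDiff ℝ 1 χ := χ.contDiff
  obtain ⟨C, hC⟩ := (hχ1.continuous_fderiv one_ne_zero).bounded_above_of_compact_support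
    (χ.hasCompactSupport.fderiv ℝ)
  have hC0 : 0 ≤ C := (norm_nonneg _).trans (hC 0)
  let r : ℕ → ℝ := fun N => 1 / ((N : ℝ) + 1)
  have hr : ∀ N, 0 < r N := fun N => by positivity
  have hr0 : Tendsto r atTop (𝓝 0) := tendsto_one_div_add_atTop_nhds_zero_nat
  let v : ℕ → V → ℂ := fun N x => χ (r N • x) • w x
  have hχd : ∀ N x, HasFDerivAt (fun x => χ (r N • x)) (r N • fderiv ℝ χ (r N • x)) x :=
    fun N x => by
      have h := ((hχ1.differentiable one_ne_zero).differentiableAt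
        (x := r N • x)).hasFDerivAt.comp x ((hasFDerivAt_id x).const_smul (r N))
      refine h.congr_fderiv ?_
      ext y
      simp
  have hvd : ∀ N, ContDiff ℝ 1 (v N) := fun N =>
    (hχ1.comp (contDiff_const_smul (r N))).smul hw
  have hvc : ∀ N, HasCompactSupport (v N) := fun N =>
    (χ.hasCompactSupport.comp_smul (hr N).ne').smul_right
  have hvf : ∀ N x, ‖fderiv ℝ (v N) x‖ ≤ ‖fderiv ℝ w x‖ + r N * C * ‖w x‖ := fun N x => by
    have h := ((hχd N x).smul ((hw.differentiable one_ne_zero).differentiableAt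
      (x := x)).hasFDerivAt).fderiv
    rw [show fderiv ℝ (v N) x = _ from h]
    refine (norm_add_le _ _).trans (add_le_add ?_ ?_)
    · rw [norm_smul, Real.norm_of_nonneg χ.nonneg]
      exact mul_le_of_le_one_left (norm_nonneg _) χ.le_one
    · rw [ContinuousLinearMap.norm_smulRight_apply, norm_smul, Real.norm_of_nonneg (hr N).le]
      have := hr N
      gcongr
      exact hC _
  have hbound : ∀ N, eLpNorm (fderiv ℝ (v N)) p volume
      ≤ eLpNorm (fderiv ℝ w) p volume + ENNReal.ofReal (r N * C) * eLpNorm w p volume :=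
    fun N => by
      calc eLpNorm (fderiv ℝ (v N)) p volume
          ≤ eLpNorm ((fun x => ‖fderiv ℝ w x‖) + (r N * C) • fun x => ‖w x‖) p volume :=
            eLpNorm_mono_real fun x => hvf N x
        _ ≤ eLpNorm (fun x => ‖fderiv ℝ w x‖) p volume
            + eLpNorm ((r N * C) • fun x => ‖w x‖) p volume :=
            eLpNorm_add_le (hw.continuous_fderiv one_ne_zero).norm.aestronglyMeasurable
              (hw.continuous.norm.const_smul _).aestronglyMeasurable (by exact_mod_cast hp)
        _ = _ := by
            have := (hr N).le
            rw [eLpNorm_norm, eLpNorm_const_smul, eLpNorm_norm,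
              Real.enorm_of_nonneg (by positivity)]
  have hlim : ∀ x, Tendsto (fun N => v N x) atTop (𝓝 (w x)) := fun x => by
    have h : Tendsto (fun N => r N • x) atTop (𝓝 0) := by
      simpa using hr0.smul_const x
    have h1 := ((hχ1.continuous.tendsto 0).comp h).smul_const (w x)
    have h2 : χ 0 = 1 := χ.one_of_mem_closedBall (by simp [χ])
    rw [h2, one_smul] at h1
    exact h1
  set K : ℝ≥0 := eLpNormLESNormFDerivOfEqInnerConst (volume : Measure V) p
  have hRHS : Tendsto (fun N => (K : ℝ≥0∞) * (eLpNorm (fderiv ℝ w) p volume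
      + ENNReal.ofReal (r N * C) * eLpNorm w p volume)) atTop
      (𝓝 (K * (eLpNorm (fderiv ℝ w) p volume + 0))) := by
    refine ENNReal.Tendsto.const_mul (tendsto_const_nhds.add ?_) (Or.inr (by simp))
    have h : Tendsto (fun N => ENNReal.ofReal (r N * C)) atTop (𝓝 0) := by
      simpa using ENNReal.tendsto_ofReal (hr0.mul_const C)
    simpa using ENNReal.Tendsto.mul_const h (Or.inr hwp.eLpNorm_ne_top)
  rw [add_zero] at hRHS
  refine (Lp.eLpNorm_lim_le_liminf_eLpNorm (fun N => (hvd N).continuous.aestronglyMeasurable) w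
    (Eventually.of_forall hlim)).trans ?_
  rw [← hRHS.liminf_eq]
  refine liminf_le_liminf (Eventually.of_forall fun N => ?_)
  exact (eLpNorm_le_eLpNorm_fderiv_of_eq_inner volume (hvd N) (hvc N) hp hV hp').trans
    (mul_le_mul_right (hbound N) _)

end Sobolev

theorem SchwartzMap.eLpNorm_fderiv_le {V : Type*} [NormedAddCommGroup V] [InnerProductSpace ℝ V]
    [FiniteDimensional ℝ V] [MeasurableSpace V] [BorelSpace V] (f : 𝓢(V, ℂ)) :
    eLpNorm (fderiv ℝ f) 2 volume ≤ ENNReal.ofReal (gradNorm f) := by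
  have hm : MemLp (fun x => √(gradSq f x)) 2 volume :=
    (memLp_two_iff_integrable_sq (continuous_gradSq f).sqrt.aestronglyMeasurable).2
      (integrable_sqrt_gradSq_sq f)
  refine (eLpNorm_mono_real (norm_fderiv_le f)).trans ?_
  rw [hm.eLpNorm_eq_integral_rpow_norm two_ne_zero ENNReal.ofNat_ne_top]
  refine ENNReal.ofReal_le_ofReal (le_of_eq ?_)
  rw [← sqrt_integral_sqrt_gradSq_sq, Real.sqrt_eq_rpow (∫ x, _)]
  simp

/-- Uniform weighted resolvent estimate
`‖R⁻(τ)ψ‖_{L^{2n/(n−2)}} ≤ C ‖⟨x⟩ψ‖_{L²}` over the open lower half-plane. -/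
theorem resolvent_weighted_L2_to_Lp (n : ℕ) (hn : 3 ≤ n) :
    ∃ C : ℝ, 0 < C ∧ ∀ τ : ℂ, τ.im < 0 →
      ∀ ψ : SchwartzMap (EuclideanSpace ℝ (Fin n)) ℂ,
        eLpNorm (𝓕⁻ (fun ξ : EuclideanSpace ℝ (Fin n) =>
            (4 * (π : ℂ) ^ 2 * (‖ξ‖ : ℂ) ^ 2 - τ)⁻¹ * 𝓕 (⇑ψ) ξ))
          (ENNReal.ofReal (2 * (n : ℝ) / ((n : ℝ) - 2))) volume
        ≤ ENNReal.ofReal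
            (C * Real.sqrt (∫ x : EuclideanSpace ℝ (Fin n),
              (1 + ‖x‖ ^ 2) * ‖ψ x‖ ^ 2)) := by
  set K := eLpNormLESNormFDerivOfEqInnerConst (volume : Measure (EuclideanSpace ℝ (Fin n))) 2
  have h3 : (3 : ℝ) ≤ n := by exact_mod_cast hn
  have h2 : (0 : ℝ) < n - 2 := by linarith
  refine ⟨(K + 1) * 100, by positivity, fun τ hτ ψ => ?_⟩
  obtain ⟨u, hu, heq⟩ := exists_schwartz_resolvent hτ ψ
  obtain ⟨w, hwu, hw⟩ := exists_norm_eq_gradNorm_le (by simpa using hn) hτ heq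
  have hS := eLpNorm_le_eLpNorm_fderiv_of_memLp (w := w) (p := 2)
    (p' := (2 * (n : ℝ) / ((n : ℝ) - 2)).toNNReal) (w.smooth 1) one_le_two (w.memLp _)
    (by simp; omega) (by
      rw [Real.coe_toNNReal _ (by positivity), finrank_euclideanSpace_fin]
      push_cast
      field_simp)
  rw [← hu, ← eLpNorm_congr_norm_ae (Filter.Eventually.of_forall hwu), ENNReal.ofReal]
  refine hS.trans ?_
  calc (K : ℝ≥0∞) * eLpNorm (fderiv ℝ w) 2 volume
      ≤ ENNReal.ofReal K * ENNReal.ofReal (gradNorm w) := by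
        rw [ENNReal.ofReal_coe_nnreal]
        exact mul_le_mul_right (eLpNorm_fderiv_le w) _
    _ = ENNReal.ofReal (K * gradNorm w) := (ENNReal.ofReal_mul K.coe_nonneg).symm
    _ ≤ _ := by
        rw [mul_assoc]
        refine ENNReal.ofReal_le_ofReal (mul_le_mul (by simp) hw (gradNorm_nonneg w) ?_)
        positivity
end
end

section
/- Let n ≥ 3. There is a constant C depending only on n such that for all Schwartz functions f and ψ on ℝⁿ, Σ_{k ∈ ℤ} | ∫_{ℝⁿ} e^{2πik|ξ|²} f̂(ξ) · conj(ψ̂(ξ)) dξ |² ≤ C ‖f‖²_{L²(ℝⁿ)} ‖⟨x⟩ψ‖²_{L²(ℝⁿ)}. (This is a discrete-time Kato smoothing bound: the sampled inner products ⟨e^{−2πikΔ}f, ψ⟩ are square-summable over k ∈ ℤ.) -/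
open MeasureTheory Complex FourierTransform
open scoped ENNReal Real

noncomputable section

open scoped SchwartzMap

/-- Polar coordinates for the Lebesgue integral of a nonnegative function. -/
theorem lintegral_eq_lintegral_sphere_Ioi {E : Type*} [NormedAddCommGroup E] [NormedSpace ℝ E]
    [FiniteDimensional ℝ E] [Nontrivial E] [MeasurableSpace E] [BorelSpace E] (μ : Measure E)
    [μ.IsAddHaarMeasure] {F : E → ℝ≥0∞} (hF : Measurable F) :
    ∫⁻ x, F x ∂μ = ∫⁻ ω : Metric.sphere (0 : E) 1, (∫⁻ r in Set.Ioi (0 : ℝ),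
      ENNReal.ofReal (r ^ (Module.finrank ℝ E - 1)) * F (r • (ω : E))) ∂μ.toSphere := by
  have hsphere := μ.measurePreserving_homeomorphUnitSphereProd.lintegral_comp_emb
    (Homeomorph.measurableEmbedding _) (fun p ↦ F (p.2.1 • (p.1 : E)))
  have hmeas : Measurable fun p : Metric.sphere (0 : E) 1 × Set.Ioi (0 : ℝ) ↦
      F (p.2.1 • (p.1 : E)) :=
    hF.comp (by fun_prop)
  calc ∫⁻ x, F x ∂μ = ∫⁻ x : ({(0)}ᶜ : Set E), F x.1 ∂(μ.comap (↑)) := by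
        rw [lintegral_subtype_comap (measurableSet_singleton _).compl,
          restrict_compl_singleton]
    _ = ∫⁻ p, F (p.2.1 • (p.1 : E)) ∂μ.toSphere.prod (.volumeIoiPow (Module.finrank ℝ E - 1)) := by
        rw [← hsphere]
        refine lintegral_congr fun x ↦ ?_
        have hx : ‖(x : E)‖ ≠ 0 := norm_ne_zero_iff.2 x.2
        simp [homeomorphUnitSphereProd, smul_smul, hx]
    _ = _ := by
        rw [lintegral_prod _ hmeas.aemeasurable]
        refine lintegral_congr fun ω ↦ ?_
        have hω : Measurable fun r : Set.Ioi (0 : ℝ) ↦ F (r.1 • (ω : E)) :=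
          hmeas.comp measurable_prodMk_left
        rw [Measure.volumeIoiPow, lintegral_withDensity_eq_lintegral_mul _ (by fun_prop) hω]
        exact lintegral_subtype_comap measurableSet_Ioi
          (fun r : ℝ ↦ ENNReal.ofReal (r ^ (Module.finrank ℝ E - 1)) * F (r • (ω : E)))

/-- A local trace estimate on a ray: the weight `r ^ (m + 1)` is controlled by the
`H¹` density with weight `t ^ (m + 2)` over the unit interval in the variable `t ^ 2`. -/
theorem pow_mul_norm_sq_le_lintegral (m : ℕ) {u u' : ℝ → ℂ}
    (hu : ∀ t, HasDerivAt u (u' t) t) (hu' : Continuous u') {r : ℝ} (hr : 0 ≤ r) :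
    ENNReal.ofReal (r ^ (m + 1) * ‖u r‖ ^ 2) ≤
      ∫⁻ t in Set.Icc r (√(r ^ 2 + 1)),
        ENNReal.ofReal (t ^ (m + 2) * (2 * ‖u t‖ ^ 2 + ‖u' t‖ ^ 2)) := by
  have huc : Continuous u := continuous_iff_continuousAt.2 fun t ↦ (hu t).continuousAt
  set R := √(r ^ 2 + 1) with hR
  have hR2 : R ^ 2 = r ^ 2 + 1 := Real.sq_sqrt (by positivity)
  have hrR : r ≤ R := Real.le_sqrt_of_sq_le (by linarith)
  set w' : ℝ → ℝ := fun t ↦ (-(2 * t)) * (t ^ (m + 1) * ‖u t‖ ^ 2) +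
    (r ^ 2 + 1 - t ^ 2) * (((m + 1 : ℕ) * t ^ m) * ‖u t‖ ^ 2 +
      t ^ (m + 1) * (2 * inner ℝ (u t) (u' t))) with hw'
  have hw : ∀ t, HasDerivAt
      (fun t ↦ (r ^ 2 + 1 - t ^ 2) * (t ^ (m + 1) * ‖u t‖ ^ 2)) (w' t) t := fun t ↦ by
    have h1 : HasDerivAt (fun t : ℝ ↦ r ^ 2 + 1 - t ^ 2) (-(2 * t)) t := by
      simpa using (hasDerivAt_pow 2 t).const_sub (r ^ 2 + 1)
    have h2 : HasDerivAt (fun t : ℝ ↦ t ^ (m + 1)) ((m + 1 : ℕ) * t ^ m) t := by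
      simpa using hasDerivAt_pow (m + 1) t
    exact h1.mul (h2.mul (hu t).norm_sq)
  have hw'c : Continuous w' := by fun_prop
  have hgc : Continuous fun t ↦ t ^ (m + 2) * (2 * ‖u t‖ ^ 2 + ‖u' t‖ ^ 2) := by fun_prop
  have hftc := intervalIntegral.integral_eq_sub_of_hasDerivAt (a := r) (b := R)
    (fun t _ ↦ hw t) (hw'c.intervalIntegrable _ _)
  have hle : r ^ (m + 1) * ‖u r‖ ^ 2 ≤
      ∫ t in r..R, t ^ (m + 2) * (2 * ‖u t‖ ^ 2 + ‖u' t‖ ^ 2) := by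
    have : r ^ (m + 1) * ‖u r‖ ^ 2 = ∫ t in r..R, -w' t := by
      rw [intervalIntegral.integral_neg, hftc, hR2]; ring
    rw [this]
    refine intervalIntegral.integral_mono_on hrR (hw'c.neg.intervalIntegrable _ _)
      (hgc.intervalIntegrable _ _) fun t ht ↦ ?_
    have ht0 : 0 ≤ t := hr.trans ht.1
    have hc0 : 0 ≤ r ^ 2 + 1 - t ^ 2 := by
      have := pow_le_pow_left₀ ht0 ht.2 2; linarith
    have hc1 : r ^ 2 + 1 - t ^ 2 ≤ 1 := by
      have := pow_le_pow_left₀ hr ht.1 2; linarith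
    have hin : -(‖u t‖ * ‖u' t‖) ≤ inner ℝ (u t) (u' t) :=
      (abs_le.1 (abs_real_inner_le_norm _ _)).1
    have hsq : -(t ^ 2 * ‖u' t‖ ^ 2) ≤
        (m + 1) * ‖u t‖ ^ 2 + t * (2 * inner ℝ (u t) (u' t)) := by
      have h1 : 0 ≤ (m : ℝ) * ‖u t‖ ^ 2 := by positivity
      nlinarith [sq_nonneg (‖u t‖ - t * ‖u' t‖), mul_le_mul_of_nonneg_left hin ht0]
    have hb : 0 ≤ t ^ 2 * ‖u' t‖ ^ 2 := by positivity
    have hkey : -(t ^ 2 * ‖u' t‖ ^ 2) ≤ (r ^ 2 + 1 - t ^ 2) *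
        ((m + 1) * ‖u t‖ ^ 2 + t * (2 * inner ℝ (u t) (u' t))) := by
      nlinarith [mul_le_mul_of_nonneg_left hsq hc0]
    have := mul_le_mul_of_nonneg_left hkey (pow_nonneg ht0 m)
    simp only [hw']
    push_cast
    ring_nf at this ⊢
    linarith
  refine (ENNReal.ofReal_le_ofReal hle).trans_eq ?_
  rw [intervalIntegral.integral_of_le hrR, ← integral_Icc_eq_integral_Ioc,
    ofReal_integral_eq_lintegral_ofReal (hgc.integrableOn_Icc)]
  filter_upwards [ae_restrict_mem measurableSet_Icc] with t ht
  have ht0 : 0 ≤ t := hr.trans ht.1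
  positivity

/-- Integrating a `1`-periodic function of `r ^ 2` against `r dr` over a unit interval
in the variable `r ^ 2`. -/
theorem lintegral_indicator_sq_mul_le {Q : ℝ → ℝ} (hQ : Continuous Q) (hQ0 : ∀ s, 0 ≤ Q s)
    (hper : Function.Periodic Q 1) (t : ℝ) :
    ∫⁻ r in Set.Ioi (0 : ℝ), (Set.Icc (t ^ 2 - 1) (t ^ 2)).indicator
        (fun s ↦ ENNReal.ofReal (Q s)) (r ^ 2) * ENNReal.ofReal (2 * r) ≤
      ENNReal.ofReal (∫ s in (0 : ℝ)..1, Q s) := by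
  have hcv := lintegral_image_eq_lintegral_abs_deriv_mul (s := Set.Ioi (0 : ℝ))
    (f := fun r ↦ r ^ 2) (f' := fun r ↦ 2 * r) measurableSet_Ioi
    (fun x _ ↦ by simpa using (hasDerivAt_pow 2 x).hasDerivWithinAt)
    (fun x hx y hy h ↦ (pow_left_inj₀ (le_of_lt hx) (le_of_lt hy) two_ne_zero).1 h)
    ((Set.Icc (t ^ 2 - 1) (t ^ 2)).indicator (fun s ↦ ENNReal.ofReal (Q s)))
  calc _ = ∫⁻ r in Set.Ioi (0 : ℝ), ENNReal.ofReal |2 * r| *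
        (Set.Icc (t ^ 2 - 1) (t ^ 2)).indicator (fun s ↦ ENNReal.ofReal (Q s)) (r ^ 2) := by
        refine setLIntegral_congr_fun measurableSet_Ioi fun r hr ↦ ?_
        have hr' : (0 : ℝ) < r := hr
        rw [abs_of_pos (mul_pos two_pos hr'), mul_comm]
    _ ≤ ∫⁻ s, (Set.Icc (t ^ 2 - 1) (t ^ 2)).indicator (fun s ↦ ENNReal.ofReal (Q s)) s := by
        rw [← hcv]
        exact setLIntegral_le_lintegral _ _
    _ = _ := by
        rw [lintegral_indicator measurableSet_Icc,
          ← ofReal_integral_eq_lintegral_ofReal hQ.integrableOn_Icc (.of_forall hQ0),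
          integral_Icc_eq_integral_Ioc, ← intervalIntegral.integral_of_le (by linarith)]
        have := hper.intervalIntegral_add_eq (t ^ 2 - 1) 0
        simp only [sub_add_cancel, zero_add] at this
        rw [this]

/-- A one-dimensional weighted trace inequality, averaged against a periodic function. -/
theorem lintegral_periodic_mul_norm_sq_le (m : ℕ) {u u' : ℝ → ℂ}
    (hu : ∀ t, HasDerivAt u (u' t) t) (hu' : Continuous u') {Q : ℝ → ℝ} (hQ : Continuous Q)
    (hQ0 : ∀ s, 0 ≤ Q s) (hper : Function.Periodic Q 1) :
    ∫⁻ r in Set.Ioi (0 : ℝ), ENNReal.ofReal (r ^ (m + 2)) *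
        ENNReal.ofReal (2 * (Q (r ^ 2) * ‖u r‖ ^ 2)) ≤
      ENNReal.ofReal (∫ s in (0 : ℝ)..1, Q s) * ∫⁻ t in Set.Ioi (0 : ℝ),
        ENNReal.ofReal (t ^ (m + 2)) * ENNReal.ofReal (2 * ‖u t‖ ^ 2 + ‖u' t‖ ^ 2) := by
  have huc : Continuous u := continuous_iff_continuousAt.2 fun t ↦ (hu t).continuousAt
  set D : ℝ → ℝ≥0∞ := fun t ↦ ENNReal.ofReal (t ^ (m + 2) * (2 * ‖u t‖ ^ 2 + ‖u' t‖ ^ 2))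
  have hDm : Measurable D := by fun_prop
  set K : ℝ → ℝ → ℝ≥0∞ := fun r t ↦ (Set.Icc (t ^ 2 - 1) (t ^ 2)).indicator
        (fun s ↦ ENNReal.ofReal (Q s)) (r ^ 2) * ENNReal.ofReal (2 * r) with hK
  have hset : MeasurableSet {p : ℝ × ℝ | p.1 ^ 2 ∈ Set.Icc (p.2 ^ 2 - 1) (p.2 ^ 2)} :=
    (measurableSet_le (f := fun p : ℝ × ℝ ↦ p.2 ^ 2 - 1) (g := fun p ↦ p.1 ^ 2)
      (by fun_prop) (by fun_prop)).inter
      (measurableSet_le (f := fun p : ℝ × ℝ ↦ p.1 ^ 2) (g := fun p ↦ p.2 ^ 2)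
        (by fun_prop) (by fun_prop))
  have hKm : Measurable (Function.uncurry K) := by
    refine Measurable.mul ?_ (by fun_prop)
    exact (Measurable.indicator (f := fun p : ℝ × ℝ ↦ ENNReal.ofReal (Q (p.1 ^ 2)))
      (by fun_prop) hset)
  have hKD : Measurable (Function.uncurry fun r t ↦ K r t * D t) :=
    hKm.mul (hDm.comp measurable_snd)
  have hKle : ∀ t, ∫⁻ r in Set.Ioi (0 : ℝ), K r t ≤ ENNReal.ofReal (∫ s in (0 : ℝ)..1, Q s) :=
    lintegral_indicator_sq_mul_le hQ hQ0 hper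
  have hpoint : ∀ r ∈ Set.Ioi (0 : ℝ), ENNReal.ofReal (r ^ (m + 2)) *
        ENNReal.ofReal (2 * (Q (r ^ 2) * ‖u r‖ ^ 2)) ≤ ∫⁻ t in Set.Ioi (0 : ℝ), K r t * D t := by
    intro r hr
    have hr' : (0 : ℝ) < r := hr
    have hQr := hQ0 (r ^ 2)
    calc _ = ENNReal.ofReal (Q (r ^ 2)) * ENNReal.ofReal (2 * r) *
            ENNReal.ofReal (r ^ (m + 1) * ‖u r‖ ^ 2) := by
          rw [← ENNReal.ofReal_mul (by positivity), ← ENNReal.ofReal_mul hQr,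
            ← ENNReal.ofReal_mul (by positivity)]
          congr 1; ring
      _ ≤ ENNReal.ofReal (Q (r ^ 2)) * ENNReal.ofReal (2 * r) *
            ∫⁻ t in Set.Icc r (√(r ^ 2 + 1)), D t := by
          gcongr
          exact pow_mul_norm_sq_le_lintegral m hu hu' hr'.le
      _ = ∫⁻ t in Set.Icc r (√(r ^ 2 + 1)), K r t * D t := by
          rw [← lintegral_const_mul _ hDm]
          refine setLIntegral_congr_fun measurableSet_Icc fun t ht ↦ ?_
          have ht0 : 0 ≤ t := hr'.le.trans ht.1
          have hmem : r ^ 2 ∈ Set.Icc (t ^ 2 - 1) (t ^ 2) := by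
            refine ⟨?_, pow_le_pow_left₀ hr'.le ht.1 2⟩
            have := (Real.le_sqrt ht0 (by positivity)).1 ht.2
            linarith
          simp only [hK, Set.indicator_of_mem hmem]
      _ ≤ _ := lintegral_mono_set fun t ht ↦ hr'.trans_le ht.1
  have hswap : ∫⁻ r in Set.Ioi (0 : ℝ), ∫⁻ t in Set.Ioi (0 : ℝ), K r t * D t =
      ∫⁻ t in Set.Ioi (0 : ℝ), ∫⁻ r in Set.Ioi (0 : ℝ), K r t * D t := by
    clear_value K D
    exact lintegral_lintegral_swap hKD.aemeasurable
  calc _ ≤ ∫⁻ r in Set.Ioi (0 : ℝ), ∫⁻ t in Set.Ioi (0 : ℝ), K r t * D t :=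
        setLIntegral_mono' measurableSet_Ioi hpoint
    _ = ∫⁻ t in Set.Ioi (0 : ℝ), ∫⁻ r in Set.Ioi (0 : ℝ), K r t * D t := hswap
    _ ≤ ∫⁻ t in Set.Ioi (0 : ℝ), ENNReal.ofReal (∫ s in (0 : ℝ)..1, Q s) * D t := by
        refine lintegral_mono fun t ↦ ?_
        have hKt : Measurable fun r ↦ K r t := hKm.of_uncurry_right
        rw [lintegral_mul_const _ hKt]
        gcongr
        exact hKle t
    _ = _ := by
        rw [lintegral_const_mul _ hDm]
        congr 1
        refine setLIntegral_congr_fun measurableSet_Ioi fun t ht ↦ ?_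
        exact ENNReal.ofReal_mul (pow_nonneg (le_of_lt ht) _)

/-- Integrating a periodic function of `‖ξ‖ ^ 2` against the square of a `C¹` function in
dimension at least three only sees the mean of the periodic function. -/
theorem lintegral_periodic_norm_sq_mul_le {E : Type*} [NormedAddCommGroup E] [NormedSpace ℝ E]
    [FiniteDimensional ℝ E] [MeasurableSpace E] [BorelSpace E] (μ : Measure E)
    [μ.IsAddHaarMeasure] (hdim : 3 ≤ Module.finrank ℝ E) {φ : E → ℂ} (hφ : ContDiff ℝ 1 φ)
    {Q : ℝ → ℝ} (hQ : Continuous Q) (hQ0 : ∀ s, 0 ≤ Q s) (hper : Function.Periodic Q 1) :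
    ∫⁻ ξ, ENNReal.ofReal (2 * (Q (‖ξ‖ ^ 2) * ‖φ ξ‖ ^ 2)) ∂μ ≤
      ENNReal.ofReal (∫ s in (0 : ℝ)..1, Q s) *
        ∫⁻ ξ, ENNReal.ofReal (2 * ‖φ ξ‖ ^ 2 + ‖fderiv ℝ φ ξ‖ ^ 2) ∂μ := by
  obtain ⟨m, hm⟩ := Nat.exists_eq_add_of_le' hdim
  have : Nontrivial E := Module.nontrivial_of_finrank_pos (R := ℝ) (by omega)
  have hφc : Continuous φ := hφ.continuous
  have hφ' : Continuous (fderiv ℝ φ) := hφ.continuous_fderiv one_ne_zero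
  have hm' : Module.finrank ℝ E - 1 = m + 2 := by omega
  have hmeas : Measurable fun ξ ↦ ENNReal.ofReal (2 * ‖φ ξ‖ ^ 2 + ‖fderiv ℝ φ ξ‖ ^ 2) :=
    ENNReal.measurable_ofReal.comp (Continuous.measurable (by fun_prop))
  have hmeas' : Measurable fun ξ ↦ ENNReal.ofReal (2 * (Q (‖ξ‖ ^ 2) * ‖φ ξ‖ ^ 2)) :=
    ENNReal.measurable_ofReal.comp (Continuous.measurable (by fun_prop))
  rw [lintegral_eq_lintegral_sphere_Ioi μ hmeas', lintegral_eq_lintegral_sphere_Ioi μ hmeas, hm',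
    ← lintegral_const_mul' _ _ ENNReal.ofReal_ne_top]
  refine lintegral_mono fun ω ↦ ?_
  have hω : ‖(ω : E)‖ = 1 := by simp
  have hu : ∀ t : ℝ, HasDerivAt (fun r : ℝ ↦ φ (r • (ω : E)))
      (fderiv ℝ φ (t • (ω : E)) ω) t := fun t ↦ by
    have h1 : HasDerivAt (fun r : ℝ ↦ r • (ω : E)) (ω : E) t := by
      simpa using (hasDerivAt_id t).smul_const (ω : E)
    exact ((hφ.differentiable one_ne_zero) _).hasFDerivAt.comp_hasDerivAt t h1
  have hray := lintegral_periodic_mul_norm_sq_le m hu (by fun_prop) hQ hQ0 hper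
  refine (le_of_eq ?_).trans (hray.trans ?_)
  · refine setLIntegral_congr_fun measurableSet_Ioi fun r _ ↦ ?_
    simp [norm_smul, hω]
  · gcongr with t
    exact (ContinuousLinearMap.le_opNorm _ _).trans_eq (by rw [hω, mul_one])

/-- The operator norm of a linear form is bounded by its Hilbert–Schmidt norm. -/
theorem norm_sq_le_sum_norm_sq_single {n : ℕ} (A : EuclideanSpace ℝ (Fin n) →L[ℝ] ℂ) :
    ‖A‖ ^ 2 ≤ ∑ i, ‖A (EuclideanSpace.single i 1)‖ ^ 2 := by
  have hS : 0 ≤ ∑ i, ‖A (EuclideanSpace.single i 1)‖ ^ 2 := by positivity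
  refine (Real.le_sqrt (norm_nonneg _) hS).1 (A.opNorm_le_bound (Real.sqrt_nonneg _) fun x ↦ ?_)
  have hx : A x = ∑ i, (x i : ℝ) • A (EuclideanSpace.single i 1) := by
    conv_lhs => rw [← (EuclideanSpace.basisFun (Fin n) ℝ).sum_repr x]
    simp [map_sum]
  rw [hx, EuclideanSpace.norm_eq, mul_comm]
  calc _ ≤ ∑ i, ‖x i‖ * ‖A (EuclideanSpace.single i 1)‖ :=
        (norm_sum_le _ _).trans_eq (by simp)
    _ ≤ _ := Real.sum_mul_le_sqrt_mul_sqrt _ _ _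

open SchwartzMap LineDeriv in
/-- Plancherel's theorem bounds the `H¹` norm of the Fourier transform by a weighted `L²` norm. -/
theorem integral_norm_sq_add_fderiv_fourier_le {n : ℕ}
    (ψ : SchwartzMap (EuclideanSpace ℝ (Fin n)) ℂ) :
    ∫ ξ, (2 * ‖𝓕 ψ ξ‖ ^ 2 + ‖fderiv ℝ (𝓕 ψ : 𝓢(EuclideanSpace ℝ (Fin n), ℂ)) ξ‖ ^ 2) ≤
      4 * π ^ 2 * ∫ x, (1 + ‖x‖ ^ 2) * ‖ψ x‖ ^ 2 := by
  have hsq_int : ∀ g : SchwartzMap (EuclideanSpace ℝ (Fin n)) ℂ, Integrable fun x ↦ ‖g x‖ ^ 2 :=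
    fun g ↦ (g.memLp 2).integrable_norm_pow two_ne_zero
  have hdint : Integrable fun ξ ↦ ‖fderiv ℝ (𝓕 ψ : 𝓢(EuclideanSpace ℝ (Fin n), ℂ)) ξ‖ ^ 2 :=
    ((fderivCLM ℝ _ _ (𝓕 ψ)).memLp 2).integrable_norm_pow two_ne_zero
  set e : Fin n → EuclideanSpace ℝ (Fin n) := fun i ↦ EuclideanSpace.single i 1 with he
  have hsum : ∀ x, ∑ i, (2 * π) ^ 2 * ‖smulLeftCLM ℂ (inner ℝ · (e i)) ψ x‖ ^ 2 =
      (2 * π) ^ 2 * (‖x‖ ^ 2 * ‖ψ x‖ ^ 2) := fun x ↦ by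
    rw [← Finset.mul_sum, EuclideanSpace.norm_sq_eq, Finset.sum_mul]
    congr 1
    refine Finset.sum_congr rfl fun i _ ↦ ?_
    rw [smulLeftCLM_apply_apply (by fun_prop), norm_smul, mul_pow]
    simp [he, EuclideanSpace.inner_single_right]
  set d : Fin n → SchwartzMap (EuclideanSpace ℝ (Fin n)) ℂ := fun i ↦ ∂_{e i} (𝓕 ψ) with hd
  have hderiv : ∀ i, ∫ ξ, ‖d i ξ‖ ^ 2 =
      ∫ x, (2 * π) ^ 2 * ‖smulLeftCLM ℂ (inner ℝ · (e i)) ψ x‖ ^ 2 := fun i ↦ by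
    simp only [hd]
    rw [lineDerivOp_fourier_eq, integral_norm_sq_fourier]
    refine integral_congr_ae (.of_forall fun x ↦ ?_)
    simp [mul_pow, abs_of_pos Real.pi_pos]
  have hfd : ∀ ξ, ‖fderiv ℝ (𝓕 ψ : 𝓢(EuclideanSpace ℝ (Fin n), ℂ)) ξ‖ ^ 2 ≤
      ∑ i, ‖d i ξ‖ ^ 2 := fun ξ ↦
    norm_sq_le_sum_norm_sq_single _
  have hi : ∀ i ∈ (Finset.univ : Finset (Fin n)), Integrable fun x ↦
      (2 * π) ^ 2 * ‖smulLeftCLM ℂ (inner ℝ · (e i)) ψ x‖ ^ 2 := fun i _ ↦ (hsq_int _).const_mul _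
  have hw : Integrable fun x ↦ (2 * π) ^ 2 * (‖x‖ ^ 2 * ‖ψ x‖ ^ 2) := by
    simpa only [hsum] using integrable_finsetSum _ hi
  have hpi : (1 : ℝ) ≤ 2 * π ^ 2 := by nlinarith [Real.pi_gt_three]
  have hgrad : ∫ ξ, ‖fderiv ℝ (𝓕 ψ : 𝓢(EuclideanSpace ℝ (Fin n), ℂ)) ξ‖ ^ 2 ≤
      ∫ x, (2 * π) ^ 2 * (‖x‖ ^ 2 * ‖ψ x‖ ^ 2) := by
    refine (integral_mono hdint (integrable_finsetSum _ fun i _ ↦ hsq_int (d i)) hfd).trans_eq ?_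
    rw [integral_finsetSum _ fun i _ ↦ hsq_int (d i)]
    simp_rw [hderiv]
    rw [← integral_finsetSum _ hi]
    simp_rw [hsum]
  rw [integral_add ((hsq_int _).const_mul 2) hdint, integral_const_mul, integral_norm_sq_fourier]
  grw [hgrad]
  rw [← integral_const_mul, ← integral_const_mul, ← integral_add ((hsq_int _).const_mul 2) hw]
  have hw' : Integrable fun x ↦ 4 * π ^ 2 * ((1 + ‖x‖ ^ 2) * ‖ψ x‖ ^ 2) :=
    (((hsq_int ψ).const_mul (4 * π ^ 2)).add hw).congr
      (.of_forall fun x ↦ by simp only [Pi.add_apply]; ring)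
  refine integral_mono (((hsq_int _).const_mul 2).add hw) hw' fun x ↦ ?_
  have := mul_le_mul_of_nonneg_right hpi (sq_nonneg ‖ψ x‖)
  simp only
  nlinarith

/-- Parseval's identity for trigonometric polynomials. -/
theorem integral_norm_sq_trigPoly (S : Finset ℤ) (c : ℤ → ℂ) :
    ∫ s in (0 : ℝ)..1, ‖∑ k ∈ S, c k * Complex.exp (2 * π * I * k * (s : ℂ))‖ ^ 2 =
      ∑ k ∈ S, ‖c k‖ ^ 2 := by
  have horth : ∀ j k : ℤ, ∫ s in (0 : ℝ)..1, Complex.exp (2 * π * I * (k - j : ℂ) * (s : ℂ)) =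
      if j = k then 1 else 0 := fun j k ↦ by
    split_ifs with h
    · simp [h]
    · have hkj : (k - j : ℂ) ≠ 0 := by
        rw [sub_ne_zero]; exact_mod_cast Ne.symm h
      rw [integral_exp_mul_complex (mul_ne_zero two_pi_I_ne_zero hkj)]
      have : Complex.exp (2 * π * I * (k - j : ℂ)) = 1 :=
        Complex.exp_eq_one_iff.2 ⟨k - j, by push_cast; ring⟩
      simp [this]
  have hexp : ∀ s : ℝ,
      ((‖∑ k ∈ S, c k * Complex.exp (2 * π * I * k * (s : ℂ))‖ ^ 2 : ℝ) : ℂ) =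
        ∑ j ∈ S, ∑ k ∈ S, starRingEnd ℂ (c j) * c k *
          Complex.exp (2 * π * I * (k - j : ℂ) * (s : ℂ)) := fun s ↦ by
    rw [ofReal_pow, ← Complex.conj_mul', map_sum, Finset.sum_mul_sum]
    refine Finset.sum_congr rfl fun j _ ↦ Finset.sum_congr rfl fun k _ ↦ ?_
    rw [map_mul, ← Complex.exp_conj, mul_mul_mul_comm, ← Complex.exp_add]
    congr 2
    simp only [map_mul, conj_I, conj_ofReal, map_ofNat, map_intCast]
    ring
  apply Complex.ofReal_injective
  rw [← intervalIntegral.integral_ofReal]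
  simp_rw [hexp]
  rw [intervalIntegral.integral_finsetSum fun j _ ↦
    Continuous.intervalIntegrable (by fun_prop) _ _]
  rw [ofReal_sum]
  refine Finset.sum_congr rfl fun j hj ↦ ?_
  rw [intervalIntegral.integral_finsetSum fun j _ ↦
    Continuous.intervalIntegrable (by fun_prop) _ _]
  simp_rw [intervalIntegral.integral_const_mul, horth]
  simp [hj, Complex.conj_mul']

/-- The `H¹` multiplier bound for trigonometric polynomials in `‖ξ‖ ^ 2`. -/
theorem integral_norm_sq_trigPoly_mul_fourier_le {n : ℕ} (hn : 3 ≤ n)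
    (ψ : SchwartzMap (EuclideanSpace ℝ (Fin n)) ℂ) (S : Finset ℤ) (c : ℤ → ℂ) :
    ∫ ξ, ‖∑ k ∈ S, c k * Complex.exp (2 * π * I * k * ((‖ξ‖ ^ 2 : ℝ) : ℂ))‖ ^ 2 * ‖𝓕 ψ ξ‖ ^ 2 ≤
      2 * π ^ 2 * (∫ x, (1 + ‖x‖ ^ 2) * ‖ψ x‖ ^ 2) * ∑ k ∈ S, ‖c k‖ ^ 2 := by
  set Q : ℝ → ℝ := fun s ↦ ‖∑ k ∈ S, c k * Complex.exp (2 * π * I * k * (s : ℂ))‖ ^ 2 with hQdef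
  have hQ : Continuous Q := by fun_prop
  have hQ0 : ∀ s, 0 ≤ Q s := fun s ↦ sq_nonneg _
  have hper : Function.Periodic Q 1 := fun s ↦ by
    have : ∀ k : ℤ, Complex.exp (2 * π * I * k * ((s + 1 : ℝ) : ℂ)) =
        Complex.exp (2 * π * I * k * (s : ℂ)) := fun k ↦ by
      rw [Complex.exp_eq_exp_iff_exists_int]
      exact ⟨k, by push_cast; ring⟩
    simp only [hQdef, this]
  have hmean : ∫ s in (0 : ℝ)..1, Q s = ∑ k ∈ S, ‖c k‖ ^ 2 := integral_norm_sq_trigPoly S c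
  have hφ : ContDiff ℝ 1 (𝓕 ψ : 𝓢(EuclideanSpace ℝ (Fin n), ℂ)) := (𝓕 ψ).smooth 1
  have hH := lintegral_periodic_norm_sq_mul_le volume (by simpa using hn) hφ hQ hQ0 hper
  have hgint : Integrable fun ξ ↦ 2 * ‖𝓕 ψ ξ‖ ^ 2 +
      ‖fderiv ℝ (𝓕 ψ : 𝓢(EuclideanSpace ℝ (Fin n), ℂ)) ξ‖ ^ 2 :=
    ((((𝓕 ψ).memLp 2).integrable_norm_pow two_ne_zero).const_mul 2).add
      (((SchwartzMap.fderivCLM ℝ _ _ (𝓕 ψ)).memLp 2).integrable_norm_pow two_ne_zero)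
  have hS : 0 ≤ ∑ k ∈ S, ‖c k‖ ^ 2 := by positivity
  rw [hmean, ← ofReal_integral_eq_lintegral_ofReal hgint (.of_forall fun ξ ↦ by positivity),
    ← ENNReal.ofReal_mul hS] at hH
  have hcont : Continuous fun ξ ↦ 2 * (Q (‖ξ‖ ^ 2) * ‖𝓕 ψ ξ‖ ^ 2) := by
    have := hφ.continuous
    fun_prop
  have hreal : ∫ ξ, 2 * (Q (‖ξ‖ ^ 2) * ‖𝓕 ψ ξ‖ ^ 2) ≤
      (∑ k ∈ S, ‖c k‖ ^ 2) * ∫ ξ, (2 * ‖𝓕 ψ ξ‖ ^ 2 +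
        ‖fderiv ℝ (𝓕 ψ : 𝓢(EuclideanSpace ℝ (Fin n), ℂ)) ξ‖ ^ 2) := by
    rw [integral_eq_lintegral_of_nonneg_ae
      (.of_forall fun ξ ↦ mul_nonneg two_pos.le (mul_nonneg (hQ0 _) (sq_nonneg _)))
      hcont.aestronglyMeasurable]
    exact ENNReal.toReal_le_of_le_ofReal
      (mul_nonneg hS (integral_nonneg fun ξ ↦ by positivity)) hH
  rw [integral_const_mul] at hreal
  have := mul_le_mul_of_nonneg_left (integral_norm_sq_add_fderiv_fourier_le ψ) hS
  simp only [hQdef] at hreal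
  linarith

/-- The finite form of the sampled smoothing estimate, obtained by duality. -/
theorem sum_norm_sq_integral_exp_mul_le {n : ℕ} (hn : 3 ≤ n)
    (f ψ : SchwartzMap (EuclideanSpace ℝ (Fin n)) ℂ) (S : Finset ℤ) :
    ∑ k ∈ S, ‖∫ ξ : EuclideanSpace ℝ (Fin n),
        Complex.exp (2 * (π : ℂ) * I * (k : ℂ) * ((‖ξ‖ ^ 2 : ℝ) : ℂ)) *
          𝓕 f ξ * (starRingEnd ℂ) (𝓕 ψ ξ)‖ ^ 2 ≤
      2 * π ^ 2 * (∫ x, ‖f x‖ ^ 2) * ∫ x, (1 + ‖x‖ ^ 2) * ‖ψ x‖ ^ 2 := by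
  set e : ℤ → EuclideanSpace ℝ (Fin n) → ℂ := fun k ξ ↦
    Complex.exp (2 * (π : ℂ) * I * (k : ℂ) * ((‖ξ‖ ^ 2 : ℝ) : ℂ)) with he
  set a : ℤ → ℂ := fun k ↦ ∫ ξ, e k ξ * 𝓕 f ξ * (starRingEnd ℂ) (𝓕 ψ ξ) with ha
  set P : EuclideanSpace ℝ (Fin n) → ℂ := fun ξ ↦ ∑ k ∈ S, starRingEnd ℂ (a k) * e k ξ with hP
  set A := ∫ x, ‖f x‖ ^ 2
  set N := 2 * π ^ 2 * ∫ x, (1 + ‖x‖ ^ 2) * ‖ψ x‖ ^ 2 with hN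
  set T := ∑ k ∈ S, ‖a k‖ ^ 2 with hT
  have hN0 : 0 ≤ N := mul_nonneg (by positivity) (integral_nonneg fun x ↦ by positivity)
  have hfc : Continuous (𝓕 f : 𝓢(EuclideanSpace ℝ (Fin n), ℂ)) := (𝓕 f).continuous
  have hψc : Continuous (𝓕 ψ : 𝓢(EuclideanSpace ℝ (Fin n), ℂ)) := (𝓕 ψ).continuous
  have hec : ∀ k, Continuous (e k) := fun k ↦ by fun_prop
  have hPc : Continuous P := by fun_prop
  have hnorm : ∀ k ξ, ‖e k ξ‖ = 1 := fun k ξ ↦ by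
    have : 2 * (π : ℂ) * I * (k : ℂ) * ((‖ξ‖ ^ 2 : ℝ) : ℂ) =
        ((2 * π * k * ‖ξ‖ ^ 2 : ℝ) : ℂ) * I := by push_cast; ring
    rw [he]; simp only; rw [this, Complex.norm_exp_ofReal_mul_I]
  have hPle : ∀ ξ, ‖P ξ‖ ≤ ∑ k ∈ S, ‖a k‖ := fun ξ ↦
    (norm_sum_le _ _).trans_eq (by simp [hnorm])
  have hf2 : Integrable fun ξ ↦ ‖𝓕 f ξ‖ ^ 2 :=
    ((𝓕 f).memLp 2).integrable_norm_pow two_ne_zero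
  have hψ2 : Integrable fun ξ ↦ ‖𝓕 ψ ξ‖ ^ 2 :=
    ((𝓕 ψ).memLp 2).integrable_norm_pow two_ne_zero
  have hPψ2 : Integrable fun ξ ↦ ‖P ξ‖ ^ 2 * ‖𝓕 ψ ξ‖ ^ 2 :=
    hψ2.bdd_mul (c := (∑ k ∈ S, ‖a k‖) ^ 2) (by fun_prop) (.of_forall fun ξ ↦ by
      rw [norm_pow, norm_norm]
      exact pow_le_pow_left₀ (norm_nonneg _) (hPle ξ) 2)
  have hbound : ∫ ξ, ‖P ξ‖ ^ 2 * ‖𝓕 ψ ξ‖ ^ 2 ≤ N * T := by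
    simpa only [RCLike.norm_conj] using
      integral_norm_sq_trigPoly_mul_fourier_le hn ψ S (fun k ↦ starRingEnd ℂ (a k))
  have hprod : Integrable fun ξ ↦ 𝓕 f ξ * (starRingEnd ℂ) (𝓕 ψ ξ) := by
    refine (hf2.add hψ2).mono' (by fun_prop) (.of_forall fun ξ ↦ ?_)
    simp only [norm_mul, RCLike.norm_conj, Pi.add_apply]
    nlinarith [sq_nonneg (‖𝓕 f ξ‖ - ‖𝓕 ψ ξ‖), sq_nonneg (‖𝓕 f ξ‖ + ‖𝓕 ψ ξ‖)]
  have hek : ∀ k, Integrable fun ξ ↦ e k ξ * 𝓕 f ξ * (starRingEnd ℂ) (𝓕 ψ ξ) := fun k ↦ by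
    simp_rw [mul_assoc]
    exact hprod.bdd_mul (c := 1) (hec k).aestronglyMeasurable (.of_forall fun ξ ↦ (hnorm k ξ).le)
  have hdual : (T : ℂ) = ∫ ξ, P ξ * (𝓕 f ξ * (starRingEnd ℂ) (𝓕 ψ ξ)) := by
    simp_rw [hP, Finset.sum_mul]
    rw [integral_finsetSum _ fun k _ ↦ ((hek k).const_mul (starRingEnd ℂ (a k))).congr
      (.of_forall fun ξ ↦ by simp only; ring), hT, ofReal_sum]
    refine Finset.sum_congr rfl fun k _ ↦ ?_
    rw [ofReal_pow, ← Complex.conj_mul']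
    conv_lhs => rw [ha]
    rw [← integral_const_mul]
    congr 1 with ξ
    ring
  have hT0 : 0 ≤ T := by positivity
  have hAf : ∫ ξ, ‖𝓕 f ξ‖ ^ 2 = A := SchwartzMap.integral_norm_sq_fourier f
  have hcs : ∀ K > N, T ≤ K * A := fun K hK ↦ by
    have hK0 : 0 < K := hN0.trans_lt hK
    have hTle : T ≤ ∫ ξ, (K / 2 * ‖𝓕 f ξ‖ ^ 2 + (2 * K)⁻¹ * (‖P ξ‖ ^ 2 * ‖𝓕 ψ ξ‖ ^ 2)) := by
      calc T = ‖(T : ℂ)‖ := by rw [Complex.norm_real, Real.norm_of_nonneg hT0]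
        _ ≤ _ := by
          rw [hdual]
          refine norm_integral_le_of_norm_le ((hf2.const_mul _).add (hPψ2.const_mul _))
            (.of_forall fun ξ ↦ ?_)
          simp only [norm_mul, RCLike.norm_conj]
          have hsq : 0 ≤ (2 * K)⁻¹ * (K * ‖𝓕 f ξ‖ - ‖P ξ‖ * ‖𝓕 ψ ξ‖) ^ 2 := by positivity
          have heq : (2 * K)⁻¹ * (K * ‖𝓕 f ξ‖ - ‖P ξ‖ * ‖𝓕 ψ ξ‖) ^ 2 =
              K / 2 * ‖𝓕 f ξ‖ ^ 2 + (2 * K)⁻¹ * (‖P ξ‖ ^ 2 * ‖𝓕 ψ ξ‖ ^ 2) -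
                ‖P ξ‖ * (‖𝓕 f ξ‖ * ‖𝓕 ψ ξ‖) := by
            field_simp; ring
          linarith
    rw [integral_add (hf2.const_mul _) (hPψ2.const_mul _), integral_const_mul,
      integral_const_mul, hAf] at hTle
    have hhalf : (2 * K)⁻¹ * ∫ ξ, ‖P ξ‖ ^ 2 * ‖𝓕 ψ ξ‖ ^ 2 ≤ T / 2 := by
      rw [inv_mul_le_iff₀ (by positivity)]
      nlinarith [mul_le_mul_of_nonneg_right hK.le hT0]
    linarith
  have hlim : T ≤ N * A := by
    have htend : Filter.Tendsto (fun K ↦ K * A) (nhdsWithin N (Set.Ioi N)) (nhds (N * A)) :=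
      (tendsto_nhdsWithin_of_tendsto_nhds ((continuous_id.mul continuous_const).tendsto N))
    exact ge_of_tendsto htend (by filter_upwards [self_mem_nhdsWithin] with K hK using hcs K hK)
  exact hlim.trans_eq (by rw [hN]; ring)

/-- Discrete-time Kato smoothing: the sampled inner products
`⟨e^{-2πikΔ}f, ψ⟩` are square-summable over `k ∈ ℤ`, with bound
`C ‖f‖_{L²}² ‖⟨x⟩ψ‖_{L²}²`. -/
theorem discrete_kato_smoothing_weighted (n : ℕ) (hn : 3 ≤ n) :
    ∃ C : ℝ, 0 < C ∧ ∀ f ψ : SchwartzMap (EuclideanSpace ℝ (Fin n)) ℂ,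
      (∑' k : ℤ, (‖∫ ξ : EuclideanSpace ℝ (Fin n),
          Complex.exp (2 * (π : ℂ) * I * (k : ℂ) * ((‖ξ‖ ^ 2 : ℝ) : ℂ)) *
            𝓕 (⇑f) ξ * (starRingEnd ℂ) (𝓕 (⇑ψ) ξ)‖₊ : ℝ≥0∞) ^ 2)
        ≤ ENNReal.ofReal (C * (∫ x : EuclideanSpace ℝ (Fin n), ‖f x‖ ^ 2) *
            (∫ x : EuclideanSpace ℝ (Fin n), (1 + ‖x‖ ^ 2) * ‖ψ x‖ ^ 2)) := by
  refine ⟨2 * π ^ 2, by positivity, fun f ψ ↦ ?_⟩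
  rw [ENNReal.tsum_eq_iSup_sum]
  refine iSup_le fun S ↦ ?_
  refine le_trans (le_of_eq ?_)
    (ENNReal.ofReal_le_ofReal (sum_norm_sq_integral_exp_mul_le hn f ψ S))
  rw [ENNReal.ofReal_sum_of_nonneg fun k _ ↦ sq_nonneg _]
  refine Finset.sum_congr rfl fun k _ ↦ ?_
  rw [ENNReal.ofReal_pow (norm_nonneg _), ofReal_norm]
  rfl
end
end

section
/- Let n ≥ 3, let γ ∈ [(n+1)/2, n+1], and let α ≥ 0 satisfy α + 1/γ > 1. There is a constant C (depending on n, γ, α) such that for all Schwartz functions f and ψ on ℝⁿ, Σ_{k ∈ ℤ} | ∫_{ℝⁿ} e^{2πik|ξ|²} f̂(ξ) · conj(ψ̂(ξ)) dξ |² ≤ C ‖f‖²_{L²(ℝⁿ)} · ( ‖ψ‖_{L²(ℝⁿ)} + ‖ψ‖_{L^{2n/(n+2)}(ℝⁿ)} + ‖F^{−1}(ξ ↦ |ξ|^α ψ̂(ξ))‖_{L^{2γ/(γ+2)}(ℝⁿ)} )². -/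
open MeasureTheory Complex FourierTransform
open scoped ENNReal NNReal Real

noncomputable section

section Phase

variable {V : Type*} [NormedAddCommGroup V]

/-- The Schrödinger phase `e^{2πik|ξ|²}`. -/
def schrodingerPhase (k : ℤ) (ξ : V) : ℂ :=
  cexp (2 * (π : ℂ) * I * (k : ℂ) * ((‖ξ‖ ^ 2 : ℝ) : ℂ))

theorem schrodingerPhase_eq_exp_ofReal_mul_I (k : ℤ) (ξ : V) :
    schrodingerPhase k ξ = cexp (((2 * π * k * ‖ξ‖ ^ 2 : ℝ) : ℂ) * I) := by
  rw [schrodingerPhase]; congr 1; push_cast; ring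

@[simp]
theorem norm_schrodingerPhase (k : ℤ) (ξ : V) : ‖schrodingerPhase k ξ‖ = 1 := by
  rw [schrodingerPhase_eq_exp_ofReal_mul_I, Complex.norm_exp_ofReal_mul_I]

theorem continuous_schrodingerPhase (k : ℤ) : Continuous (schrodingerPhase k : V → ℂ) := by
  unfold schrodingerPhase; fun_prop

theorem conj_schrodingerPhase_mul (j k : ℤ) (ξ : V) :
    (starRingEnd ℂ) (schrodingerPhase j ξ) * schrodingerPhase k ξ = schrodingerPhase (k - j) ξ := by
  simp only [schrodingerPhase_eq_exp_ofReal_mul_I, ← Complex.exp_conj, ← Complex.exp_add, map_mul,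
    Complex.conj_ofReal, Complex.conj_I]
  congr 1; push_cast; ring

end Phase

section Fourier

variable {V : Type*} [NormedAddCommGroup V] [InnerProductSpace ℝ V] [FiniteDimensional ℝ V]
  [MeasurableSpace V] [BorelSpace V]

/-- The Fourier integral is self-adjoint: `∫ 𝓕 g * h = ∫ g * 𝓕 h`. -/
theorem integral_fourier_mul_eq_integral_mul_fourier {g h : V → ℂ} (hg : Integrable g)
    (hh : Integrable h) : ∫ ξ, 𝓕 g ξ * h ξ = ∫ x, g x * 𝓕 h x := by
  simpa using! VectorFourier.integral_bilin_fourierIntegral_eq_flip (.mul ℂ ℂ) (L := innerₗ V)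
    Real.continuous_fourierChar continuous_inner hg hh

theorem continuous_fourier_of_integrable {g : V → ℂ} (hg : Integrable g) : Continuous (𝓕 g) :=
  VectorFourier.fourierIntegral_continuous (L := innerₗ V) Real.continuous_fourierChar
    continuous_inner hg

/-- The `L²` Fourier transform agrees with the Fourier integral on `L¹ ∩ L²`. -/
theorem coeFn_fourier_toLp {g : V → ℂ} (hg : Integrable g) (hg2 : MemLp g 2) :
    (𝓕 (hg2.toLp g) : Lp ℂ 2 (volume : Measure V)) =ᵐ[volume] 𝓕 g := by
  refine ae_eq_of_integral_contDiff_smul_eq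
    ((Lp.memLp _).locallyIntegrable (by norm_num))
    (continuous_fourier_of_integrable hg).locallyIntegrable fun φ hφ hφc => ?_
  have hφ₁ : HasCompactSupport (Complex.ofRealCLM ∘ φ) := hφc.comp_left rfl
  have hφ₂ : ContDiff ℝ (⊤ : ℕ∞) (Complex.ofRealCLM ∘ φ) := by fun_prop
  set Φ : SchwartzMap V ℂ := hφ₁.toSchwartzMap hφ₂
  have hΦ : ∀ x, Φ x = (φ x : ℂ) := fun x => rfl
  have key := congrArg (fun T => T Φ) (Lp.fourier_toTemperedDistribution_eq (hg2.toLp g))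
  simp only [TemperedDistribution.fourier_apply, Lp.toTemperedDistribution_apply] at key
  calc ∫ x, φ x • (𝓕 (hg2.toLp g) : Lp ℂ 2 (volume : Measure V)) x
      = ∫ x, Φ x • (𝓕 (hg2.toLp g) : Lp ℂ 2 (volume : Measure V)) x := by
        simp [hΦ]
    _ = ∫ x, 𝓕 Φ x • hg2.toLp g x := key.symm
    _ = ∫ x, 𝓕 (Φ : V → ℂ) x * g x := by
        refine integral_congr_ae ?_
        filter_upwards [hg2.coeFn_toLp] with x hx
        rw [hx, smul_eq_mul, SchwartzMap.fourier_coe]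
    _ = ∫ x, Φ x * 𝓕 g x := integral_fourier_mul_eq_integral_mul_fourier Φ.integrable hg
    _ = ∫ x, φ x • 𝓕 g x := by simp [hΦ]

theorem norm_fourier_le_integral_norm (g : V → ℂ) (w : V) : ‖𝓕 g w‖ ≤ ∫ x, ‖g x‖ :=
  VectorFourier.norm_fourierIntegral_le_integral_norm _ _ _ _ _

/-- `L¹` bound for the bilinear form with complex Gaussian multiplier. -/
theorem norm_integral_gaussian_mul_fourier_le {g h : V → ℂ} (hg : Integrable g)
    (hh : Integrable h) {b : ℂ} (hb : 0 < b.re) :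
    ‖∫ ξ, cexp (-b * ‖ξ‖ ^ 2) * 𝓕 h ξ * (starRingEnd ℂ) (𝓕 g ξ)‖ ≤
      (π / ‖b‖) ^ (Module.finrank ℝ V / 2 : ℝ) * (∫ x, ‖g x‖) * ∫ x, ‖h x‖ := by
  set m : V → ℂ := fun ξ => cexp (-b * ‖ξ‖ ^ 2) * (starRingEnd ℂ) (𝓕 g ξ) with hm
  set A : ℝ := (π / ‖b‖) ^ (Module.finrank ℝ V / 2 : ℝ) with hA
  have hgauss : ∀ {c : ℂ}, 0 < c.re → ∀ x : V, Integrable fun v : V =>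
      cexp (-c * ‖v‖ ^ 2 + 2 * π * I * (inner ℝ x v : ℝ)) := fun hc x =>
    GaussianFourier.integrable_cexp_neg_mul_sq_norm_add hc (2 * π * I) x
  have hgauss0 : Integrable fun v : V => cexp (-b * ‖v‖ ^ 2) := by
    simpa using hgauss hb 0
  have hmi : Integrable m := by
    refine hgauss0.mul_bdd (c := ∫ x, ‖g x‖)
      (Complex.continuous_conj.comp (continuous_fourier_of_integrable hg)).aestronglyMeasurable
      (Filter.Eventually.of_forall fun ξ => ?_)
    simpa using norm_fourier_le_integral_norm g ξ
  have hb' : 0 < ((starRingEnd ℂ) b).re := by simpa using hb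
  have hbn : b ≠ 0 := by rintro rfl; simp at hb
  have hmb : ∀ x, ‖𝓕 m x‖ ≤ A * ∫ y, ‖g y‖ := by
    intro x
    have h1 : (starRingEnd ℂ) (𝓕 m x) = ∫ ξ, 𝓕 g ξ *
        cexp (-(starRingEnd ℂ) b * ‖ξ‖ ^ 2 + 2 * π * I * (inner ℝ x ξ : ℝ)) := by
      rw [Real.fourier_eq', ← integral_conj]
      refine integral_congr_ae (Filter.Eventually.of_forall fun ξ => ?_)
      simp only [hm, smul_eq_mul, map_mul, ← Complex.exp_conj, Complex.conj_conj, map_neg,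
        map_pow, Complex.conj_ofReal, Complex.conj_I, Complex.exp_add]
      rw [real_inner_comm ξ x]
      push_cast
      ring_nf
    rw [← RCLike.norm_conj, h1,
      integral_fourier_mul_eq_integral_mul_fourier hg (hgauss hb' x)]
    refine (norm_integral_le_integral_norm _).trans ?_
    rw [← integral_const_mul]
    refine integral_mono_of_nonneg (Filter.Eventually.of_forall fun _ => norm_nonneg _)
      (hg.norm.const_mul _) (Filter.Eventually.of_forall fun y => ?_)
    simp only
    rw [fourier_gaussian_innerProductSpace' hb', norm_mul, mul_comm]
    gcongr
    rw [norm_mul, Complex.norm_exp]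
    have e1 : ‖((π : ℂ) / (starRingEnd ℂ) b) ^ (Module.finrank ℝ V / 2 : ℂ)‖ = A := by
      have : (Module.finrank ℝ V / 2 : ℂ) = ((Module.finrank ℝ V / 2 : ℝ) : ℂ) := by push_cast; rfl
      rw [this, Complex.norm_cpow_real]
      simp [hA, abs_of_pos Real.pi_pos]
    rw [e1]
    refine mul_le_of_le_one_right (by positivity) (Real.exp_le_one_iff.2 ?_)
    have e2 : (-(π : ℂ) ^ 2 * (‖x - y‖ : ℂ) ^ 2 / (starRingEnd ℂ) b)
        = ((-(π ^ 2 * ‖x - y‖ ^ 2 / normSq b) : ℝ) : ℂ) * b := by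
      rw [div_eq_mul_inv, Complex.inv_def]
      simp only [Complex.conj_conj, Complex.normSq_conj]
      push_cast
      ring
    rw [e2, Complex.re_ofReal_mul]
    have : 0 ≤ π ^ 2 * ‖x - y‖ ^ 2 / normSq b :=
      div_nonneg (by positivity) (normSq_nonneg b)
    nlinarith
  calc ‖∫ ξ, cexp (-b * ‖ξ‖ ^ 2) * 𝓕 h ξ * (starRingEnd ℂ) (𝓕 g ξ)‖
      = ‖∫ ξ, 𝓕 h ξ * m ξ‖ := by
        congr 2; ext ξ; simp only [hm]; ring
    _ = ‖∫ x, h x * 𝓕 m x‖ := by rw [integral_fourier_mul_eq_integral_mul_fourier hh hmi]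
    _ ≤ ∫ x, (A * ∫ y, ‖g y‖) * ‖h x‖ := by
        refine (norm_integral_le_integral_norm _).trans ?_
        refine integral_mono_of_nonneg (Filter.Eventually.of_forall fun _ => norm_nonneg _)
          (hh.norm.const_mul _) (Filter.Eventually.of_forall fun y => ?_)
        simp only
        rw [norm_mul, mul_comm]
        gcongr
        exact hmb y
    _ = _ := by rw [integral_const_mul]

theorem memLp_schrodingerPhase_mul (k : ℤ) (x : Lp ℂ 2 (volume : Measure V)) :
    MemLp (fun ξ => schrodingerPhase k ξ * x ξ) 2 :=
  (Lp.memLp x).of_le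
    ((continuous_schrodingerPhase k).aestronglyMeasurable.mul (Lp.aestronglyMeasurable x))
    (Filter.Eventually.of_forall fun ξ => by simp)

/-- Multiplication by the Schrödinger phase, as an isometry of `L²`. -/
def schrodingerMul (k : ℤ) :
    Lp ℂ 2 (volume : Measure V) →ₗᵢ[ℂ] Lp ℂ 2 (volume : Measure V) where
  toFun x := (memLp_schrodingerPhase_mul k x).toLp _
  map_add' x y := by
    rw [← MemLp.toLp_add]
    refine MemLp.toLp_congr _ _ ?_
    filter_upwards [Lp.coeFn_add x y] with ξ h
    simp only [h, Pi.add_apply, mul_add]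
  map_smul' c x := by
    rw [RingHom.id_apply, ← MemLp.toLp_const_smul]
    refine MemLp.toLp_congr _ _ ?_
    filter_upwards [Lp.coeFn_smul c x] with ξ h
    simp only [h, Pi.smul_apply, smul_eq_mul]
    ring
  norm_map' x := by
    simp only [LinearMap.coe_mk, AddHom.coe_mk]
    rw [Lp.norm_toLp, Lp.norm_def]
    congr 1
    exact eLpNorm_congr_norm_ae (Filter.Eventually.of_forall fun ξ => by simp)

theorem coeFn_schrodingerMul (k : ℤ) (x : Lp ℂ 2 (volume : Measure V)) :
    schrodingerMul k x =ᵐ[volume] fun ξ => schrodingerPhase k ξ * x ξ :=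
  (memLp_schrodingerPhase_mul k x).coeFn_toLp

theorem inner_schrodingerMul (j k : ℤ) (x y : Lp ℂ 2 (volume : Measure V)) :
    inner ℂ (schrodingerMul j x) (schrodingerMul k y) =
      ∫ ξ, schrodingerPhase (k - j) ξ * y ξ * (starRingEnd ℂ) (x ξ) := by
  rw [L2.inner_def]
  refine integral_congr_ae ?_
  filter_upwards [coeFn_schrodingerMul j x, coeFn_schrodingerMul k y] with ξ hx hy
  rw [hx, hy, RCLike.inner_apply, map_mul, ← conj_schrodingerPhase_mul]
  ring

/-- The free Schrödinger evolution at the integer time `k`, viewed on the Fourier side. -/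
def schrodingerFlow (k : ℤ) :
    Lp ℂ 2 (volume : Measure V) →ₗᵢ[ℂ] Lp ℂ 2 (volume : Measure V) :=
  (schrodingerMul k).comp (Lp.fourierTransformₗᵢ V ℂ).toLinearIsometry

theorem inner_schrodingerFlow (j k : ℤ) (x y : Lp ℂ 2 (volume : Measure V)) :
    inner ℂ (schrodingerFlow j x) (schrodingerFlow k y) =
      ∫ ξ, schrodingerPhase (k - j) ξ * (𝓕 y : Lp ℂ 2 (volume : Measure V)) ξ *
        (starRingEnd ℂ) ((𝓕 x : Lp ℂ 2 (volume : Measure V)) ξ) :=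
  inner_schrodingerMul j k _ _

theorem inner_schrodingerFlow_eq_sub (j k : ℤ) (x y : Lp ℂ 2 (volume : Measure V)) :
    inner ℂ (schrodingerFlow j x) (schrodingerFlow k y) =
      inner ℂ (schrodingerFlow 0 x) (schrodingerFlow (k - j) y) := by
  rw [inner_schrodingerFlow, inner_schrodingerFlow, sub_zero]

theorem inner_schrodingerFlow_toLp {g h : V → ℂ} (hg : Integrable g) (hg2 : MemLp g 2)
    (hh : Integrable h) (hh2 : MemLp h 2) (j k : ℤ) :
    inner ℂ (schrodingerFlow j (hg2.toLp g)) (schrodingerFlow k (hh2.toLp h)) =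
      ∫ ξ, schrodingerPhase (k - j) ξ * 𝓕 h ξ * (starRingEnd ℂ) (𝓕 g ξ) := by
  rw [inner_schrodingerFlow]
  refine integral_congr_ae ?_
  filter_upwards [coeFn_fourier_toLp hg hg2, coeFn_fourier_toLp hh hh2] with ξ h1 h2
  rw [h1, h2]

/-- Dispersive estimate for the Schrödinger flow. -/
theorem norm_inner_schrodingerFlow_le {g h : V → ℂ} (hg : Integrable g) (hg2 : MemLp g 2)
    (hh : Integrable h) (hh2 : MemLp h 2) {k : ℤ} (hk : k ≠ 0) :
    ‖inner ℂ (schrodingerFlow 0 (hg2.toLp g)) (schrodingerFlow k (hh2.toLp h))‖ ≤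
      ((|k| : ℤ) : ℝ) ^ (-(Module.finrank ℝ V / 2 : ℝ)) * (∫ x, ‖g x‖) * ∫ x, ‖h x‖ := by
  rw [inner_schrodingerFlow_toLp hg hg2 hh hh2, sub_zero]
  have hgF : MemLp (𝓕 g) 2 := (Lp.memLp _).ae_eq (coeFn_fourier_toLp hg hg2)
  have hhF : MemLp (𝓕 h) 2 := (Lp.memLp _).ae_eq (coeFn_fourier_toLp hh hh2)
  have hint : Integrable fun ξ => ‖𝓕 h ξ‖ * ‖𝓕 g ξ‖ := hhF.norm.integrable_mul hgF.norm
  let b : ℕ → ℂ := fun N => ((1 / ((N : ℝ) + 1) : ℝ) : ℂ) - 2 * π * I * k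
  have hbre : ∀ N, 0 < (b N).re := fun N => by
    have : (b N).re = 1 / ((N : ℝ) + 1) := by
      simp only [b, Complex.sub_re, Complex.ofReal_re]
      simp
    rw [this]; positivity
  have hbim : ∀ N, (b N).im = -(2 * π * k) := fun N => by
    simp only [b, Complex.sub_im, Complex.ofReal_im]
    simp
  have hlim : Filter.Tendsto
      (fun N => ∫ ξ, cexp (-b N * ‖ξ‖ ^ 2) * 𝓕 h ξ * (starRingEnd ℂ) (𝓕 g ξ)) Filter.atTop
      (nhds (∫ ξ, schrodingerPhase k ξ * 𝓕 h ξ * (starRingEnd ℂ) (𝓕 g ξ))) := by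
    refine tendsto_integral_of_dominated_convergence _ (fun N => ?_) hint (fun N => ?_) ?_
    · have := continuous_fourier_of_integrable hg
      have := continuous_fourier_of_integrable hh
      exact Continuous.aestronglyMeasurable (by fun_prop)
    · refine Filter.Eventually.of_forall fun ξ => ?_
      rw [norm_mul, norm_mul, RCLike.norm_conj, mul_assoc, Complex.norm_exp]
      refine mul_le_of_le_one_left (by positivity) (Real.exp_le_one_iff.2 ?_)
      have : (-b N * (‖ξ‖ : ℂ) ^ 2).re = -((b N).re * ‖ξ‖ ^ 2) := by
        rw [← Complex.ofReal_pow, Complex.re_mul_ofReal]; simp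
      rw [this]
      have := hbre N
      have : 0 ≤ (b N).re * ‖ξ‖ ^ 2 := by positivity
      linarith
    · refine Filter.Eventually.of_forall fun ξ => ?_
      have hb : Filter.Tendsto b Filter.atTop (nhds (0 - 2 * π * I * k)) := by
        refine Filter.Tendsto.sub_const ?_ _
        exact (Complex.continuous_ofReal.tendsto' 0 0 (by simp)).comp
          tendsto_one_div_add_atTop_nhds_zero_nat
      have := ((Complex.continuous_exp.tendsto _).comp
        ((hb.neg).mul_const ((‖ξ‖ : ℂ) ^ 2))).mul_const (𝓕 h ξ * (starRingEnd ℂ) (𝓕 g ξ))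
      convert this using 2
      · simp [mul_assoc]
      · simp [schrodingerPhase, mul_assoc]
  refine le_of_tendsto hlim.norm (Filter.Eventually.of_forall fun N => ?_)
  refine (norm_integral_gaussian_mul_fourier_le hg hh (hbre N)).trans ?_
  have hk1 : (0 : ℝ) < ((|k| : ℤ) : ℝ) := by exact_mod_cast abs_pos.2 hk
  gcongr
  rw [Real.rpow_neg hk1.le, ← Real.inv_rpow hk1.le]
  refine Real.rpow_le_rpow (by positivity) ?_ (by positivity)
  have h2 : π * ((|k| : ℤ) : ℝ) ≤ ‖b N‖ := by
    refine le_trans ?_ (Complex.abs_im_le_norm (b N))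
    rw [hbim, abs_neg, abs_mul, abs_of_pos (by positivity : 0 < 2 * π), Int.cast_abs]
    nlinarith [Real.pi_pos, abs_nonneg (k : ℝ), mul_nonneg Real.pi_pos.le (abs_nonneg (k : ℝ))]
  have hb0 : 0 < ‖b N‖ := lt_of_lt_of_le (by positivity) h2
  rw [div_le_iff₀ hb0, ← div_eq_inv_mul, le_div_iff₀ hk1]
  exact h2

end Fourier

section Sums

theorem rpow_neg_three_halves_succ_le {m : ℕ} (hm : 1 ≤ m) :
    ((m + 1 : ℕ) : ℝ) ^ (-(3 / 2) : ℝ) ≤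
      2 * (m : ℝ) ^ (-(1 / 2) : ℝ) - 2 * ((m + 1 : ℕ) : ℝ) ^ (-(1 / 2) : ℝ) := by
  have hm0 : (0 : ℝ) < m := by exact_mod_cast hm
  have hM0 : (0 : ℝ) < ((m + 1 : ℕ) : ℝ) := by positivity
  have e : ((m + 1 : ℕ) : ℝ) ^ (-(3 / 2) : ℝ) =
      (((m + 1 : ℕ) : ℝ))⁻¹ * (√((m + 1 : ℕ) : ℝ))⁻¹ := by
    rw [Real.sqrt_eq_rpow, ← Real.rpow_neg hM0.le, ← Real.rpow_neg_one, ← Real.rpow_add hM0]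
    norm_num
  rw [e, Real.rpow_neg hm0.le, Real.rpow_neg hM0.le, ← Real.sqrt_eq_rpow, ← Real.sqrt_eq_rpow]
  have ha : 0 < √(m : ℝ) := Real.sqrt_pos.2 hm0
  have hc : 0 < √((m + 1 : ℕ) : ℝ) := Real.sqrt_pos.2 hM0
  have ha2 := Real.sq_sqrt hm0.le
  have hc2 := Real.sq_sqrt hM0.le
  have hac : √(m : ℝ) ≤ √((m + 1 : ℕ) : ℝ) := Real.sqrt_le_sqrt (by push_cast; linarith)
  set a := √(m : ℝ)
  set c := √((m + 1 : ℕ) : ℝ)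
  have hca : c ^ 2 - a ^ 2 = 1 := by rw [ha2, hc2]; push_cast; ring
  rw [← hc2]
  have h1 : 2 * a⁻¹ - 2 * c⁻¹ = 2 / (a * c * (a + c)) := by
    field_simp
    linear_combination hca
  rw [h1, ← mul_inv, ← one_div, div_le_div_iff₀ (by positivity) (by positivity)]
  nlinarith [mul_pos ha hc, mul_le_mul_of_nonneg_left hac ha.le,
    mul_le_mul_of_nonneg_left hac hc.le, mul_nonneg hc.le (sub_nonneg.2 hac),
    mul_nonneg hc.le (mul_nonneg hc.le (sub_nonneg.2 hac)),
    mul_nonneg hc.le (mul_nonneg ha.le (sub_nonneg.2 hac))]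

theorem sum_Ioc_rpow_neg_three_halves_le {m M : ℕ} (hm : 1 ≤ m) (hM : m ≤ M) :
    ∑ k ∈ Finset.Ioc m M, (k : ℝ) ^ (-(3 / 2) : ℝ) ≤
      2 * (m : ℝ) ^ (-(1 / 2) : ℝ) - 2 * (M : ℝ) ^ (-(1 / 2) : ℝ) := by
  induction M, hM using Nat.le_induction with
  | base => simp
  | succ M hM ih =>
    rw [Finset.sum_Ioc_succ_top (by omega)]
    linarith [rpow_neg_three_halves_succ_le (hm.trans hM)]

theorem sum_nat_rpow_neg_three_halves_le {K : ℝ} (hK : 1 ≤ K) (S : Finset ℕ)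
    (hS : ∀ k ∈ S, K < k) :
    ∑ k ∈ S, (k : ℝ) ^ (-(3 / 2) : ℝ) ≤ 3 / √K := by
  have hK0 : 0 < K := by linarith
  set m := ⌊K⌋₊ with hm
  have hm1 : 1 ≤ m := Nat.one_le_floor_iff _ |>.2 hK
  set M := max m (S.sup id)
  have hsub : S ⊆ Finset.Ioc m M := fun k hk => by
    refine Finset.mem_Ioc.2 ⟨(Nat.floor_lt hK0.le).2 (hS k hk), ?_⟩
    exact (Finset.le_sup (f := id) hk).trans (le_max_right _ _)
  refine (Finset.sum_le_sum_of_subset_of_nonneg hsub fun _ _ _ => by positivity).trans ?_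
  refine (sum_Ioc_rpow_neg_three_halves_le hm1 (le_max_left _ _)).trans ?_
  have h0 : 0 ≤ 2 * (M : ℝ) ^ (-(1 / 2) : ℝ) := by positivity
  have hm0 : (0 : ℝ) < m := by exact_mod_cast hm1
  have hKm : K ≤ 2 * m := by
    have := Nat.lt_floor_add_one K
    have h1 : (1 : ℝ) ≤ m := by exact_mod_cast hm1
    linarith
  have h2 : √K ≤ 3 / 2 * √m := by
    rw [Real.sqrt_le_left (by positivity), mul_pow, Real.sq_sqrt hm0.le]
    linarith
  have h3 : (m : ℝ) ^ (-(1 / 2) : ℝ) = (√m)⁻¹ := by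
    rw [Real.rpow_neg hm0.le, ← Real.sqrt_eq_rpow]
  have h4 : 2 * (√(m : ℝ))⁻¹ ≤ 3 / √K := by
    rw [← div_eq_mul_inv, div_le_div_iff₀ (by positivity) (by positivity)]
    linarith
  rw [h3]; linarith

theorem sum_int_rpow_neg_three_halves_le {K : ℝ} (hK : 1 ≤ K) (S : Finset ℤ)
    (hS : ∀ k ∈ S, K < ((|k| : ℤ) : ℝ)) :
    ∑ k ∈ S, ((|k| : ℤ) : ℝ) ^ (-(3 / 2) : ℝ) ≤ 6 / √K := by
  have key : ∀ T ⊆ S, Set.InjOn Int.natAbs (T : Set ℤ) →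
      ∑ k ∈ T, ((|k| : ℤ) : ℝ) ^ (-(3 / 2) : ℝ) ≤ 3 / √K := by
    intro T hT hinj
    have h1 : ∑ k ∈ T, ((|k| : ℤ) : ℝ) ^ (-(3 / 2) : ℝ) =
        ∑ k ∈ T.image Int.natAbs, (k : ℝ) ^ (-(3 / 2) : ℝ) := by
      rw [Finset.sum_image hinj]
      refine Finset.sum_congr rfl fun k _ => ?_
      rw [Nat.cast_natAbs]
    rw [h1]
    refine sum_nat_rpow_neg_three_halves_le hK _ fun k hk => ?_
    obtain ⟨j, hj, rfl⟩ := Finset.mem_image.1 hk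
    rw [Nat.cast_natAbs]
    exact hS j (hT hj)
  rw [← Finset.sum_filter_add_sum_filter_not S (fun k => 0 ≤ k)]
  have h1 := key (S.filter fun k => 0 ≤ k) (Finset.filter_subset _ _) fun x hx y hy h => by
    simp only [Finset.coe_filter, Set.mem_ofPred_eq] at hx hy; omega
  have h2 := key (S.filter fun k => ¬ 0 ≤ k) (Finset.filter_subset _ _) fun x hx y hy h => by
    simp only [Finset.coe_filter, Set.mem_ofPred_eq] at hx hy; omega
  have h3 : 6 / √K = 3 / √K + 3 / √K := by ring
  linarith

theorem card_filter_abs_le {K : ℝ} (hK : 1 ≤ K) (S : Finset ℤ) :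
    ((S.filter fun k => ((|k| : ℤ) : ℝ) ≤ K).card : ℝ) ≤ 3 * K := by
  have hsub : (S.filter fun k => ((|k| : ℤ) : ℝ) ≤ K) ⊆ Finset.Icc (-⌊K⌋) ⌊K⌋ := fun k hk => by
    have := Int.le_floor.2 (Finset.mem_filter.1 hk).2
    exact Finset.mem_Icc.2 (abs_le.1 this)
  have h0 : 0 ≤ ⌊K⌋ := Int.floor_nonneg.2 (by linarith)
  have h1 := Finset.card_le_card hsub
  rw [Int.card_Icc] at h1
  have h2 : ((S.filter fun k => ((|k| : ℤ) : ℝ) ≤ K).card : ℤ) ≤ 2 * ⌊K⌋ + 1 := by omega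
  have h3 : ((S.filter fun k => ((|k| : ℤ) : ℝ) ≤ K).card : ℝ) ≤ 2 * (⌊K⌋ : ℝ) + 1 := by
    exact_mod_cast h2
  linarith [Int.floor_le K]

/-- Splitting a sum over integers at height `K`, with a `|k|^{-3/2}` bound on the tail. -/
theorem sum_le_sum_filter_add {a : ℤ → ℝ} {T K : ℝ} (hT : 0 ≤ T) (hK : 1 ≤ K)
    (ha : ∀ k : ℤ, K ≤ ((|k| : ℤ) : ℝ) → a k ≤ ((|k| : ℤ) : ℝ) ^ (-(3 / 2) : ℝ) * T)
    (S : Finset ℤ) :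
    ∑ k ∈ S, a k ≤ ∑ k ∈ S with ((|k| : ℤ) : ℝ) ≤ K, a k + 6 / √K * T := by
  rw [← Finset.sum_filter_add_sum_filter_not S (fun k => ((|k| : ℤ) : ℝ) ≤ K)]
  gcongr
  calc _ ≤ ∑ k ∈ S with ¬ ((|k| : ℤ) : ℝ) ≤ K, ((|k| : ℤ) : ℝ) ^ (-(3 / 2) : ℝ) * T :=
        Finset.sum_le_sum fun k hk => ha k (not_le.1 (Finset.mem_filter.1 hk).2).le
    _ ≤ _ := by
        rw [← Finset.sum_mul]
        gcongr
        exact sum_int_rpow_neg_three_halves_le hK _ fun k hk =>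
          not_le.1 (Finset.mem_filter.1 hk).2

theorem sum_pow_le_of_injOn {ι : Type*} {ρ : ℝ} (h0 : 0 ≤ ρ) (h1 : ρ < 1) (S : Finset ι)
    (f : ι → ℕ) (hf : Set.InjOn f S) : ∑ j ∈ S, ρ ^ f j ≤ 1 / (1 - ρ) := by
  rw [← Finset.sum_image (f := fun k => ρ ^ k) hf, one_div]
  exact sum_le_hasSum _ (fun _ _ => by positivity) (hasSum_geometric_of_lt_one h0 h1)

/-- Schur test for the kernel `ρ ^ |i - j|`. -/
theorem sum_sum_mul_pow_dist_le {ρ : ℝ} (h0 : 0 ≤ ρ) (h1 : ρ < 1) (b : ℕ → ℝ) (S : Finset ℕ) :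
    ∑ i ∈ S, ∑ j ∈ S, b i * b j * ρ ^ Nat.dist i j ≤ 2 / (1 - ρ) * ∑ i ∈ S, b i ^ 2 := by
  have hrow : ∀ i, ∑ j ∈ S, ρ ^ Nat.dist i j ≤ 2 / (1 - ρ) := by
    intro i
    rw [← Finset.sum_filter_add_sum_filter_not S (fun j => i ≤ j)]
    have e1 := sum_pow_le_of_injOn h0 h1 (S.filter fun j => i ≤ j) (Nat.dist i)
      fun x hx y hy h => by
        simp only [Finset.coe_filter, Set.mem_ofPred_eq, Nat.dist] at hx hy h; omega
    have e2 := sum_pow_le_of_injOn h0 h1 (S.filter fun j => ¬ i ≤ j) (Nat.dist i)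
      fun x hx y hy h => by
        simp only [Finset.coe_filter, Set.mem_ofPred_eq, Nat.dist] at hx hy h; omega
    have e3 : 2 / (1 - ρ) = 1 / (1 - ρ) + 1 / (1 - ρ) := by ring
    linarith
  have hsq : ∀ i j, b i * b j * ρ ^ Nat.dist i j ≤
      1 / 2 * (b i ^ 2 * ρ ^ Nat.dist i j) + 1 / 2 * (b j ^ 2 * ρ ^ Nat.dist j i) := by
    intro i j
    rw [Nat.dist_comm j i]
    have : 0 ≤ ρ ^ Nat.dist i j := by positivity
    nlinarith [mul_nonneg this (sq_nonneg (b i - b j))]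
  have hrow' : ∑ i ∈ S, ∑ j ∈ S, b i ^ 2 * ρ ^ Nat.dist i j ≤
      2 / (1 - ρ) * ∑ i ∈ S, b i ^ 2 := by
    rw [Finset.mul_sum]
    refine Finset.sum_le_sum fun i _ => ?_
    rw [← Finset.mul_sum, mul_comm]
    exact mul_le_mul_of_nonneg_right (hrow i) (sq_nonneg _)
  calc _ ≤ ∑ i ∈ S, ∑ j ∈ S, (1 / 2 * (b i ^ 2 * ρ ^ Nat.dist i j) +
          1 / 2 * (b j ^ 2 * ρ ^ Nat.dist j i)) :=
        Finset.sum_le_sum fun i _ => Finset.sum_le_sum fun j _ => hsq i j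
    _ = 1 / 2 * ∑ i ∈ S, ∑ j ∈ S, b i ^ 2 * ρ ^ Nat.dist i j +
          1 / 2 * ∑ i ∈ S, ∑ j ∈ S, b i ^ 2 * ρ ^ Nat.dist i j := by
        simp only [Finset.sum_add_distrib, ← Finset.mul_sum]
        congr 2
        rw [Finset.sum_comm]
        simp only [← Finset.mul_sum]
    _ ≤ _ := by linarith

end Sums

section Hilbert

variable {H : Type*} [NormedAddCommGroup H] [InnerProductSpace ℂ H]

/-- A form of the large sieve: almost orthogonality in terms of the row sums of the Gram matrix. -/
theorem sum_sq_norm_inner_le {ι : Type*} (S : Finset ι) (v : ι → H) (x : H) {D : ℝ} (hD0 : 0 ≤ D)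
    (hD : ∀ j ∈ S, ∑ k ∈ S, ‖inner ℂ (v j) (v k)‖ ≤ D) :
    ∑ k ∈ S, ‖inner ℂ (v k) x‖ ^ 2 ≤ D * ‖x‖ ^ 2 := by
  set c : ι → ℂ := fun k => inner ℂ (v k) x with hc
  set s : ℝ := ∑ k ∈ S, ‖c k‖ ^ 2 with hs
  have hs0 : 0 ≤ s := Finset.sum_nonneg fun _ _ => by positivity
  set y : H := ∑ k ∈ S, c k • v k with hy
  have h1 : (inner ℂ y x : ℂ) = s := by
    rw [hy, sum_inner, hs]
    push_cast
    refine Finset.sum_congr rfl fun k _ => ?_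
    rw [inner_smul_left, Complex.conj_mul']
  have h2 : s ≤ ‖y‖ * ‖x‖ := by
    calc s = ‖(inner ℂ y x : ℂ)‖ := by rw [h1, Complex.norm_real, Real.norm_of_nonneg hs0]
      _ ≤ _ := norm_inner_le_norm _ _
  have h3 : ‖y‖ ^ 2 ≤ D * s := by
    have e1 : ‖y‖ ^ 2 = ‖(inner ℂ y y : ℂ)‖ := by
      rw [inner_self_eq_norm_sq_to_K]
      simp
    have e2 : ‖(inner ℂ y y : ℂ)‖ ≤
        ∑ j ∈ S, ∑ k ∈ S, ‖c j‖ * ‖c k‖ * ‖inner ℂ (v j) (v k)‖ := by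
      rw [hy, sum_inner]
      refine (norm_sum_le _ _).trans (Finset.sum_le_sum fun j _ => ?_)
      rw [inner_sum]
      refine (norm_sum_le _ _).trans (Finset.sum_le_sum fun k _ => ?_)
      rw [inner_smul_left, inner_smul_right, norm_mul, norm_mul, RCLike.norm_conj, mul_assoc]
    have e3 : ∑ j ∈ S, ∑ k ∈ S, ‖c j‖ ^ 2 * ‖inner ℂ (v j) (v k)‖ ≤ D * s := by
      rw [hs, Finset.mul_sum]
      refine Finset.sum_le_sum fun j hj => ?_
      rw [← Finset.mul_sum, mul_comm]
      exact mul_le_mul_of_nonneg_right (hD j hj) (by positivity)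
    have e4 : ∑ j ∈ S, ∑ k ∈ S, ‖c k‖ ^ 2 * ‖inner ℂ (v j) (v k)‖ ≤ D * s := by
      rw [Finset.sum_comm]
      refine le_trans (le_of_eq ?_) e3
      refine Finset.sum_congr rfl fun j _ => Finset.sum_congr rfl fun k _ => ?_
      rw [norm_inner_symm (v k)]
    have e5 : ∑ j ∈ S, ∑ k ∈ S, ‖c j‖ * ‖c k‖ * ‖inner ℂ (v j) (v k)‖ ≤
        ∑ j ∈ S, ∑ k ∈ S, (1 / 2 * (‖c j‖ ^ 2 * ‖inner ℂ (v j) (v k)‖) +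
          1 / 2 * (‖c k‖ ^ 2 * ‖inner ℂ (v j) (v k)‖)) := by
      refine Finset.sum_le_sum fun j _ => Finset.sum_le_sum fun k _ => ?_
      nlinarith [mul_nonneg (norm_nonneg (inner ℂ (v j) (v k))) (sq_nonneg (‖c j‖ - ‖c k‖))]
    simp only [Finset.sum_add_distrib, ← Finset.mul_sum] at e5
    simp only [← Finset.mul_sum] at e3 e4
    linarith
  have h4 : s * s ≤ D * ‖x‖ ^ 2 * s := by
    calc s * s ≤ (‖y‖ * ‖x‖) * (‖y‖ * ‖x‖) := mul_self_le_mul_self hs0 h2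
      _ = ‖y‖ ^ 2 * ‖x‖ ^ 2 := by ring
      _ ≤ (D * s) * ‖x‖ ^ 2 := by gcongr
      _ = _ := by ring
  rcases hs0.eq_or_lt with h | h
  · rw [← h]; positivity
  · exact le_of_mul_le_mul_right h4 h

variable {W : ℤ → H →ₗᵢ[ℂ] H}

/-- For a stationary family of isometries, the correlations of `g` with its orbit bound the
square sum of the correlations of `x` with the orbit of `g`. -/
theorem sum_sq_norm_inner_orbit_le
    (hW : ∀ j k x y, inner ℂ (W j x) (W k y) = inner ℂ (W 0 x) (W (k - j) y)) {g : H} {D : ℝ}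
    (hD : ∀ S : Finset ℤ, ∑ k ∈ S, ‖inner ℂ (W 0 g) (W k g)‖ ≤ D) (x : H) (S : Finset ℤ) :
    ∑ k ∈ S, ‖inner ℂ (W 0 g) (W k x)‖ ^ 2 ≤ D * ‖x‖ ^ 2 := by
  have hD0 : 0 ≤ D := by simpa using hD ∅
  have h := sum_sq_norm_inner_le S (fun k => W (-k) g) (W 0 x) hD0 fun j _ => by
    have e : ∀ k, inner ℂ (W (-j) g) (W (-k) g) = inner ℂ (W 0 g) (W (j - k) g) := fun k => by
      rw [hW, neg_sub_neg]
    simp only [e]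
    rw [← Finset.sum_image (f := fun k => ‖inner ℂ (W 0 g) (W k g)‖) (g := fun k => j - k)
      (fun _ _ _ _ h => sub_right_injective h)]
    exact hD _
  rw [LinearIsometry.norm_map] at h
  refine le_trans (le_of_eq (Finset.sum_congr rfl fun k _ => ?_)) h
  rw [hW (-k) 0, zero_sub, neg_neg]

/-- Row-sum bound for a single atom. -/
theorem sum_norm_inner_atom_le {g : H} {b Q : ℝ} (hQ : 1 ≤ Q) (hg : ‖g‖ ≤ b / Q ^ 4)
    (hdisp : ∀ k : ℤ, Q ^ 4 * Q ^ 4 ≤ ((|k| : ℤ) : ℝ) → ‖inner ℂ (W 0 g) (W k g)‖ ≤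
      ((|k| : ℤ) : ℝ) ^ (-(3 / 2) : ℝ) * (Q ^ 2 * Q ^ 2 * (b * b))) (S : Finset ℤ) :
    ∑ k ∈ S, ‖inner ℂ (W 0 g) (W k g)‖ ≤ 9 * b ^ 2 := by
  have hQ0 : 0 < Q := by linarith
  have hK : 1 ≤ Q ^ 4 * Q ^ 4 := one_le_mul_of_one_le_of_one_le (one_le_pow₀ hQ) (one_le_pow₀ hQ)
  refine (sum_le_sum_filter_add (mul_nonneg (by positivity) (mul_self_nonneg b)) hK hdisp S).trans ?_
  have hsq : √(Q ^ 4 * Q ^ 4) = Q ^ 4 := Real.sqrt_mul_self (by positivity)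
  have h1 : ∑ k ∈ S with ((|k| : ℤ) : ℝ) ≤ Q ^ 4 * Q ^ 4, ‖inner ℂ (W 0 g) (W k g)‖ ≤
      3 * (Q ^ 4 * Q ^ 4) * (b / Q ^ 4) ^ 2 := by
    calc _ ≤ ∑ k ∈ S with ((|k| : ℤ) : ℝ) ≤ Q ^ 4 * Q ^ 4, (b / Q ^ 4) ^ 2 := by
          refine Finset.sum_le_sum fun k _ => (norm_inner_le_norm _ _).trans ?_
          rw [LinearIsometry.norm_map, LinearIsometry.norm_map, ← sq]
          gcongr
      _ ≤ _ := by
          rw [Finset.sum_const, nsmul_eq_mul]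
          gcongr
          exact card_filter_abs_le hK S
  have h2 : 3 * (Q ^ 4 * Q ^ 4) * (b / Q ^ 4) ^ 2 = 3 * b ^ 2 := by field_simp
  have h3 : 6 / √(Q ^ 4 * Q ^ 4) * (Q ^ 2 * Q ^ 2 * (b * b)) = 6 * b ^ 2 := by
    rw [hsq]; field_simp
  linarith

/-- Off-diagonal decay of the correlation sum of two atoms of different scales. -/
theorem sum_norm_inner_atom_atom_le
    (hW : ∀ j k x y, inner ℂ (W j x) (W k y) = inner ℂ (W 0 x) (W (k - j) y))
    {g h : H} {b c Q R : ℝ} (hb : 0 ≤ b) (hc : 0 ≤ c) (hQ : 1 ≤ Q) (hQR : Q ≤ R)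
    (hD : ∀ S : Finset ℤ, ∑ k ∈ S, ‖inner ℂ (W 0 g) (W k g)‖ ≤ 9 * b ^ 2)
    (hh : ‖h‖ ≤ c / R ^ 4)
    (hdisp : ∀ k : ℤ, Q ^ 4 * R ^ 4 ≤ ((|k| : ℤ) : ℝ) → ‖inner ℂ (W 0 g) (W k h)‖ ≤
      ((|k| : ℤ) : ℝ) ^ (-(3 / 2) : ℝ) * (Q ^ 2 * R ^ 2 * (b * c))) (S : Finset ℤ) :
    ∑ k ∈ S, ‖inner ℂ (W 0 g) (W k h)‖ ≤ 12 * (b * c * (Q / R)) := by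
  have hQ0 : 0 < Q := by linarith
  have hR : 1 ≤ R := hQ.trans hQR
  have hR0 : 0 < R := by linarith
  set K : ℝ := (Q * R ^ 3) ^ 2 with hKdef
  have hK : 1 ≤ K := one_le_pow₀ (one_le_mul_of_one_le_of_one_le hQ (one_le_pow₀ hR))
  have hKge : Q ^ 4 * R ^ 4 ≤ K := by
    have : Q ^ 2 ≤ R ^ 2 := by gcongr
    calc Q ^ 4 * R ^ 4 = Q ^ 2 * R ^ 4 * Q ^ 2 := by ring
      _ ≤ Q ^ 2 * R ^ 4 * R ^ 2 := by gcongr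
      _ = K := by rw [hKdef]; ring
  refine (sum_le_sum_filter_add (by positivity) hK (fun k hk => hdisp k (hKge.trans hk)) S).trans ?_
  have hsq : √K = Q * R ^ 3 := Real.sqrt_sq (by positivity)
  set T := S.filter fun k : ℤ => ((|k| : ℤ) : ℝ) ≤ K with hT
  have h1 : ∑ k ∈ T, ‖inner ℂ (W 0 g) (W k h)‖ ≤ 6 * (b * c * (Q / R)) := by
    refine abs_le_of_sq_le_sq' ?_ (by positivity) |>.2
    calc (∑ k ∈ T, ‖inner ℂ (W 0 g) (W k h)‖) ^ 2
        ≤ T.card * ∑ k ∈ T, ‖inner ℂ (W 0 g) (W k h)‖ ^ 2 := sq_sum_le_card_mul_sum_sq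
      _ ≤ (3 * K) * (9 * b ^ 2 * (c / R ^ 4) ^ 2) := by
          gcongr
          · exact card_filter_abs_le hK S
          · refine (sum_sq_norm_inner_orbit_le hW hD h T).trans ?_
            gcongr
      _ = 27 * (b * c * (Q / R)) ^ 2 := by rw [hKdef]; field_simp; ring
      _ ≤ _ := by rw [mul_pow 6]; gcongr; norm_num
  have h3 : 6 / √K * (Q ^ 2 * R ^ 2 * (b * c)) = 6 * (b * c * (Q / R)) := by
    rw [hsq]; field_simp
  linarith

/-- Summed correlations of a superposition of atoms whose scales `Q i` grow geometrically. -/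
theorem sum_norm_inner_sum_atoms_le
    (hW : ∀ j k x y, inner ℂ (W j x) (W k y) = inner ℂ (W 0 x) (W (k - j) y))
    {g : ℕ → H} {b Q : ℕ → ℝ} {ρ : ℝ} (hρ0 : 0 < ρ) (hρ1 : ρ < 1) (hb : ∀ i, 0 ≤ b i)
    (hQ : ∀ i, 1 ≤ Q i) (hgrow : ∀ i, Q i ≤ ρ * Q (i + 1)) (hg : ∀ i, ‖g i‖ ≤ b i / Q i ^ 4)
    (hdisp : ∀ i j, ∀ k : ℤ, Q i ^ 4 * Q j ^ 4 ≤ ((|k| : ℤ) : ℝ) →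
      ‖inner ℂ (W 0 (g i)) (W k (g j))‖ ≤
        ((|k| : ℤ) : ℝ) ^ (-(3 / 2) : ℝ) * (Q i ^ 2 * Q j ^ 2 * (b i * b j)))
    (N : ℕ) (S : Finset ℤ) :
    ∑ k ∈ S, ‖inner ℂ (W 0 (∑ i ∈ Finset.range N, g i)) (W k (∑ i ∈ Finset.range N, g i))‖ ≤
      24 / (1 - ρ) * ∑ i ∈ Finset.range N, b i ^ 2 := by
  have hD : ∀ i, ∀ S : Finset ℤ, ∑ k ∈ S, ‖inner ℂ (W 0 (g i)) (W k (g i))‖ ≤ 9 * b i ^ 2 :=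
    fun i S => sum_norm_inner_atom_le (hQ i) (hg i) (hdisp i i) S
  have hratio : ∀ i m, Q i ≤ ρ ^ m * Q (i + m) := by
    intro i m
    induction m with
    | zero => simp
    | succ m ih =>
      calc Q i ≤ ρ ^ m * Q (i + m) := ih
        _ ≤ ρ ^ m * (ρ * Q (i + m + 1)) := by gcongr; exact hgrow _
        _ = ρ ^ (m + 1) * Q (i + (m + 1)) := by rw [pow_succ, add_assoc]; ring
  have hle : ∀ i j, i ≤ j → ∀ S : Finset ℤ, ∑ k ∈ S, ‖inner ℂ (W 0 (g i)) (W k (g j))‖ ≤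
      12 * (b i * b j * ρ ^ Nat.dist i j) := by
    intro i j hij S
    have hr : Q i ≤ ρ ^ (j - i) * Q j := by simpa [Nat.add_sub_cancel' hij] using hratio i (j - i)
    have hQj : 0 < Q j := by linarith [hQ j]
    have hQij : Q i ≤ Q j :=
      hr.trans (mul_le_of_le_one_left hQj.le (pow_le_one₀ hρ0.le hρ1.le))
    refine (sum_norm_inner_atom_atom_le hW (hb i) (hb j) (hQ i) hQij (hD i) (hg j)
      (hdisp i j) S).trans ?_
    rw [Nat.dist_eq_sub_of_le hij]
    have := hb i
    have := hb j
    gcongr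
    rwa [div_le_iff₀ hQj]
  have hall : ∀ i j, ∑ k ∈ S, ‖inner ℂ (W 0 (g i)) (W k (g j))‖ ≤
      12 * (b i * b j * ρ ^ Nat.dist i j) := by
    intro i j
    rcases le_total i j with hij | hij
    · exact hle i j hij S
    · have e : ∑ k ∈ S, ‖inner ℂ (W 0 (g i)) (W k (g j))‖ =
          ∑ k ∈ S.image Neg.neg, ‖inner ℂ (W 0 (g j)) (W k (g i))‖ := by
        rw [Finset.sum_image fun _ _ _ _ h => neg_injective h]
        refine Finset.sum_congr rfl fun k _ => ?_
        rw [norm_inner_symm, hW k 0, zero_sub]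
      rw [e, Nat.dist_comm, mul_comm (b i)]
      exact hle j i hij _
  calc _ ≤ ∑ k ∈ S, ∑ i ∈ Finset.range N, ∑ j ∈ Finset.range N,
          ‖inner ℂ (W 0 (g i)) (W k (g j))‖ := by
        refine Finset.sum_le_sum fun k _ => ?_
        rw [map_sum, map_sum, sum_inner]
        refine (norm_sum_le _ _).trans (Finset.sum_le_sum fun i _ => ?_)
        rw [inner_sum]
        exact norm_sum_le _ _
    _ = ∑ i ∈ Finset.range N, ∑ j ∈ Finset.range N, ∑ k ∈ S,
          ‖inner ℂ (W 0 (g i)) (W k (g j))‖ := by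
        rw [Finset.sum_comm]
        exact Finset.sum_congr rfl fun i _ => Finset.sum_comm
    _ ≤ ∑ i ∈ Finset.range N, ∑ j ∈ Finset.range N, 12 * (b i * b j * ρ ^ Nat.dist i j) :=
        Finset.sum_le_sum fun i _ => Finset.sum_le_sum fun j _ => hall i j
    _ = 12 * ∑ i ∈ Finset.range N, ∑ j ∈ Finset.range N, b i * b j * ρ ^ Nat.dist i j := by
        simp only [← Finset.mul_sum]
    _ ≤ 12 * (2 / (1 - ρ) * ∑ i ∈ Finset.range N, b i ^ 2) := by
        gcongr
        exact sum_sum_mul_pow_dist_le hρ0.le hρ1 b _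
    _ = _ := by ring

end Hilbert

section Levels

/-- Superadditivity of `x ↦ x ^ s` for `1 ≤ s`. -/
theorem sum_rpow_le_rpow_sum {ι : Type*} (S : Finset ι) {x : ι → ℝ} (hx : ∀ i, 0 ≤ x i) {s : ℝ}
    (hs : 1 ≤ s) : ∑ i ∈ S, x i ^ s ≤ (∑ i ∈ S, x i) ^ s := by
  have h0 : 0 ≤ ∑ i ∈ S, x i := Finset.sum_nonneg fun i _ => hx i
  have key : ∀ y : ℝ, 0 ≤ y → y ^ s = y * y ^ (s - 1) := fun y hy => by
    rw [← Real.rpow_one_add' hy (by linarith)]; congr 1; ring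
  rw [key _ h0, Finset.sum_mul]
  refine Finset.sum_le_sum fun i hi => ?_
  rw [key _ (hx i)]
  exact mul_le_mul_of_nonneg_left (Real.rpow_le_rpow (hx i)
    (Finset.single_le_sum (fun j _ => hx j) hi) (by linarith)) (hx i)

theorem two_rpow_neg_mem_Ioo {a : ℝ} (ha : 0 < a) : (2 : ℝ) ^ (-a) ∈ Set.Ioo (0 : ℝ) 1 :=
  ⟨by positivity, Real.rpow_lt_one_of_one_lt_of_neg (by norm_num) (by linarith)⟩

theorem div_two_pow_rpow {L : ℝ} (hL : 0 < L) (a : ℝ) (i : ℕ) :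
    (L / 2 ^ i) ^ a = L ^ a * ((2 : ℝ) ^ (-a)) ^ i := by
  rw [Real.div_rpow hL.le (by positivity), div_eq_mul_inv, ← Real.rpow_natCast,
    ← Real.rpow_mul (by norm_num), ← Real.rpow_neg (by norm_num), ← Real.rpow_natCast,
    ← Real.rpow_mul (by norm_num)]
  congr 2; ring

theorem sum_div_two_pow_rpow_le {L a : ℝ} (hL : 0 < L) (ha : 0 < a) (N : ℕ) :
    ∑ i ∈ Finset.range N, (L / 2 ^ i) ^ a ≤ (1 - 2 ^ (-a))⁻¹ * L ^ a := by
  obtain ⟨h0, h1⟩ := two_rpow_neg_mem_Ioo ha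
  simp only [div_two_pow_rpow hL]
  rw [← Finset.mul_sum, mul_comm]
  gcongr
  exact sum_le_hasSum _ (fun _ _ => by positivity) (hasSum_geometric_of_lt_one h0.le h1)

/-- The dyadic levels `L / 2 ^ i` below `y` have summable powers. -/
theorem sum_level_rpow_le {y a : ℝ} (hy : 0 ≤ y) (ha : 0 < a) (N : ℕ) {L : ℝ} (hL : 0 < L) :
    ∑ i ∈ Finset.range N, (if L / 2 ^ i ≤ y then (L / 2 ^ i) ^ a else 0) ≤
      (1 - 2 ^ (-a))⁻¹ * y ^ a := by
  have hc : 0 ≤ (1 - (2 : ℝ) ^ (-a))⁻¹ := inv_nonneg.2 (by linarith [(two_rpow_neg_mem_Ioo ha).2])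
  induction N generalizing L with
  | zero => simpa using mul_nonneg hc (Real.rpow_nonneg hy a)
  | succ N ih =>
    by_cases h : L ≤ y
    · calc _ ≤ ∑ i ∈ Finset.range (N + 1), (L / 2 ^ i) ^ a :=
            Finset.sum_le_sum fun i _ => by
              split_ifs
              · exact le_rfl
              · positivity
        _ ≤ (1 - 2 ^ (-a))⁻¹ * L ^ a := sum_div_two_pow_rpow_le hL ha _
        _ ≤ _ := by gcongr
    · rw [Finset.sum_range_succ']
      have e : ∀ i : ℕ, L / 2 ^ (i + 1) = L / 2 / 2 ^ i := fun i => by rw [pow_succ']; field_simp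
      simp only [e, pow_zero, div_one, if_neg h, add_zero]
      exact ih (half_pos hL)

theorem mul_rpow_div_rpow_eq {l J s : ℝ} (hl : 0 < l) (hJ : 0 ≤ J) (hs : 0 < s) :
    l ^ 2 * (J / l) ^ s = (l ^ (2 / s - 1) * J) ^ s := by
  rw [Real.mul_rpow (by positivity) hJ, ← Real.rpow_mul hl.le, Real.div_rpow hJ hl.le,
    sub_mul, div_mul_cancel₀ _ hs.ne', one_mul, Real.rpow_sub hl, Real.rpow_two]
  ring

/-- Summation of the atomic norms. -/
theorem sum_sq_mul_rpow_le {L s T : ℝ} {J : ℕ → ℝ} (hL : 0 < L) (hJ : ∀ i, 0 ≤ J i) (hs : 1 ≤ s)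
    (hs2 : s < 2) (N : ℕ)
    (hT : ∑ i ∈ Finset.range N, (L / 2 ^ i) ^ (2 / s - 1) * J i ≤ T) :
    ∑ i ∈ Finset.range N, (L / 2 ^ i) ^ 2 * (2 ^ i + J i / (L / 2 ^ i)) ^ s ≤
      2 ^ (s - 1) * ((1 - 2 ^ (-(2 - s)))⁻¹ * L ^ 2 + T ^ s) := by
  have hl : ∀ i : ℕ, 0 < L / 2 ^ i := fun i => by positivity
  have hx : ∀ i, 0 ≤ (L / 2 ^ i) ^ (2 / s - 1) * J i := fun i => mul_nonneg (by positivity) (hJ i)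
  have h1 : ∀ i : ℕ, (L / 2 ^ i) ^ 2 * (2 ^ i + J i / (L / 2 ^ i)) ^ s ≤
      2 ^ (s - 1) * (L ^ s * (L / 2 ^ i) ^ (2 - s) + ((L / 2 ^ i) ^ (2 / s - 1) * J i) ^ s) := by
    intro i
    have e1 : L ^ s * (L / 2 ^ i) ^ (2 - s) = (L / 2 ^ i) ^ 2 * (2 ^ i : ℝ) ^ s := by
      rw [Real.rpow_sub (hl i), Real.rpow_two, Real.div_rpow hL.le (by positivity)]
      field_simp
    rw [e1, ← mul_rpow_div_rpow_eq (hl i) (hJ i) (by linarith), ← mul_add, mul_left_comm]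
    gcongr
    exact_mod_cast NNReal.rpow_add_le_mul_rpow_add_rpow ⟨2 ^ i, by positivity⟩
      ⟨J i / (L / 2 ^ i), div_nonneg (hJ i) (hl i).le⟩ hs
  refine (Finset.sum_le_sum fun i _ => h1 i).trans ?_
  rw [← Finset.mul_sum, Finset.sum_add_distrib, ← Finset.mul_sum]
  refine mul_le_mul_of_nonneg_left (add_le_add ?_ ?_) (by positivity)
  · calc _ ≤ L ^ s * ((1 - 2 ^ (-(2 - s)))⁻¹ * L ^ (2 - s)) := by
          gcongr; exact sum_div_two_pow_rpow_le hL (by linarith) N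
      _ = _ := by
          rw [mul_left_comm, ← Real.rpow_add hL, add_sub_cancel, Real.rpow_two]
  · exact (sum_rpow_le_rpow_sum _ hx hs).trans
      (Real.rpow_le_rpow (Finset.sum_nonneg fun i _ => hx i) hT (by linarith))

/-- Beyond the critical time, the dispersive bound in dimension `n ≥ 3` is no worse than the one
with decay `t ^ (-3/2)`. -/
theorem dispersive_le_of_le {n A B l m t : ℝ} (hn : 3 ≤ n) (hA : 1 ≤ A) (hB : 1 ≤ B) (hl : 0 ≤ l)
    (hm : 0 ≤ m) (ht : (A ^ (1 / (4 * n))) ^ 4 * (B ^ (1 / (4 * n))) ^ 4 ≤ t) :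
    t ^ (-(n / 2)) * (l * A) * (m * B) ≤ t ^ (-(3 / 2) : ℝ) *
      ((A ^ (1 / (4 * n))) ^ 2 * (B ^ (1 / (4 * n))) ^ 2 *
        (√2 * (l * A ^ (1 / 2 + 1 / n)) * (√2 * (m * B ^ (1 / 2 + 1 / n))))) := by
  have hA0 : 0 < A := by linarith
  have hB0 : 0 < B := by linarith
  have hn0 : 0 < n := by linarith
  have hP : 0 < A * B := by positivity
  have e4 : (A ^ (1 / (4 * n))) ^ 4 * (B ^ (1 / (4 * n))) ^ 4 = (A * B) ^ (1 / n) := by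
    rw [← mul_pow, ← Real.mul_rpow hA0.le hB0.le, ← Real.rpow_mul_natCast hP.le]
    congr 1; push_cast; field_simp
  have e2 : (A ^ (1 / (4 * n))) ^ 2 * (B ^ (1 / (4 * n))) ^ 2 = (A * B) ^ (1 / (2 * n)) := by
    rw [← mul_pow, ← Real.mul_rpow hA0.le hB0.le, ← Real.rpow_mul_natCast hP.le]
    congr 1; push_cast; field_simp; norm_num
  rw [e4] at ht
  have hX : 0 < (A * B) ^ (1 / n) := by positivity
  have ht0 : 0 < t := hX.trans_le ht
  have key : t ^ (-((n - 3) / 2)) ≤ (A * B) ^ (1 / n * -((n - 3) / 2)) := by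
    rw [Real.rpow_mul hP.le]
    exact Real.rpow_le_rpow_of_nonpos hX ht (by linarith)
  have s2 : √2 * √2 = (2 : ℝ) := Real.mul_self_sqrt (by norm_num)
  calc t ^ (-(n / 2)) * (l * A) * (m * B)
      = t ^ (-(3 / 2) : ℝ) * (l * m) * (t ^ (-((n - 3) / 2)) * (A * B)) := by
        have : t ^ (-(n / 2)) = t ^ (-(3 / 2) : ℝ) * t ^ (-((n - 3) / 2)) := by
          rw [← Real.rpow_add ht0]; congr 1; ring
        rw [this]; ring
    _ ≤ t ^ (-(3 / 2) : ℝ) * (l * m) * ((A * B) ^ (1 / n * -((n - 3) / 2)) * (A * B)) := by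
        gcongr
    _ = t ^ (-(3 / 2) : ℝ) * (l * m) * ((A * B) ^ (1 / (2 * n)) * (A * B) ^ (1 / 2 + 1 / n)) := by
        congr 1
        rw [← Real.rpow_add hP, ← Real.rpow_add_one hP.ne']
        congr 1; field_simp; ring
    _ ≤ 2 * (t ^ (-(3 / 2) : ℝ) * (l * m) *
          ((A * B) ^ (1 / (2 * n)) * (A * B) ^ (1 / 2 + 1 / n))) := by
        have : 0 ≤ t ^ (-(3 / 2) : ℝ) * (l * m) *
          ((A * B) ^ (1 / (2 * n)) * (A * B) ^ (1 / 2 + 1 / n)) := by positivity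
        linarith
    _ = _ := by
        rw [e2, Real.mul_rpow hA0.le hB0.le (z := 1 / 2 + 1 / n)]
        linear_combination (-(t ^ (-(3 / 2) : ℝ) * (l * m) *
          ((A * B) ^ (1 / (2 * n)) * (A ^ (1 / 2 + 1 / n) * B ^ (1 / 2 + 1 / n))))) * s2

end Levels

section Atoms

variable {X : Type*}

/-- The part of `ψ` living on the `i`-th dyadic level set below the height `L`; the atom with
index `0` collects everything above `L`. -/
def levelAtom (ψ : X → ℂ) (L : ℝ) (i : ℕ) : X → ℂ :=
  {x | L / 2 ^ i ≤ ‖ψ x‖ ∧ (i = 0 ∨ ‖ψ x‖ < 2 * (L / 2 ^ i))}.indicator ψ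

theorem sum_levelAtom (ψ : X → ℂ) {L : ℝ} (hL : 0 < L) (N : ℕ) :
    ∑ i ∈ Finset.range (N + 1), levelAtom ψ L i = {x | L / 2 ^ N ≤ ‖ψ x‖}.indicator ψ := by
  induction N with
  | zero => simp [levelAtom]
  | succ N ih =>
    rw [Finset.sum_range_succ, ih]
    have e : 2 * (L / 2 ^ (N + 1)) = L / 2 ^ N := by rw [pow_succ]; field_simp
    have h0 : 0 < L / 2 ^ (N + 1) := by positivity
    have h : L / 2 ^ (N + 1) ≤ L / 2 ^ N := by linarith
    ext x
    simp only [levelAtom, Pi.add_apply, Set.indicator_apply, Set.mem_ofPred_eq, e,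
      Nat.add_one_ne_zero, false_or]
    by_cases h1 : L / 2 ^ N ≤ ‖ψ x‖
    · simp [h1, h.trans h1, not_lt.2 h1]
    · simp [h1, not_le.1 h1]

theorem norm_levelAtom_le (ψ : X → ℂ) (L : ℝ) (i : ℕ) (x : X) :
    ‖levelAtom ψ L i x‖ ≤ {x | L / 2 ^ i ≤ ‖ψ x‖}.indicator (fun x => ‖ψ x‖) x := by
  rw [levelAtom, norm_indicator_eq_indicator_norm]
  exact Set.indicator_le_indicator_of_subset (fun x hx => hx.1) (fun _ => norm_nonneg _) x

theorem norm_levelAtom_succ_le (ψ : X → ℂ) {L : ℝ} (hL : 0 < L) (i : ℕ) (x : X) :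
    ‖levelAtom ψ L (i + 1) x‖ ≤ 2 * (L / 2 ^ (i + 1)) := by
  simp only [levelAtom, Set.indicator_apply, Set.mem_ofPred_eq, Nat.add_one_ne_zero, false_or]
  split_ifs with hx
  · exact hx.2.le
  · rw [norm_zero]; positivity

variable [MeasurableSpace X] {μ : Measure X} {ψ : X → ℂ}

theorem measurableSet_le_norm (hψ : StronglyMeasurable ψ) (c : ℝ) :
    MeasurableSet {x | c ≤ ‖ψ x‖} :=
  measurableSet_le measurable_const hψ.norm.measurable

theorem measurableSet_levelAtom (hψ : StronglyMeasurable ψ) (L : ℝ) (i : ℕ) :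
    MeasurableSet {x | L / 2 ^ i ≤ ‖ψ x‖ ∧ (i = 0 ∨ ‖ψ x‖ < 2 * (L / 2 ^ i))} :=
  (measurableSet_le_norm hψ _).inter
    ((MeasurableSet.const _).union (measurableSet_lt hψ.norm.measurable measurable_const))

theorem memLp_levelAtom (hψ : StronglyMeasurable ψ) {p : ℝ≥0∞} (h : MemLp ψ p μ) (L : ℝ) (i : ℕ) :
    MemLp (levelAtom ψ L i) p μ :=
  h.indicator (measurableSet_levelAtom hψ L i)

theorem integrable_levelAtom (hψ : StronglyMeasurable ψ) (h : Integrable ψ μ) (L : ℝ) (i : ℕ) :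
    Integrable (levelAtom ψ L i) μ :=
  h.indicator (measurableSet_levelAtom hψ L i)

/-- The mass of `ψ` above the `i`-th dyadic level. -/
def levelMass (μ : Measure X) (ψ : X → ℂ) (L : ℝ) (i : ℕ) : ℝ :=
  ∫ x, {x | L / 2 ^ i ≤ ‖ψ x‖}.indicator (fun x => ‖ψ x‖) x ∂μ

theorem levelMass_nonneg (ψ : X → ℂ) (L : ℝ) (i : ℕ) : 0 ≤ levelMass μ ψ L i :=
  integral_nonneg fun _ => Set.indicator_nonneg (fun _ _ => norm_nonneg _) _

theorem levelMass_le_succ (hψ : StronglyMeasurable ψ) (h : Integrable ψ μ) {L : ℝ} (hL : 0 < L)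
    (i : ℕ) : levelMass μ ψ L i ≤ levelMass μ ψ L (i + 1) := by
  refine integral_mono (h.norm.indicator (measurableSet_le_norm hψ _))
    (h.norm.indicator (measurableSet_le_norm hψ _)) 
    (Set.indicator_le_indicator_of_subset (fun x hx => ?_) fun _ => norm_nonneg _)
  rw [Set.mem_ofPred_eq] at hx ⊢
  refine le_trans ?_ hx
  gcongr
  · norm_num
  · omega

theorem integral_norm_levelAtom_le (hψ : StronglyMeasurable ψ) (h : Integrable ψ μ) (L : ℝ)
    (i : ℕ) : ∫ x, ‖levelAtom ψ L i x‖ ∂μ ≤ levelMass μ ψ L i :=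
  integral_mono (integrable_levelAtom hψ h L i).norm
    (h.norm.indicator (measurableSet_le_norm hψ _)) (norm_levelAtom_le ψ L i)

theorem sum_rpow_mul_levelMass_le (hψ : StronglyMeasurable ψ) (h : Integrable ψ μ) {L a : ℝ}
    (hL : 0 < L) (ha : 0 < a) (hp : Integrable (fun x => ‖ψ x‖ ^ (a + 1)) μ) (N : ℕ) :
    ∑ i ∈ Finset.range N, (L / 2 ^ i) ^ a * levelMass μ ψ L i ≤
      (1 - 2 ^ (-a))⁻¹ * ∫ x, ‖ψ x‖ ^ (a + 1) ∂μ := by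
  have hi : ∀ i ∈ Finset.range N, Integrable (fun x => (L / 2 ^ i) ^ a *
      {x | L / 2 ^ i ≤ ‖ψ x‖}.indicator (fun x => ‖ψ x‖) x) μ := fun i _ =>
    (h.norm.indicator (measurableSet_le_norm hψ _)).const_mul _
  simp only [levelMass, ← integral_const_mul]
  rw [← integral_finsetSum _ hi]
  refine integral_mono (integrable_finsetSum _ hi) (hp.const_mul _) fun x => ?_
  have := mul_le_mul_of_nonneg_right (sum_level_rpow_le (norm_nonneg (ψ x)) ha N hL)
    (norm_nonneg (ψ x))
  rw [Finset.sum_mul, mul_assoc, ← Real.rpow_add_one' (norm_nonneg _) (by linarith)] at this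
  refine le_trans (le_of_eq (Finset.sum_congr rfl fun i _ => ?_)) this
  by_cases h1 : L / 2 ^ i ≤ ‖ψ x‖ <;> simp [h1]

theorem norm_toLp_two_sq {g : X → ℂ} (hg : MemLp g 2 μ) :
    ‖hg.toLp g‖ ^ 2 = ∫ x, ‖g x‖ ^ 2 ∂μ := by
  rw [Lp.norm_toLp, hg.eLpNorm_eq_integral_rpow_norm (by norm_num) (by norm_num)]
  have h0 : 0 ≤ ∫ x, ‖g x‖ ^ 2 ∂μ := integral_nonneg fun _ => by positivity
  simp only [ENNReal.toReal_ofNat, Real.rpow_two]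
  rw [ENNReal.toReal_ofReal (by positivity), ← Real.rpow_two, ← Real.rpow_mul h0]
  norm_num

theorem sq_norm_toLp_levelAtom_le (hψ : StronglyMeasurable ψ) (h1 : Integrable ψ μ)
    (h2 : MemLp ψ 2 μ) {L : ℝ} (hL : 0 < L) (hLe : ‖h2.toLp ψ‖ = L) (i : ℕ) :
    ‖(memLp_levelAtom hψ h2 L i).toLp (levelAtom ψ L i)‖ ^ 2 ≤
      2 * (L / 2 ^ i) ^ 2 * (2 ^ i + levelMass μ ψ L i / (L / 2 ^ i)) := by
  have hl : 0 < L / 2 ^ i := by positivity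
  have e : 2 * (L / 2 ^ i) ^ 2 * (2 ^ i + levelMass μ ψ L i / (L / 2 ^ i)) =
      2 * (L / 2 ^ i) ^ 2 * 2 ^ i + 2 * (L / 2 ^ i) * levelMass μ ψ L i := by
    field_simp
  have hJ := levelMass_nonneg (μ := μ) ψ L i
  have hJ' : 0 ≤ 2 * (L / 2 ^ i) * levelMass μ ψ L i := by positivity
  rw [norm_toLp_two_sq, e]
  cases i with
  | zero =>
    calc _ ≤ ∫ x, ‖ψ x‖ ^ 2 ∂μ := by
          refine integral_mono ((memLp_levelAtom hψ h2 L 0).integrable_norm_pow (by norm_num))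
            (h2.integrable_norm_pow (by norm_num)) fun x => ?_
          exact pow_le_pow_left₀ (norm_nonneg _) (norm_indicator_le_norm_self _ _) 2
      _ = L ^ 2 := by rw [← norm_toLp_two_sq h2, hLe]
      _ ≤ _ := by simp only [pow_zero, div_one] at hJ' ⊢; nlinarith [sq_nonneg L]
  | succ i =>
    have h3 : ∫ x, ‖levelAtom ψ L (i + 1) x‖ ^ 2 ∂μ ≤
        2 * (L / 2 ^ (i + 1)) * levelMass μ ψ L (i + 1) := by
      refine le_trans ?_ (mul_le_mul_of_nonneg_left (integral_norm_levelAtom_le hψ h1 L (i + 1))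
        (by positivity))
      rw [← integral_const_mul]
      refine integral_mono ((memLp_levelAtom hψ h2 L _).integrable_norm_pow (by norm_num))
        ((integrable_levelAtom hψ h1 L _).norm.const_mul _) fun x => ?_
      simp only [sq]
      exact mul_le_mul_of_nonneg_right (norm_levelAtom_succ_le ψ hL i x) (norm_nonneg _)
    have : 0 ≤ 2 * (L / 2 ^ (i + 1)) ^ 2 * 2 ^ (i + 1) := by positivity
    linarith

/-- The atomic decomposition converges in `L²`. -/
theorem tendsto_sum_toLp_levelAtom (hψ : StronglyMeasurable ψ) (h2 : MemLp ψ 2 μ) {L : ℝ}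
    (hL : 0 < L) :
    Filter.Tendsto (fun N => ∑ i ∈ Finset.range (N + 1),
      (memLp_levelAtom hψ h2 L i).toLp (levelAtom ψ L i)) Filter.atTop (nhds (h2.toLp ψ)) := by
  have hu : ∀ N, MemLp ({x | L / 2 ^ N ≤ ‖ψ x‖}.indicator ψ) 2 μ := fun N =>
    h2.indicator (measurableSet_le_norm hψ _)
  have e : ∀ N, ∑ i ∈ Finset.range (N + 1),
      (memLp_levelAtom hψ h2 L i).toLp (levelAtom ψ L i) = (hu N).toLp _ := by
    intro N
    have hs : ∀ M, ∃ h : MemLp (∑ i ∈ Finset.range M, levelAtom ψ L i) 2 μ,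
        ∑ i ∈ Finset.range M, (memLp_levelAtom hψ h2 L i).toLp (levelAtom ψ L i) = h.toLp _ := by
      intro M
      induction M with
      | zero => exact ⟨by simp, by simp⟩
      | succ M ih =>
        obtain ⟨h, he⟩ := ih
        have hM := memLp_levelAtom hψ h2 L M
        refine ⟨by rw [Finset.sum_range_succ]; exact h.add hM, ?_⟩
        rw [Finset.sum_range_succ, he, ← MemLp.toLp_add]
        simp only [Finset.sum_range_succ]
    obtain ⟨h, he⟩ := hs (N + 1)
    rw [he]
    simp only [sum_levelAtom ψ hL]
  simp only [e]
  rw [tendsto_iff_norm_sub_tendsto_zero]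
  have h3 : ∀ N, ‖(hu N).toLp _ - h2.toLp ψ‖ ^ 2 =
      ∫ x, ‖({x | L / 2 ^ N ≤ ‖ψ x‖}.indicator ψ - ψ) x‖ ^ 2 ∂μ := fun N => by
    rw [← MemLp.toLp_sub, norm_toLp_two_sq]
  have h4 : Filter.Tendsto (fun N : ℕ => L / 2 ^ N) Filter.atTop (nhds 0) :=
    tendsto_const_nhds.div_atTop (tendsto_pow_atTop_atTop_of_one_lt (by norm_num))
  have h5 : Filter.Tendsto (fun N => ‖(hu N).toLp _ - h2.toLp ψ‖ ^ 2) Filter.atTop (nhds 0) := by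
    simp only [h3]
    rw [← integral_zero X ℝ]
    refine tendsto_integral_of_dominated_convergence (fun x => ‖ψ x‖ ^ 2)
      (fun N => (((hu N).sub h2).integrable_norm_pow (by norm_num)).aestronglyMeasurable)
      (h2.integrable_norm_pow (by norm_num)) (fun N => .of_forall fun x => ?_)
      (.of_forall fun x => ?_)
    · by_cases h : L / 2 ^ N ≤ ‖ψ x‖ <;> simp [h]
    · refine tendsto_const_nhds.congr' ?_
      by_cases h0 : ψ x = 0
      · exact .of_forall fun N => by simp [Set.indicator_apply, h0]
      · filter_upwards [h4.eventually_le_const (norm_pos_iff.2 h0)] with N hN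
        simp [hN]
  simpa using h5.sqrt

end Atoms

section Main

variable {V : Type*} [NormedAddCommGroup V] [InnerProductSpace ℝ V] [FiniteDimensional ℝ V]
  [MeasurableSpace V] [BorelSpace V]

/-- Endpoint estimate for the atomic decomposition: the correlations of the partial sums with
their integer-time Schrödinger orbit are summable. -/
theorem sum_norm_inner_sum_levelAtom_le (hn : 3 ≤ Module.finrank ℝ V) {ψ : V → ℂ}
    (hψ : StronglyMeasurable ψ) (h1 : Integrable ψ) (h2 : MemLp ψ 2) {L n : ℝ}
    (hn' : n = Module.finrank ℝ V) (hL : 0 < L) (hLe : ‖h2.toLp ψ‖ = L) (N : ℕ) (S : Finset ℤ) :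
    ∑ k ∈ S, ‖inner ℂ
        (schrodingerFlow 0 (∑ i ∈ Finset.range N,
          (memLp_levelAtom hψ h2 L i).toLp (levelAtom ψ L i)))
        (schrodingerFlow k (∑ i ∈ Finset.range N,
          (memLp_levelAtom hψ h2 L i).toLp (levelAtom ψ L i)))‖ ≤
      24 / (1 - 2 ^ (-(1 / (4 * n)))) * ∑ i ∈ Finset.range N, 2 * ((L / 2 ^ i) ^ 2 *
        (2 ^ i + levelMass volume ψ L i / (L / 2 ^ i)) ^ (1 + 2 / n)) := by
  have hn3 : 3 ≤ n := by rw [hn']; exact_mod_cast hn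
  have hn0 : 0 < n := by linarith
  have hl : ∀ i : ℕ, 0 < L / 2 ^ i := fun i => by positivity
  have hJ := levelMass_nonneg (μ := (volume : Measure V)) ψ L
  set A : ℕ → ℝ := fun i => 2 ^ i + levelMass volume ψ L i / (L / 2 ^ i) with hA
  have hJl : ∀ i, 0 ≤ levelMass volume ψ L i / (L / 2 ^ i) := fun i => div_nonneg (hJ i) (hl i).le
  have hA1 : ∀ i, 1 ≤ A i := fun i => by
    have : (1 : ℝ) ≤ 2 ^ i := one_le_pow₀ (by norm_num)
    exact le_add_of_le_of_nonneg this (hJl i)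
  have hA0 : ∀ i, 0 < A i := fun i => by linarith [hA1 i]
  have hAgrow : ∀ i, A i ≤ 2⁻¹ * A (i + 1) := fun i => by
    have h := levelMass_le_succ hψ h1 hL i
    have e : 2⁻¹ * A (i + 1) = 2 ^ i + levelMass volume ψ L (i + 1) / (L / 2 ^ i) := by
      simp only [hA, pow_succ]; field_simp
    rw [e]
    simp only [hA]
    gcongr
  have hmass : ∀ i, ∫ x, ‖levelAtom ψ L i x‖ ≤ L / 2 ^ i * A i := fun i => by
    refine (integral_norm_levelAtom_le hψ h1 L i).trans ?_
    have e : L / 2 ^ i * A i = L / 2 ^ i * 2 ^ i + levelMass volume ψ L i := by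
      simp only [hA]; field_simp
    have : 0 ≤ L / 2 ^ i * 2 ^ i := by positivity
    linarith
  set b : ℕ → ℝ := fun i => √2 * (L / 2 ^ i * A i ^ (1 / 2 + 1 / n)) with hb
  have hb2 : ∀ i, b i ^ 2 = 2 * ((L / 2 ^ i) ^ 2 * A i ^ (1 + 2 / n)) := fun i => by
    have e : (A i ^ (1 / 2 + 1 / n)) ^ 2 = A i ^ (1 + 2 / n) := by
      rw [← Real.rpow_mul_natCast (hA0 i).le]; congr 1; push_cast; ring
    simp only [hb]
    rw [mul_pow, mul_pow, e, Real.sq_sqrt (by norm_num)]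
  have hb0 : ∀ i, 0 ≤ b i := fun i => by have := hl i; have := hA0 i; positivity
  have key := sum_norm_inner_sum_atoms_le (W := schrodingerFlow (V := V))
    inner_schrodingerFlow_eq_sub
    (g := fun i => (memLp_levelAtom hψ h2 L i).toLp (levelAtom ψ L i)) (b := b)
    (Q := fun i => A i ^ (1 / (4 * n))) (ρ := 2 ^ (-(1 / (4 * n))))
    (two_rpow_neg_mem_Ioo (by positivity)).1 (two_rpow_neg_mem_Ioo (by positivity)).2 hb0
    (fun i => Real.one_le_rpow (hA1 i) (by positivity)) (fun i => ?_) (fun i => ?_)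
    (fun i j k hk => ?_) N S
  · simpa only [hb2] using key
  · rw [Real.rpow_neg (by norm_num), ← Real.inv_rpow (by norm_num),
      ← Real.mul_rpow (by norm_num) (hA0 _).le]
    exact Real.rpow_le_rpow (hA0 i).le (hAgrow i) (by positivity)
  · refine abs_le_of_sq_le_sq' ?_ (div_nonneg (hb0 i) (by have := hA0 i; positivity)) |>.2
    refine (sq_norm_toLp_levelAtom_le hψ h1 h2 hL hLe i).trans (le_of_eq ?_)
    change 2 * (L / 2 ^ i) ^ 2 * A i = _
    have e : ((A i ^ (1 / (4 * n))) ^ 4) ^ 2 = A i ^ (2 / n) := by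
      rw [← pow_mul, ← Real.rpow_mul_natCast (hA0 i).le]
      congr 1; push_cast; field_simp; norm_num
    rw [div_pow (b i), hb2, e, Real.rpow_add (hA0 i), Real.rpow_one]
    have := Real.rpow_pos_of_pos (hA0 i) (2 / n)
    field_simp
  · have hk0 : k ≠ 0 := by
      rintro rfl
      have h3 : 0 < (A i ^ (1 / (4 * n))) ^ 4 * (A j ^ (1 / (4 * n))) ^ 4 := by
        have := hA0 i; have := hA0 j; positivity
      simp only [abs_zero, Int.cast_zero] at hk
      linarith
    refine (norm_inner_schrodingerFlow_le (integrable_levelAtom hψ h1 L i)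
      (memLp_levelAtom hψ h2 L i) (integrable_levelAtom hψ h1 L j)
      (memLp_levelAtom hψ h2 L j) hk0).trans ?_
    refine le_trans ?_ (dispersive_le_of_le hn3 (hA1 i) (hA1 j) (hl i).le (hl j).le hk)
    rw [← hn']
    have h0 : 0 ≤ ∫ x, ‖levelAtom ψ L j x‖ := integral_nonneg fun _ => norm_nonneg _
    have h3 := mul_nonneg (hl i).le (hA0 i).le
    gcongr
    · exact hmass i
    · exact hmass j

/-- The `ℓ¹` summability of the correlations of `ψ` with its integer-time Schrödinger orbit. -/
theorem exists_sum_norm_inner_schrodingerFlow_le (hn : 3 ≤ Module.finrank ℝ V) {n : ℝ}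
    (hn' : n = Module.finrank ℝ V) :
    ∃ C : ℝ, 0 < C ∧ ∀ (ψ : V → ℂ) (_ : StronglyMeasurable ψ) (_ : Integrable ψ)
      (h2 : MemLp ψ 2) (_ : Integrable fun x => ‖ψ x‖ ^ (2 * n / (n + 2))) (S : Finset ℤ),
      ∑ k ∈ S, ‖inner ℂ (schrodingerFlow 0 (h2.toLp ψ)) (schrodingerFlow k (h2.toLp ψ))‖ ≤
        C * (‖h2.toLp ψ‖ ^ 2 + (∫ x, ‖ψ x‖ ^ (2 * n / (n + 2))) ^ (1 + 2 / n)) := by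
  have hn3 : 3 ≤ n := by rw [hn']; exact_mod_cast hn
  have hn0 : 0 < n := by linarith
  set s : ℝ := 1 + 2 / n with hs
  have hs1 : 1 < s := by
    have : 0 < 2 / n := by positivity
    linarith
  have hs2 : s < 2 := by
    have : 2 / n < 1 := (div_lt_one hn0).2 (by linarith)
    linarith
  set a : ℝ := 2 / s - 1 with ha
  have ha0 : 0 < a := by
    have : 1 < 2 / s := (one_lt_div (by linarith)).2 hs2
    linarith
  have hp : 2 * n / (n + 2) = a + 1 := by rw [ha, hs]; field_simp; ring
  have hinv : ∀ c : ℝ, 0 < c → 0 < (1 - (2 : ℝ) ^ (-c))⁻¹ := fun c hc =>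
    inv_pos.2 (by linarith [(two_rpow_neg_mem_Ioo hc).2])
  set c₁ : ℝ := 24 / (1 - 2 ^ (-(1 / (4 * n)))) with hc₁
  have hc₁0 : 0 < c₁ := mul_pos (by norm_num) (hinv _ (by positivity))
  set c₂ : ℝ := (1 - 2 ^ (-(2 - s)))⁻¹
  have hc₂0 : 0 < c₂ := hinv _ (by linarith)
  set c₃ : ℝ := (1 - 2 ^ (-a))⁻¹
  have hc₃0 : 0 < c₃ := hinv _ ha0
  refine ⟨c₁ * (2 * (2 ^ (s - 1) * (c₂ + c₃ ^ s))), by positivity, fun ψ hψ h1 h2 hI S => ?_⟩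
  rw [hp] at hI ⊢
  set P : ℝ := ∫ x, ‖ψ x‖ ^ (a + 1) with hP
  have hP0 : 0 ≤ P := integral_nonneg fun _ => by positivity
  rcases (norm_nonneg (h2.toLp ψ)).eq_or_lt with hL | hL
  · have h0 : h2.toLp ψ = 0 := norm_eq_zero.1 hL.symm
    simp only [h0, map_zero, inner_zero_left, norm_zero, Finset.sum_const_zero]
    positivity
  set L : ℝ := ‖h2.toLp ψ‖ with hLdef
  have hlim := tendsto_sum_toLp_levelAtom hψ h2 hL
  have hcont : Continuous fun x : Lp ℂ 2 (volume : Measure V) =>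
      ∑ k ∈ S, ‖inner ℂ (schrodingerFlow 0 x) (schrodingerFlow k x)‖ :=
    continuous_finsetSum _ fun k _ => ((schrodingerFlow 0).continuous.inner
      (schrodingerFlow k).continuous).norm
  refine le_of_tendsto ((hcont.tendsto _).comp hlim) (.of_forall fun N => ?_)
  refine (sum_norm_inner_sum_levelAtom_le hn hψ h1 h2 hn' hL hLdef.symm (N + 1) S).trans ?_
  rw [← Finset.mul_sum, ← hs, ← hc₁, mul_assoc, mul_assoc]
  gcongr
  refine (sum_sq_mul_rpow_le hL (levelMass_nonneg ψ L) hs1.le hs2 (N + 1)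
    (sum_rpow_mul_levelMass_le hψ h1 hL ha0 hI (N + 1))).trans ?_
  rw [mul_assoc]
  gcongr
  rw [Real.mul_rpow hc₃0.le hP0]
  have : 0 ≤ c₂ * P ^ s := by positivity
  have : 0 ≤ c₃ ^ s * L ^ 2 := by positivity
  linarith

end Main

/-- Discrete-time Kato smoothing bound with an unweighted right-hand
side built from `L²`, `L^{2n/(n+2)}` and the homogeneous Sobolev norm
`‖ψ‖_{Ẇ^{α, 2γ/(γ+2)}} = ‖F⁻¹(|ξ|^α ψ̂)‖_{L^{2γ/(γ+2)}}`. -/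
theorem discrete_kato_smoothing_sobolev (n : ℕ) (hn : 3 ≤ n) (γ α : ℝ)
    (hγ₁ : ((n : ℝ) + 1) / 2 ≤ γ) (hγ₂ : γ ≤ (n : ℝ) + 1)
    (hα : 0 ≤ α) (hαγ : 1 < α + 1 / γ) :
    ∃ C : ℝ≥0, 0 < C ∧ ∀ f ψ : SchwartzMap (EuclideanSpace ℝ (Fin n)) ℂ,
      (∑' k : ℤ, (‖∫ ξ : EuclideanSpace ℝ (Fin n),
          Complex.exp (2 * (π : ℂ) * I * (k : ℂ) * ((‖ξ‖ ^ 2 : ℝ) : ℂ)) *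
            𝓕 (⇑f) ξ * (starRingEnd ℂ) (𝓕 (⇑ψ) ξ)‖₊ : ℝ≥0∞) ^ 2)
        ≤ (C : ℝ≥0∞) * eLpNorm (⇑f) 2 volume ^ 2 *
            (eLpNorm (⇑ψ) 2 volume
              + eLpNorm (⇑ψ) (ENNReal.ofReal (2 * (n : ℝ) / ((n : ℝ) + 2))) volume
              + eLpNorm (𝓕⁻ (fun ξ : EuclideanSpace ℝ (Fin n) =>
                  ((‖ξ‖ ^ α : ℝ) : ℂ) * 𝓕 (⇑ψ) ξ))
                  (ENNReal.ofReal (2 * γ / (γ + 2))) volume) ^ 2 := by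
  have hfin : Module.finrank ℝ (EuclideanSpace ℝ (Fin n)) = n := by simp
  have hn0 : (0 : ℝ) < n := by exact_mod_cast (by omega : 0 < n)
  obtain ⟨C, hC0, hC⟩ := exists_sum_norm_inner_schrodingerFlow_le
    (V := EuclideanSpace ℝ (Fin n)) (by rwa [hfin]) (n := n) (by rw [hfin])
  refine ⟨C.toNNReal, Real.toNNReal_pos.2 hC0, fun f ψ => ?_⟩
  have hp0 : 0 < 2 * (n : ℝ) / ((n : ℝ) + 2) := by positivity
  set p : ℝ := 2 * (n : ℝ) / ((n : ℝ) + 2) with hp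
  have hf2 : MemLp f 2 := f.memLp 2
  have hψ2 : MemLp ψ 2 := ψ.memLp 2
  have hψp : MemLp ψ (ENNReal.ofReal p) := ψ.memLp _
  have hpne : ENNReal.ofReal p ≠ 0 := (ENNReal.ofReal_pos.2 hp0).ne'
  have hI : Integrable fun x => ‖ψ x‖ ^ p := by
    simpa [ENNReal.toReal_ofReal hp0.le] using
      hψp.integrable_norm_rpow hpne ENNReal.ofReal_ne_top
  have hP0 : 0 ≤ ∫ x, ‖ψ x‖ ^ p := integral_nonneg fun _ => by positivity
  set b : ℝ := (eLpNorm ψ (ENNReal.ofReal p) volume).toReal with hb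
  have hPb : (∫ x, ‖ψ x‖ ^ p) ^ (1 + 2 / (n : ℝ)) = b ^ 2 := by
    rw [hb, hψp.eLpNorm_eq_integral_rpow_norm hpne ENNReal.ofReal_ne_top,
      ENNReal.toReal_ofReal hp0.le, ENNReal.toReal_ofReal (by positivity),
      ← Real.rpow_mul_natCast hP0]
    congr 1
    rw [hp]; push_cast; field_simp
  have hD := hC ψ ψ.continuous.stronglyMeasurable ψ.integrable hψ2 hI
  rw [hPb] at hD
  have hsum := sum_sq_norm_inner_orbit_le inner_schrodingerFlow_eq_sub hD (hf2.toLp f)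
  have hterm : ∀ k : ℤ, ∫ ξ : EuclideanSpace ℝ (Fin n),
      Complex.exp (2 * (π : ℂ) * I * (k : ℂ) * ((‖ξ‖ ^ 2 : ℝ) : ℂ)) *
        𝓕 (⇑f) ξ * (starRingEnd ℂ) (𝓕 (⇑ψ) ξ) =
      inner ℂ (schrodingerFlow 0 (hψ2.toLp ψ)) (schrodingerFlow k (hf2.toLp f)) := fun k => by
    rw [inner_schrodingerFlow_toLp ψ.integrable hψ2 f.integrable hf2, sub_zero]
    rfl
  simp only [hterm]
  have hbound : ∀ S : Finset ℤ, ∑ k ∈ S,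
      (‖inner ℂ (schrodingerFlow 0 (hψ2.toLp ψ)) (schrodingerFlow k (hf2.toLp f))‖₊ : ℝ≥0∞) ^ 2 ≤
      (C.toNNReal : ℝ≥0∞) * eLpNorm f 2 volume ^ 2 *
        (eLpNorm ψ 2 volume + eLpNorm ψ (ENNReal.ofReal p) volume) ^ 2 := by
    intro S
    have h3 := ENNReal.ofReal_le_ofReal (hsum S)
    rw [ENNReal.ofReal_sum_of_nonneg fun _ _ => by positivity] at h3
    simp only [ENNReal.ofReal_pow (norm_nonneg _), ofReal_norm] at h3
    refine h3.trans ?_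
    rw [Lp.norm_toLp, Lp.norm_toLp, hb, ENNReal.ofReal_mul (by positivity),
      ENNReal.ofReal_mul hC0.le, ENNReal.ofReal_add (by positivity) (by positivity),
      ENNReal.ofReal_pow ENNReal.toReal_nonneg, ENNReal.ofReal_pow ENNReal.toReal_nonneg,
      ENNReal.ofReal_pow ENNReal.toReal_nonneg, ENNReal.ofReal_toReal hψ2.2.ne,
      ENNReal.ofReal_toReal hf2.2.ne, ENNReal.ofReal_toReal hψp.2.ne, mul_right_comm]
    refine mul_le_mul_right ?_ _
    rw [add_sq]
    exact add_le_add_left le_self_add _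
  rw [ENNReal.tsum_eq_iSup_sum]
  refine iSup_le fun S => (hbound S).trans ?_
  exact mul_le_mul_right (pow_le_pow_left₀ zero_le le_self_add 2) _
end
end
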